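/- Let Ω ⊂ ℂⁿ, n ≥ 2, be a bounded pseudoconvex domain with C^∞ boundary, and let p ∈ ∂Ω be a strongly pseudoconvex boundary point. Let F : Ω → Ω be a holomorphic map with F(z) = z + o(‖z−p‖²) as z → p within Ω, and suppose F is not the identity map. Then the iterates F^m converge normally to p (i.e., F^m converges to the constant map p uniformly on compact subsets of Ω), and F is not an automorphism of Ω. -/

import Mathlib

open Complex Topology Filter Metric Set Function

noncomputable section

/-- `ℂⁿ` as a normed space. -/
abbrev En (n : ℕ) : Type := EuclideanSpace ℂ (Fin n)

/-- A domain: a nonempty open connected set. -/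
def IsDomain' {n : ℕ} (Ω : Set (En n)) : Prop :=
  IsOpen Ω ∧ IsConnected Ω

/-- The Levi form of `ρ` at `q` in direction `ξ`:
`(1/4)(H_q(ξ,ξ) + H_q(iξ,iξ))` with `H_q` the second real Fréchet derivative. -/
def LeviForm {n : ℕ} (ρ : En n → ℝ) (q ξ : En n) : ℝ :=
  (1 / 4) * (iteratedFDeriv ℝ 2 ρ q ![ξ, ξ] + iteratedFDeriv ℝ 2 ρ q ![I • ξ, I • ξ])

/-- `ξ` lies in the complex tangent space of `{ρ = 0}` at `q`. -/
def InCplxTangent {n : ℕ} (ρ : En n → ℝ) (q ξ : En n) : Prop :=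
  fderiv ℝ ρ q ξ = 0 ∧ fderiv ℝ ρ q (I • ξ) = 0

/-- `ρ` is a `C^m` defining function for `Ω`. -/
def IsDefiningFunction {n : ℕ} (Ω : Set (En n)) (m : ℕ∞) (ρ : En n → ℝ) : Prop :=
  ContDiff ℝ m ρ ∧ Ω = {z | ρ z < 0} ∧ frontier Ω = {z | ρ z = 0} ∧
    ∀ q ∈ frontier Ω, fderiv ℝ ρ q ≠ 0

/-- `q` is a strongly pseudoconvex point with respect to `ρ`. -/
def StronglyPcxAt {n : ℕ} (ρ : En n → ℝ) (q : En n) : Prop :=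
  ∀ ξ : En n, ξ ≠ 0 → InCplxTangent ρ q ξ → 0 < LeviForm ρ q ξ

/-- `Ω` is pseudoconvex with `C^∞` boundary, witnessed by the defining function `ρ`. -/
def IsPcxCinfBoundary {n : ℕ} (Ω : Set (En n)) (ρ : En n → ℝ) : Prop :=
  IsDefiningFunction Ω ⊤ ρ ∧
    ∀ q ∈ frontier Ω, ∀ ξ : En n, InCplxTangent ρ q ξ → 0 ≤ LeviForm ρ q ξ

/-- `F z = z + o(‖z - p‖^k)` as `z → p` within `Ω`. -/
def LittleOh {n : ℕ} (Ω : Set (En n)) (F : En n → En n) (p : En n) (k : ℕ) : Prop :=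
  Tendsto (fun z => ‖F z - z‖ / ‖z - p‖ ^ k) (𝓝[Ω] p) (𝓝 0)

/-- `F` is an automorphism of `Ω`: a holomorphic bijection with holomorphic inverse. -/
def IsAutomorphismOf {n : ℕ} (F : En n → En n) (Ω : Set (En n)) : Prop :=
  DifferentiableOn ℂ F Ω ∧ MapsTo F Ω Ω ∧
    ∃ G : En n → En n, DifferentiableOn ℂ G Ω ∧ MapsTo G Ω Ω ∧
      (∀ z ∈ Ω, G (F z) = z) ∧ (∀ z ∈ Ω, F (G z) = z)

section SeveralVariables

variable {E G : Type*} [NormedAddCommGroup E] [NormedSpace ℂ E] [NormedAddCommGroup G]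
  [NormedSpace ℂ G]

theorem norm_fderiv_le_of_bounded_on_ball {f : E → G} {x : E} {R B : ℝ} (hR : 0 < R)
    (hf : DifferentiableOn ℂ f (ball x R)) (hB : ∀ z ∈ ball x R, ‖f z‖ ≤ B) :
    ‖fderiv ℂ f x‖ ≤ 2 * B / R := by
  refine Complex.norm_fderiv_le_div_of_mapsTo_ball hf (fun z hz => ?_) hR
  rw [mem_closedBall, dist_eq_norm]
  have := norm_sub_le (f z) (f x)
  linarith [hB z hz, hB x (mem_ball_self hR)]

theorem lipschitz_of_bounded_on_ball {f : E → G} {x : E} {r B : ℝ} (hr : 0 < r)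
    (hf : DifferentiableOn ℂ f (ball x (2 * r))) (hB : ∀ z ∈ ball x (2 * r), ‖f z‖ ≤ B)
    {z w : E} (hz : z ∈ ball x r) (hw : w ∈ ball x r) :
    ‖f z - f w‖ ≤ 2 * B / r * ‖z - w‖ := by
  have hsub : ∀ y ∈ ball x r, ball y r ⊆ ball x (2 * r) := fun y hy => by
    refine ball_subset_ball' ?_
    linarith [mem_ball.1 hy]
  let : NormedSpace ℝ E := NormedSpace.restrictScalars ℝ ℂ E
  refine (convex_ball x r).norm_image_sub_le_of_norm_fderiv_le (𝕜 := ℂ) (fun y hy => ?_)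
    (fun y hy => ?_) hw hz
  · exact hf.differentiableAt (isOpen_ball.mem_nhds (hsub y hy (mem_ball_self hr)))
  · exact norm_fderiv_le_of_bounded_on_ball hr (hf.mono (hsub y hy))
      (fun z hz => hB z (hsub y hy hz))

theorem norm_fderiv_sub_fderiv_le_of_bounded_on_ball {f : E → G} {x : E} {r B : ℝ} (hr : 0 < r)
    (hf : DifferentiableOn ℂ f (ball x (8 * r))) (hB : ∀ z ∈ ball x (8 * r), ‖f z‖ ≤ B)
    {y : E} (hy : y ∈ ball x r) :
    ‖fderiv ℂ f y - fderiv ℂ f x‖ ≤ B / r ^ 2 * ‖y - x‖ := by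
  have hB0 : 0 ≤ B := (norm_nonneg _).trans (hB x (mem_ball_self (by linarith)))
  have hlip : ∀ z ∈ ball x (4 * r), ∀ w ∈ ball x (4 * r), ‖f z - f w‖ ≤ B / (2 * r) * ‖z - w‖ := by
    intro z hz w hw
    have h := lipschitz_of_bounded_on_ball (f := f) (x := x) (r := 4 * r) (B := B) (by linarith)
      (by convert hf using 2; ring) (by intro z hz; apply hB; convert hz using 2; ring) hz hw
    convert h using 2
    field_simp
    ring
  have hx : x ∈ ball x r := mem_ball_self hr
  have hdiff : ∀ z ∈ ball x r, DifferentiableAt ℂ f z := fun z hz =>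
    hf.differentiableAt (isOpen_ball.mem_nhds (ball_subset_ball (by linarith) hz))
  refine ContinuousLinearMap.opNorm_le_bound _ (by positivity) fun v => ?_
  have hD : ∀ w : E, ‖w‖ < 2 * r →
      ‖(f (y + w) - f y) - (f (x + w) - f x)‖ ≤ B / r ^ 2 * ‖w‖ * ‖y - x‖ := by
    intro w hw
    have hmem : ∀ z ∈ ball x (2 * r), z + w ∈ ball x (4 * r) := fun z hz => by
      rw [mem_ball, dist_eq_norm] at hz ⊢
      have := norm_add_le (z - x) w
      rw [show z + w - x = z - x + w by abel]
      linarith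
    have h := lipschitz_of_bounded_on_ball (f := fun z => f (z + w) - f z) (x := x) (r := r)
      (B := B / (2 * r) * ‖w‖) hr ?_ ?_ hy hx
    · refine h.trans (le_of_eq ?_)
      field_simp
    · refine DifferentiableOn.sub ?_ (hf.mono (ball_subset_ball (by linarith)))
      refine hf.comp (by fun_prop) fun z hz => ?_
      exact ball_subset_ball (by linarith) (hmem z hz)
    · intro z hz
      have := hlip (z + w) (hmem z hz) z (ball_subset_ball (by linarith) hz)
      simpa using this
  have hlim : ∀ z ∈ ball x r, Tendsto (fun t : ℝ => (t : ℂ)⁻¹ • (f (z + (t : ℂ) • v) - f z))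
      (𝓝[≠] 0) (𝓝 (fderiv ℂ f z v)) := by
    intro z hz
    have h := (hdiff z hz).hasFDerivAt.hasLineDerivAt v
    have h' := h.tendsto_slope_zero
    refine h'.comp (f := fun t : ℝ => (t : ℂ)) ?_
    refine tendsto_nhdsWithin_iff.2 ⟨?_, ?_⟩
    · have : Tendsto (fun t : ℝ => (t : ℂ)) (𝓝 0) (𝓝 ((0 : ℝ) : ℂ)) :=
        Complex.continuous_ofReal.tendsto 0
      exact (by simpa using this : Tendsto (fun t : ℝ => (t : ℂ)) (𝓝 0) (𝓝 0)).mono_left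
        nhdsWithin_le_nhds
    · filter_upwards [self_mem_nhdsWithin] with t ht
      simpa using ht
  have h1 := ((hlim y hy).sub (hlim x hx)).norm
  refine le_of_tendsto h1 ?_
  have hsmall : ∀ᶠ t : ℝ in 𝓝[≠] 0, ‖(t : ℂ) • v‖ < 2 * r := by
    have : Tendsto (fun t : ℝ => ‖(t : ℂ) • v‖) (𝓝 0) (𝓝 ‖((0 : ℝ) : ℂ) • v‖) :=
      Continuous.tendsto (by fun_prop) 0
    exact (this.mono_left nhdsWithin_le_nhds).eventually_lt_const (by simpa using by linarith)
  filter_upwards [hsmall, self_mem_nhdsWithin] with t ht ht0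
  have ht0' : 0 < ‖(t : ℂ)‖ := by simpa using ht0
  rw [← smul_sub, norm_smul, norm_inv, inv_mul_le_iff₀ ht0']
  refine (hD _ ht).trans (le_of_eq ?_)
  rw [norm_smul]
  ring

theorem norm_taylor_le_of_bounded_on_ball {f : E → G} {x : E} {r s B : ℝ} (hr : 0 < r)
    (hs : s ≤ r)
    (hf : DifferentiableOn ℂ f (ball x (8 * r))) (hB : ∀ z ∈ ball x (8 * r), ‖f z‖ ≤ B)
    {z w : E} (hz : z ∈ ball x s) (hw : w ∈ ball x s) :
    ‖f z - f w - fderiv ℂ f x (z - w)‖ ≤ B / r ^ 2 * s * ‖z - w‖ := by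
  have hB0 : 0 ≤ B := (norm_nonneg _).trans (hB x (mem_ball_self (by linarith)))
  let : NormedSpace ℝ E := NormedSpace.restrictScalars ℝ ℂ E
  refine (convex_ball x s).norm_image_sub_le_of_norm_fderiv_le' (𝕜 := ℂ) (fun y hy => ?_)
    (fun y hy => ?_) hw hz
  · exact hf.differentiableAt (isOpen_ball.mem_nhds (ball_subset_ball (by linarith) hy))
  · refine (norm_fderiv_sub_fderiv_le_of_bounded_on_ball hr hf hB
      (ball_subset_ball hs hy)).trans ?_
    gcongr
    rw [← dist_eq_norm]
    exact (mem_ball.1 hy).le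

theorem hasStrictFDerivAt_of_norm_taylor_le {g : E → G} {A : E →L[ℂ] G} {x : E} {r C : ℝ}
    (hr : 0 < r) (h : ∀ s ≤ r, ∀ z ∈ ball x s, ∀ w ∈ ball x s,
      ‖g z - g w - A (z - w)‖ ≤ C * s * ‖z - w‖) : HasStrictFDerivAt g A x := by
  rw [hasStrictFDerivAt_iff_isLittleO, Asymptotics.isLittleO_iff]
  intro c hc
  obtain ⟨s, hs0, hsr, hsc⟩ : ∃ s, 0 < s ∧ s ≤ r ∧ C * s ≤ c := by
    refine ⟨min r (c / (|C| + 1)), by positivity, min_le_left _ _, ?_⟩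
    calc C * min r (c / (|C| + 1)) ≤ (|C| + 1) * (c / (|C| + 1)) := by
          have := le_abs_self C
          have h1 := min_le_right r (c / (|C| + 1))
          have h2 : 0 < min r (c / (|C| + 1)) := by positivity
          nlinarith [abs_nonneg C]
      _ = c := by field_simp
  have : ball x s ×ˢ ball x s ∈ 𝓝 (x, x) :=
    prod_mem_nhds (ball_mem_nhds x hs0) (ball_mem_nhds x hs0)
  filter_upwards [this] with q hq
  exact (h s hsr q.1 hq.1 q.2 hq.2).trans (by gcongr)

/-- Uniformly bounded holomorphic maps which converge pointwise near `x` and whose derivatives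
converge at `x` have a strictly differentiable limit. -/
theorem hasStrictFDerivAt_of_tendsto {ι : Type*} {l : Filter ι} [l.NeBot] {f : ι → E → G}
    {g : E → G} {A : E →L[ℂ] G} {x : E} {R B : ℝ} (hR : 0 < R)
    (hf : ∀ᶠ i in l, DifferentiableOn ℂ (f i) (ball x R))
    (hB : ∀ᶠ i in l, ∀ z ∈ ball x R, ‖f i z‖ ≤ B)
    (hlim : ∀ z ∈ ball x R, Tendsto (fun i => f i z) l (𝓝 (g z)))
    (hA : Tendsto (fun i => fderiv ℂ (f i) x) l (𝓝 A)) : HasStrictFDerivAt g A x := by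
  have hr : 0 < R / 8 := by positivity
  refine hasStrictFDerivAt_of_norm_taylor_le (r := R / 8) (C := B / (R / 8) ^ 2) hr ?_
  intro s hs z hz w hw
  have hsub : ball x s ⊆ ball x R := ball_subset_ball (by linarith)
  have h1 : Tendsto (fun i => f i z - f i w - fderiv ℂ (f i) x (z - w)) l
      (𝓝 (g z - g w - A (z - w))) :=
    ((hlim z (hsub hz)).sub (hlim w (hsub hw))).sub
      (((ContinuousLinearMap.apply ℂ G (z - w)).continuous.tendsto A).comp hA)
  refine le_of_tendsto h1.norm ?_
  filter_upwards [hf, hB] with i hi hBi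
  have h8 : 8 * (R / 8) = R := by ring
  exact norm_taylor_le_of_bounded_on_ball hr hs (by rwa [h8]) (by rwa [h8]) hz hw

theorem Ultrafilter.exists_tendsto_of_norm_le {ι V : Type*} [NormedAddCommGroup V] [ProperSpace V]
    (u : Ultrafilter ι) {f : ι → V} {B : ℝ} (hB : ∀ᶠ i in (u : Filter ι), ‖f i‖ ≤ B) :
    ∃ y, Tendsto f u (𝓝 y) := by
  have h := (isCompact_closedBall (0 : V) B).ultrafilter_le_nhds (u.map f) (by
    rw [le_principal_iff]
    change ∀ᶠ i in (u : Filter ι), f i ∈ closedBall (0 : V) B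
    filter_upwards [hB] with i hi
    simpa using hi)
  obtain ⟨y, -, hy⟩ := h
  exact ⟨y, hy⟩

theorem DifferentiableOn.exists_ball_norm_le {f : E → G} {Ω : Set E} (hΩ : IsOpen Ω)
    (hf : DifferentiableOn ℂ f Ω) {x : E} (hx : x ∈ Ω) :
    ∃ R > 0, ∃ B, ball x R ⊆ Ω ∧ ∀ z ∈ ball x R, ‖f z‖ ≤ B := by
  have hc : ContinuousAt f x := hf.continuousOn.continuousAt (hΩ.mem_nhds hx)
  have h1 : ∀ᶠ z in 𝓝 x, ‖f z‖ < ‖f x‖ + 1 :=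
    hc.norm.eventually_lt_const (by linarith)
  obtain ⟨R, hR, h⟩ := Metric.eventually_nhds_iff_ball.1 (h1.and (hΩ.mem_nhds hx))
  exact ⟨R, hR, ‖f x‖ + 1, fun z hz => (h z hz).2, fun z hz => (h z hz).1.le⟩

/-- The identity theorem for holomorphic maps of several variables. -/
theorem eqOn_of_eventuallyEq_of_isPreconnected [CompleteSpace G] {f g : E → G} {Ω : Set E}
    (hΩ : IsOpen Ω)
    (hc : IsPreconnected Ω) (hf : DifferentiableOn ℂ f Ω) (hg : DifferentiableOn ℂ g Ω)
    {x : E} (hx : x ∈ Ω) (hfg : f =ᶠ[𝓝 x] g) : EqOn f g Ω := by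
  have hopen : IsOpen {z | f =ᶠ[𝓝 z] g} := isOpen_setOfPred_eventually_nhds
  have hsub : Ω ⊆ {z | f =ᶠ[𝓝 z] g} := by
    refine hc.subset_of_closure_inter_subset hopen ⟨x, hx, hfg⟩ ?_
    rintro z ⟨hz, hzΩ⟩
    obtain ⟨r, hr, hball⟩ := Metric.isOpen_iff.1 hΩ z hzΩ
    obtain ⟨w, hw, hwz⟩ := Metric.mem_closure_iff.1 hz r hr
    have hwb : w ∈ ball z r := by rwa [mem_ball, dist_comm]
    filter_upwards [ball_mem_nhds z hr] with y hy
    let : NormedSpace ℝ E := NormedSpace.restrictScalars ℝ ℂ E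
    set γ : ℂ → E := fun t => w + t • (y - w) with hγ
    have hγd : Differentiable ℂ γ := by fun_prop
    set U : Set ℂ := γ ⁻¹' ball z r with hU
    have hUo : IsOpen U := isOpen_ball.preimage hγd.continuous
    have hUc : Convex ℝ U := by
      intro s hs t ht a b ha hb hab
      have h := convex_ball z r hs ht ha hb hab
      rw [hU, mem_preimage]
      convert h using 1
      have h1 : ((a : ℂ) + (b : ℂ)) = 1 := by exact_mod_cast hab
      have e1 : ∀ (c : ℝ) (v : E), c • v = (c : ℂ) • v := fun c v => rfl
      simp only [hγ, e1, Complex.real_smul]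
      calc w + ((a : ℂ) * s + b * t) • (y - w)
          = ((a : ℂ) + b) • w + ((a : ℂ) * s + b * t) • (y - w) := by rw [h1, one_smul]
        _ = _ := by module
    have hmaps : MapsTo γ U Ω := fun t ht => hball ht
    have hfa : AnalyticOnNhd ℂ (f ∘ γ) U :=
      (hf.comp hγd.differentiableOn hmaps).analyticOnNhd hUo
    have hga : AnalyticOnNhd ℂ (g ∘ γ) U :=
      (hg.comp hγd.differentiableOn hmaps).analyticOnNhd hUo
    have h0 : γ 0 = w := by simp [hγ]
    have h1 : γ 1 = y := by simp [hγ]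
    have hev : f ∘ γ =ᶠ[𝓝 0] g ∘ γ := by
      have : Tendsto γ (𝓝 0) (𝓝 w) := by
        have := hγd.continuous.tendsto 0
        rwa [h0] at this
      exact this.eventually hw
    have := hfa.eqOn_of_preconnected_of_eventuallyEq hga hUc.isPreconnected
      (by rw [hU, mem_preimage, h0]; exact hwb) hev
      (show (1 : ℂ) ∈ U by rw [hU, mem_preimage, h1]; exact hy)
    simpa [h1] using this
  exact fun z hz => (hsub hz).self_of_nhds

theorem differentiableOn_of_clm_apply [FiniteDimensional ℂ E] {f : E → E →L[ℂ] G} {s : Set E}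
    (h : ∀ v, DifferentiableOn ℂ (fun x => f x v) s) : DifferentiableOn ℂ f s := by
  let d := Module.finrank ℂ E
  have hd : d = Module.finrank ℂ (Fin d → ℂ) := (Module.finrank_fin_fun ℂ).symm
  let e₁ := ContinuousLinearEquiv.ofFinrankEq hd
  let e₂ := (e₁.arrowCongr (1 : G ≃L[ℂ] G)).trans (ContinuousLinearEquiv.piRing (Fin d))
  rw [← id_comp f, ← e₂.symm_comp_self]
  exact e₂.symm.differentiable.comp_differentiableOn (differentiableOn_pi.mpr fun i => h _)

variable [FiniteDimensional ℂ E] [FiniteDimensional ℂ G]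

theorem differentiableAt_of_tendsto {ι : Type*} {l : Filter ι} [l.NeBot] {f : ι → E → G}
    {g : E → G} {x : E} {R B : ℝ} (hR : 0 < R)
    (hf : ∀ᶠ i in l, DifferentiableOn ℂ (f i) (ball x R))
    (hB : ∀ᶠ i in l, ∀ z ∈ ball x R, ‖f i z‖ ≤ B)
    (hlim : ∀ z ∈ ball x R, Tendsto (fun i => f i z) l (𝓝 (g z))) : DifferentiableAt ℂ g x := by
  have hle : (Ultrafilter.of l : Filter ι) ≤ l := Ultrafilter.of_le l
  have : ProperSpace (E →L[ℂ] G) := FiniteDimensional.proper ℂ _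
  obtain ⟨A, hA⟩ := (Ultrafilter.of l).exists_tendsto_of_norm_le
    (f := fun i => fderiv ℂ (f i) x) (B := 2 * B / R) (by
      filter_upwards [hle hf, hle hB] with i hi hBi
      exact norm_fderiv_le_of_bounded_on_ball hR hi hBi)
  exact (hasStrictFDerivAt_of_tendsto hR (hle hf) (hle hB)
    (fun z hz => (hlim z hz).mono_left hle) hA).hasFDerivAt.differentiableAt

theorem differentiableOn_of_tendsto {ι : Type*} {l : Filter ι} [l.NeBot] {f : ι → E → G}
    {g : E → G} {Ω : Set E} {B : ℝ} (hΩ : IsOpen Ω)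
    (hf : ∀ i, DifferentiableOn ℂ (f i) Ω) (hB : ∀ i, ∀ z ∈ Ω, ‖f i z‖ ≤ B)
    (hlim : ∀ z ∈ Ω, Tendsto (fun i => f i z) l (𝓝 (g z))) : DifferentiableOn ℂ g Ω := by
  intro x hx
  obtain ⟨R, hR, hsub⟩ := Metric.isOpen_iff.1 hΩ x hx
  exact (differentiableAt_of_tendsto hR (.of_forall fun i => (hf i).mono hsub)
    (.of_forall fun i z hz => hB i z (hsub hz))
    (fun z hz => hlim z (hsub hz))).differentiableWithinAt

theorem DifferentiableOn.fderiv_of_isOpen {f : E → G} {Ω : Set E} (hΩ : IsOpen Ω)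
    (hf : DifferentiableOn ℂ f Ω) : DifferentiableOn ℂ (fderiv ℂ f) Ω := by
  refine differentiableOn_of_clm_apply fun v x hx => ?_
  obtain ⟨R, hR, B, hsub, hB⟩ := hf.exists_ball_norm_le hΩ hx
  obtain ⟨r, hr, hRr⟩ : ∃ r > 0, R = 4 * r := ⟨R / 4, by positivity, by ring⟩
  subst hRr
  have hB0 : 0 ≤ B := (norm_nonneg _).trans (hB x (mem_ball_self hR))
  have hlip : ∀ z ∈ ball x (2 * r), ∀ w ∈ ball x (2 * r), ‖f z - f w‖ ≤ B / r * ‖z - w‖ := by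
    intro z hz w hw
    have h4 : 2 * (2 * r) = 4 * r := by ring
    refine (lipschitz_of_bounded_on_ball (f := f) (x := x) (r := 2 * r) (B := B) (by linarith)
      (by rw [h4]; exact hf.mono hsub) (by rw [h4]; exact hB) hz hw).trans (le_of_eq ?_)
    field_simp
  have hτ : Tendsto (fun t : ℂ => t • v) (𝓝[≠] 0) (𝓝 0) := by
    have : Tendsto (fun t : ℂ => t • v) (𝓝 0) (𝓝 ((0 : ℂ) • v)) := Continuous.tendsto (by fun_prop) 0
    rw [zero_smul] at this
    exact this.mono_left nhdsWithin_le_nhds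
  have hsmall : ∀ᶠ t : ℂ in 𝓝[≠] 0, ‖t • v‖ < r :=
    (tendsto_zero_iff_norm_tendsto_zero.1 hτ).eventually_lt_const hr
  have hadd : ∀ w : E, ‖w‖ < r → ∀ z ∈ ball x r, z + w ∈ ball x (2 * r) := fun w hw z hz => by
    rw [mem_ball, dist_eq_norm] at hz ⊢
    have := norm_add_le (z - x) w
    rw [show z + w - x = z - x + w by abel]
    linarith
  refine (differentiableAt_of_tendsto (l := 𝓝[≠] (0 : ℂ))
    (f := fun t z => t⁻¹ • (f (z + t • v) - f z)) (B := B / r * ‖v‖) hr ?_ ?_ ?_).differentiableWithinAt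
  · filter_upwards [hsmall] with t ht
    refine DifferentiableOn.const_smul (DifferentiableOn.sub ?_ ?_) _
    · refine (hf.mono hsub).comp (by fun_prop) fun z hz => ?_
      exact ball_subset_ball (by linarith) (hadd _ ht z hz)
    · exact hf.mono ((ball_subset_ball (by linarith)).trans hsub)
  · filter_upwards [hsmall, self_mem_nhdsWithin] with t ht ht0 z hz
    have ht0' : 0 < ‖t‖ := norm_pos_iff.2 ht0
    rw [norm_smul, norm_inv, inv_mul_le_iff₀ ht0']
    refine (hlip _ (hadd _ ht z hz) z (ball_subset_ball (by linarith) hz)).trans (le_of_eq ?_)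
    rw [add_sub_cancel_left, norm_smul]
    ring
  · intro z hz
    have hz' : z ∈ Ω := hsub (ball_subset_ball (by linarith) hz)
    exact ((hf.differentiableAt (hΩ.mem_nhds hz')).hasFDerivAt.hasLineDerivAt v).tendsto_slope_zero

end SeveralVariables

section FourierKernel

theorem norm_exp_neg_int_mul_mul_I (l : ℤ) (θ : ℝ) : ‖exp (-(l * θ * I))‖ = 1 := by
  have : -((l : ℂ) * θ * I) = ((-(l * θ) : ℝ) : ℂ) * I := by push_cast; ring
  rw [this, norm_exp_ofReal_mul_I]

theorem norm_integral_mul_exp_le_div_sq {g g₁ g₂ : ℝ → ℂ} {α β M : ℝ} (hαβ : α ≤ β)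
    (hg : ∀ θ ∈ Icc α β, HasDerivAt g (g₁ θ) θ) (hg₁ : ∀ θ ∈ Icc α β, HasDerivAt g₁ (g₂ θ) θ)
    (hc : ContinuousOn g₂ (Icc α β)) (hα : g α = 0) (hβ : g β = 0) (hα₁ : g₁ α = 0)
    (hβ₁ : g₁ β = 0) (hM : ∀ θ ∈ Icc α β, ‖g θ‖ ≤ M) (hM₂ : ∀ θ ∈ Icc α β, ‖g₂ θ‖ ≤ M) (l : ℤ) :
    ‖∫ θ in α..β, g θ * exp (-(l * θ * I))‖ ≤ 2 * M * (β - α) / (1 + (l : ℝ) ^ 2) := by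
  have hM0 : 0 ≤ M := (norm_nonneg _).trans (hM α ⟨le_rfl, hαβ⟩)
  have hbound : ∀ h : ℝ → ℂ, (∀ θ ∈ Icc α β, ‖h θ‖ ≤ M) →
      ‖∫ θ in α..β, h θ * exp (-(l * θ * I))‖ ≤ M * (β - α) := by
    intro h hh
    have := intervalIntegral.norm_integral_le_of_norm_le_const (a := α) (b := β) (C := M)
      (f := fun θ => h θ * exp (-(l * θ * I))) (fun θ hθ => by
        rw [uIoc_of_le hαβ] at hθ
        rw [norm_mul, norm_exp_neg_int_mul_mul_I, mul_one]
        exact hh θ ⟨hθ.1.le, hθ.2⟩)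
    rwa [abs_of_nonneg (by linarith)] at this
  rcases eq_or_ne l 0 with rfl | hl
  · refine (hbound g hM).trans ?_
    have : 0 ≤ M * (β - α) := mul_nonneg hM0 (by linarith)
    norm_num
    linarith
  have hlc : (l : ℂ) * I ≠ 0 := mul_ne_zero (by exact_mod_cast hl) I_ne_zero
  set e : ℝ → ℂ := fun θ => exp (-(l * θ * I)) with he
  have hE : ∀ θ : ℝ, HasDerivAt (fun θ : ℝ => -exp (-(l * θ * I)) / (l * I)) (e θ) θ := by
    intro θ
    have h1 : HasDerivAt (fun θ : ℝ => -((l : ℂ) * θ * I)) (-(l * 1 * I)) θ :=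
      ((Complex.ofRealCLM.hasDerivAt.const_mul (l : ℂ)).mul_const I).neg
    have h2 := (h1.cexp.neg.div_const ((l : ℂ) * I))
    refine h2.congr_deriv ?_
    simp only [he]
    field_simp
  have hcont : Continuous e := by rw [he]; fun_prop
  have step : ∀ h h₁ : ℝ → ℂ, (∀ θ ∈ Icc α β, HasDerivAt h (h₁ θ) θ) → ContinuousOn h₁ (Icc α β) →
      h α = 0 → h β = 0 → ∫ θ in α..β, h θ * e θ = (∫ θ in α..β, h₁ θ * e θ) / (l * I) := by
    intro h h₁ hh hh₁ h0 h0'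
    have := intervalIntegral.integral_mul_deriv_eq_deriv_mul (a := α) (b := β) (u := h) (u' := h₁)
      (v := fun θ : ℝ => -exp (-(l * θ * I)) / (l * I)) (v' := e)
      (fun θ hθ => hh θ (by rwa [uIcc_of_le hαβ] at hθ)) (fun θ _ => hE θ)
      (ContinuousOn.intervalIntegrable (by rwa [uIcc_of_le hαβ]))
      (hcont.intervalIntegrable _ _)
    rw [this, h0, h0', zero_mul, zero_mul, sub_zero, zero_sub, ← intervalIntegral.integral_neg,
      ← intervalIntegral.integral_div]
    refine intervalIntegral.integral_congr fun θ _ => ?_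
    simp only [he]
    ring
  have hc₁ : ContinuousOn g₁ (Icc α β) := fun θ hθ => (hg₁ θ hθ).continuousAt.continuousWithinAt
  have key : ∫ θ in α..β, g θ * e θ = (∫ θ in α..β, g₂ θ * e θ) / (l * I) / (l * I) := by
    rw [step g g₁ hg hc₁ hα hβ, step g₁ g₂ hg₁ hc hα₁ hβ₁]
  change ‖∫ θ in α..β, g θ * e θ‖ ≤ _
  rw [key, norm_div, norm_div, norm_mul, norm_I, mul_one, Complex.norm_intCast, div_div, ← sq,
    sq_abs]
  have hl1 : (1 : ℝ) ≤ (l : ℝ) ^ 2 := by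
    have h1 : 1 ≤ l ^ 2 := by
      have := Int.one_le_abs hl
      rw [← sq_abs]; nlinarith
    exact_mod_cast h1
  have h2 := hbound g₂ hM₂
  rw [div_le_div_iff₀ (by linarith) (by linarith)]
  have h3 : 0 ≤ M * (β - α) := mul_nonneg hM0 (by linarith)
  calc ‖∫ θ in α..β, g₂ θ * e θ‖ * (1 + (l : ℝ) ^ 2)
      ≤ M * (β - α) * (1 + (l : ℝ) ^ 2) := by gcongr
    _ ≤ M * (β - α) * (2 * (l : ℝ) ^ 2) := by gcongr; linarith
    _ = _ := by ring

theorem summable_one_div_one_add_int_sq : Summable fun l : ℤ => 1 / (1 + (l : ℝ) ^ 2) := by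
  have h : Summable fun l : ℤ => 1 / |(l : ℝ)| ^ (2 : ℕ) + if l = 0 then (1 : ℝ) else 0 := by
    refine Summable.add ?_ ?_
    · simpa using Real.summable_one_div_int_pow.2 (by norm_num : 1 < 2)
    · exact summable_of_ne_finset_zero (s := {0}) (by intro b hb; simpa using hb)
  refine Summable.of_nonneg_of_le (fun l => by positivity) (fun l => ?_) h
  rcases eq_or_ne l 0 with rfl | hl
  · simp
  · have : (0 : ℝ) < |(l : ℝ)| ^ 2 := by positivity
    simp only [hl, if_false, add_zero]
    rw [sq_abs] at this ⊢
    gcongr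
    linarith

/-- The weight `(cos r - cos θ)²`, times the `k`-th power of `(e^{iθ} - 1)⁻¹`. -/
def kernelSymbol (r : ℝ) (k : ℕ) (θ : ℝ) : ℂ :=
  ((Real.cos r - Real.cos θ) ^ 2 : ℝ) * (exp (θ * I) - 1)⁻¹ ^ k

/-- Unnormalized Fourier coefficients of `kernelSymbol` restricted to `[r, 2π - r]`. -/
def kernelCoeff (r : ℝ) (k : ℕ) (l : ℤ) : ℂ :=
  ∫ θ in r..(2 * Real.pi - r), kernelSymbol r k θ * exp (-(l * θ * I))

theorem exp_mul_I_sub_one_ne_zero {r θ : ℝ} (hr : 0 < r)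
    (hθ : θ ∈ Icc r (2 * Real.pi - r)) : exp (θ * I) - 1 ≠ 0 := by
  intro h
  obtain ⟨n, hn⟩ := Complex.exp_eq_one_iff.1 (sub_eq_zero.1 h)
  have h1 : (θ : ℂ) = n * (2 * Real.pi) := by
    have : (θ : ℂ) * I = (n * (2 * Real.pi)) * I := by rw [hn]; ring
    exact mul_right_cancel₀ I_ne_zero this
  have h2 : θ = n * (2 * Real.pi) := by exact_mod_cast h1
  have hpi := Real.pi_pos
  have h3 : (0 : ℝ) < n := by
    by_contra hcon
    push Not at hcon
    nlinarith [hθ.1]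
  have h4 : (n : ℝ) < 1 := by
    by_contra hcon
    push Not at hcon
    nlinarith [hθ.2]
  have h5 : 0 < n := by exact_mod_cast h3
  have h6 : n < 1 := by exact_mod_cast h4
  omega

theorem hasDerivAt_inv_exp_sub_one_pow {r θ : ℝ} (hr : 0 < r)
    (hθ : θ ∈ Icc r (2 * Real.pi - r)) (k : ℕ) :
    HasDerivAt (fun θ : ℝ => (exp (θ * I) - 1)⁻¹ ^ k)
      (-I * k * ((exp (θ * I) - 1)⁻¹ ^ k + (exp (θ * I) - 1)⁻¹ ^ (k + 1))) θ := by
  have h0 := exp_mul_I_sub_one_ne_zero hr hθ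
  have h1 : HasDerivAt (fun θ : ℝ => exp (θ * I) - 1) (exp (θ * I) * (1 * I)) θ :=
    ((Complex.ofRealCLM.hasDerivAt.mul_const I).cexp).sub_const 1
  have h2 := (h1.fun_inv h0).fun_pow k
  refine h2.congr_deriv ?_
  rcases k with _ | k
  · simp
  · set v := exp (θ * I) with hv
    have : v = (v - 1) + 1 := by ring
    generalize hw : v - 1 = w at *
    rw [this]
    simp only [Nat.add_sub_cancel]
    push_cast
    simp only [inv_pow]
    field_simp
    ring

theorem norm_kernelCoeff_le_of_bound {r U : ℝ} (hr : 0 < r) (hr2 : r ≤ Real.pi) (hU1 : 1 ≤ U)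
    (hU : ∀ θ ∈ Icc r (2 * Real.pi - r), ‖(exp (θ * I) - 1)⁻¹‖ ≤ U) (k : ℕ) (l : ℤ)
    {M : ℝ} (hM : 6 * U ^ k + 16 * k * U ^ (k + 1) + 16 * k * (k + 1) * U ^ (k + 2) ≤ M) :
    ‖kernelCoeff r k l‖ ≤ 2 * M * (2 * Real.pi) / (1 + (l : ℝ) ^ 2) := by
  set u : ℝ → ℂ := fun θ => (exp (θ * I) - 1)⁻¹ with hu
  set W : ℝ → ℂ := fun θ => (((Real.cos r - Real.cos θ) ^ 2 : ℝ) : ℂ) with hW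
  set W₁ : ℝ → ℂ := fun θ => ((2 * (Real.cos r - Real.cos θ) * Real.sin θ : ℝ) : ℂ) with hW₁
  set W₂ : ℝ → ℂ := fun θ =>
    ((2 * Real.sin θ * Real.sin θ + 2 * (Real.cos r - Real.cos θ) * Real.cos θ : ℝ) : ℂ) with hW₂
  have dW : ∀ θ, HasDerivAt W (W₁ θ) θ := fun θ => by
    have h := (((Real.hasDerivAt_cos θ).const_sub (Real.cos r)).fun_pow 2).ofReal_comp
    convert h using 1
    simp only [hW₁]
    push_cast
    ring
  have dW₁ : ∀ θ, HasDerivAt W₁ (W₂ θ) θ := fun θ => by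
    have h := ((((Real.hasDerivAt_cos θ).const_sub (Real.cos r)).const_mul 2).fun_mul
      (Real.hasDerivAt_sin θ)).ofReal_comp
    convert h using 1
    simp only [hW₂]
    push_cast
    ring
  set v : ℕ → ℝ → ℂ := fun k θ => -I * k * (u θ ^ k + u θ ^ (k + 1)) with hv
  have dv : ∀ k, ∀ θ ∈ Icc r (2 * Real.pi - r), HasDerivAt (fun θ => u θ ^ k) (v k θ) θ :=
    fun k θ hθ => hasDerivAt_inv_exp_sub_one_pow hr hθ k
  have dv' : ∀ k, ∀ θ ∈ Icc r (2 * Real.pi - r),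
      HasDerivAt (v k) (-I * k * (v k θ + v (k + 1) θ)) θ :=
    fun k θ hθ => ((dv k θ hθ).fun_add (dv (k + 1) θ hθ)).const_mul _
  have hle : r ≤ 2 * Real.pi - r := by linarith
  have cu : ContinuousOn u (Icc r (2 * Real.pi - r)) := by
    refine ContinuousOn.inv₀ (Continuous.continuousOn (by fun_prop)) fun θ hθ => ?_
    exact exp_mul_I_sub_one_ne_zero hr hθ
  have cv : ∀ k, ContinuousOn (v k) (Icc r (2 * Real.pi - r)) := fun k => by
    simp only [hv]; fun_prop
  have cW₁ : Continuous W₁ := by simp only [hW₁]; fun_prop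
  have cW : Continuous W := by simp only [hW]; fun_prop
  have cW₂ : Continuous W₂ := by simp only [hW₂]; fun_prop
  have bc : ∀ θ, |Real.cos r - Real.cos θ| ≤ 2 := fun θ => by
    rw [abs_le]
    constructor <;> linarith [Real.neg_one_le_cos r, Real.cos_le_one r, Real.neg_one_le_cos θ,
      Real.cos_le_one θ]
  have bW : ∀ θ, ‖W θ‖ ≤ 4 := fun θ => by
    simp only [hW, Complex.norm_real, norm_pow, Real.norm_eq_abs]
    nlinarith [bc θ, abs_nonneg (Real.cos r - Real.cos θ)]
  have bW₁ : ∀ θ, ‖W₁ θ‖ ≤ 4 := fun θ => by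
    simp only [hW₁, Complex.norm_real, Real.norm_eq_abs, abs_mul, abs_two]
    nlinarith [bc θ, abs_nonneg (Real.cos r - Real.cos θ), Real.abs_sin_le_one θ,
      abs_nonneg (Real.sin θ)]
  have bW₂ : ∀ θ, ‖W₂ θ‖ ≤ 6 := fun θ => by
    simp only [hW₂, Complex.norm_real, Real.norm_eq_abs]
    refine (abs_add_le _ _).trans ?_
    simp only [abs_mul, abs_two]
    nlinarith [bc θ, abs_nonneg (Real.cos r - Real.cos θ), Real.abs_sin_le_one θ,
      abs_nonneg (Real.sin θ), Real.abs_cos_le_one θ, abs_nonneg (Real.cos θ)]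
  have bu : ∀ j, ∀ θ ∈ Icc r (2 * Real.pi - r), ‖u θ ^ j‖ ≤ U ^ j := fun j θ hθ => by
    rw [norm_pow]
    exact pow_le_pow_left₀ (norm_nonneg _) (hU θ hθ) j
  have hU0 : 0 ≤ U := by linarith
  have hUs : ∀ j, U ^ j ≤ U ^ (j + 1) := fun j => pow_le_pow_right₀ hU1 (Nat.le_succ j)
  have bv : ∀ j : ℕ, ∀ θ ∈ Icc r (2 * Real.pi - r), ‖v j θ‖ ≤ 2 * j * U ^ (j + 1) := by
    intro j θ hθ
    simp only [hv, norm_mul, norm_neg, norm_I, one_mul, Complex.norm_natCast]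
    have := norm_add_le (u θ ^ j) (u θ ^ (j + 1))
    have h1 := bu j θ hθ
    have h2 := bu (j + 1) θ hθ
    have h3 := hUs j
    calc (j : ℝ) * ‖u θ ^ j + u θ ^ (j + 1)‖ ≤ j * (2 * U ^ (j + 1)) := by gcongr; linarith
      _ = _ := by ring
  have hk0 : (0 : ℝ) ≤ k := Nat.cast_nonneg k
  have hmain := norm_integral_mul_exp_le_div_sq (g := fun θ => W θ * u θ ^ k)
    (g₁ := fun θ => W₁ θ * u θ ^ k + W θ * v k θ)
    (g₂ := fun θ => (W₂ θ * u θ ^ k + W₁ θ * v k θ) +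
      (W₁ θ * v k θ + W θ * (-I * k * (v k θ + v (k + 1) θ))))
    (α := r) (β := 2 * Real.pi - r) (M := M) hle
    (fun θ hθ => (dW θ).fun_mul (dv k θ hθ))
    (fun θ hθ => ((dW₁ θ).fun_mul (dv k θ hθ)).fun_add ((dW θ).fun_mul (dv' k θ hθ)))
    ?_ ?_ ?_ ?_ ?_ ?_ ?_ l
  · have hM0 : 0 ≤ M := le_trans (by positivity) hM
    refine le_trans hmain ?_
    gcongr
    linarith
  · have := cv k
    have := cv (k + 1)
    fun_prop
  · simp [hW]
  · simp only [hW, Real.cos_two_pi_sub]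
    simp
  · simp [hW, hW₁]
  · simp only [hW, hW₁, Real.cos_two_pi_sub]
    simp
  · intro θ hθ
    rw [norm_mul]
    refine le_trans ?_ hM
    have h1 := bu k θ hθ
    have h2 : ‖W θ‖ * ‖u θ ^ k‖ ≤ 4 * U ^ k := mul_le_mul (bW θ) h1 (norm_nonneg _) (by norm_num)
    have : 0 ≤ 16 * k * U ^ (k + 1) + 16 * k * (k + 1) * U ^ (k + 2) + 2 * U ^ k := by positivity
    linarith
  · intro θ hθ
    refine le_trans ?_ hM
    have h1 : ‖W₂ θ * u θ ^ k‖ ≤ 6 * U ^ k := by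
      rw [norm_mul]; exact mul_le_mul (bW₂ θ) (bu k θ hθ) (norm_nonneg _) (by norm_num)
    have h2 : ‖W₁ θ * v k θ‖ ≤ 4 * (2 * k * U ^ (k + 1)) := by
      rw [norm_mul]; exact mul_le_mul (bW₁ θ) (bv k θ hθ) (norm_nonneg _) (by norm_num)
    have h3 : ‖W θ * (-I * k * (v k θ + v (k + 1) θ))‖ ≤ 16 * k * (k + 1) * U ^ (k + 2) := by
      have h4 := bv k θ hθ
      have h5 := bv (k + 1) θ hθ
      have h6 : ‖v k θ + v (k + 1) θ‖ ≤ 4 * (k + 1) * U ^ (k + 2) := by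
        refine (norm_add_le _ _).trans ?_
        have h7 : 2 * (k : ℝ) * U ^ (k + 1) ≤ 2 * (k + 1) * U ^ (k + 2) := by
          have := hUs (k + 1)
          gcongr
          linarith
        push_cast at h5
        rw [show k + 1 + 1 = k + 2 from rfl] at h5
        linarith
      simp only [norm_mul, norm_neg, norm_I, one_mul, Complex.norm_natCast]
      calc ‖W θ‖ * (k * ‖v k θ + v (k + 1) θ‖) ≤ 4 * (k * (4 * (k + 1) * U ^ (k + 2))) := by
            gcongr
            exact bW θ
        _ = _ := by ring
    have h4 := norm_add_le (W₂ θ * u θ ^ k + W₁ θ * v k θ)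
      (W₁ θ * v k θ + W θ * (-I * k * (v k θ + v (k + 1) θ)))
    have h5 := norm_add_le (W₂ θ * u θ ^ k) (W₁ θ * v k θ)
    have h6 := norm_add_le (W₁ θ * v k θ) (W θ * (-I * k * (v k θ + v (k + 1) θ)))
    linarith

theorem exists_kernelCoeff_bound {r : ℝ} (hr : 0 < r) (hr2 : r ≤ Real.pi) :
    ∃ C U : ℝ, 0 < C ∧ 1 ≤ U ∧ ∀ k l, ‖kernelCoeff r k l‖ ≤ C * U ^ k * (1 / (1 + (l : ℝ) ^ 2)) := by
  have cu : ContinuousOn (fun θ : ℝ => (exp (θ * I) - 1)⁻¹) (Icc r (2 * Real.pi - r)) := by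
    refine ContinuousOn.inv₀ (Continuous.continuousOn (by fun_prop)) fun θ hθ => ?_
    exact exp_mul_I_sub_one_ne_zero hr hθ
  obtain ⟨U₀, hU₀⟩ := isCompact_Icc.exists_bound_of_continuousOn cu
  obtain ⟨U, hU1, hU⟩ : ∃ U : ℝ, 1 ≤ U ∧
      ∀ θ ∈ Icc r (2 * Real.pi - r), ‖(exp (θ * I) - 1)⁻¹‖ ≤ U :=
    ⟨max 1 U₀, le_max_left _ _, fun θ hθ => (hU₀ θ hθ).trans (le_max_right _ _)⟩
  refine ⟨38 * U ^ 2 * 2 * (2 * Real.pi), 4 * U, by positivity, by linarith, fun k l => ?_⟩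
  have hk4 : ((k : ℝ) + 1) ^ 2 ≤ 4 ^ k := by
    have : k + 1 ≤ 2 ^ k := Nat.lt_two_pow_self
    have h1 : (k : ℝ) + 1 ≤ 2 ^ k := by exact_mod_cast this
    calc ((k : ℝ) + 1) ^ 2 ≤ (2 ^ k) ^ 2 := by gcongr
      _ = 4 ^ k := by rw [← pow_mul, mul_comm, pow_mul]; norm_num
  have hU0 : 0 < U := by linarith
  have h1 : U ^ k ≤ U ^ (k + 2) := pow_le_pow_right₀ hU1 (by omega)
  have h2 : U ^ (k + 1) ≤ U ^ (k + 2) := pow_le_pow_right₀ hU1 (by omega)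
  have hk0 : (0 : ℝ) ≤ k := Nat.cast_nonneg k
  refine (norm_kernelCoeff_le_of_bound hr hr2 hU1 hU k l (M := 38 * U ^ 2 * (4 * U) ^ k) ?_).trans
    (le_of_eq (by ring))
  calc 6 * U ^ k + 16 * k * U ^ (k + 1) + 16 * k * (k + 1) * U ^ (k + 2)
      ≤ 6 * U ^ (k + 2) + 16 * k * U ^ (k + 2) + 16 * k * (k + 1) * U ^ (k + 2) := by gcongr
    _ = (6 + 16 * k + 16 * k * (k + 1)) * U ^ (k + 2) := by ring
    _ ≤ (38 * ((k : ℝ) + 1) ^ 2) * U ^ (k + 2) := by gcongr; nlinarith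
    _ ≤ (38 * 4 ^ k) * U ^ (k + 2) := by gcongr
    _ = _ := by rw [mul_pow]; ring

theorem norm_kernelCoeff_zero_le {r : ℝ} (hr : 0 < r) (hr2 : r ≤ Real.pi) (l : ℤ) :
    ‖kernelCoeff r 0 l‖ ≤ 24 * Real.pi * (1 / (1 + (l : ℝ) ^ 2)) := by
  have cu : ContinuousOn (fun θ : ℝ => (exp (θ * I) - 1)⁻¹) (Icc r (2 * Real.pi - r)) := by
    refine ContinuousOn.inv₀ (Continuous.continuousOn (by fun_prop)) fun θ hθ => ?_
    exact exp_mul_I_sub_one_ne_zero hr hθ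
  obtain ⟨U₀, hU₀⟩ := isCompact_Icc.exists_bound_of_continuousOn cu
  refine (norm_kernelCoeff_le_of_bound hr hr2 (le_max_left 1 U₀)
    (fun θ hθ => (hU₀ θ hθ).trans (le_max_right _ _)) 0 l (M := 6) (by simp)).trans (le_of_eq ?_)
  ring

theorem kernelCoeff_succ_sub {r : ℝ} (hr : 0 < r) (hr2 : r ≤ Real.pi) (k : ℕ) (l : ℤ) :
    kernelCoeff r (k + 1) (l - 1) - kernelCoeff r (k + 1) l = kernelCoeff r k l := by
  have hle : r ≤ 2 * Real.pi - r := by linarith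
  have cu : ContinuousOn (fun θ : ℝ => (exp (θ * I) - 1)⁻¹) (uIcc r (2 * Real.pi - r)) := by
    rw [uIcc_of_le hle]
    refine ContinuousOn.inv₀ (Continuous.continuousOn (by fun_prop)) fun θ hθ => ?_
    exact exp_mul_I_sub_one_ne_zero hr hθ
  unfold kernelCoeff kernelSymbol
  rw [← intervalIntegral.integral_sub]
  · refine intervalIntegral.integral_congr fun θ hθ => ?_
    rw [uIcc_of_le hle] at hθ
    have h0 := exp_mul_I_sub_one_ne_zero hr hθ
    have h1 : exp (-(((l - 1 : ℤ) : ℂ) * θ * I)) = exp (-(l * θ * I)) * exp (θ * I) := by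
      rw [← Complex.exp_add]
      congr 1
      push_cast
      ring
    simp only [h1]
    generalize exp (θ * I) = v at *
    rw [pow_succ (v - 1)⁻¹ k]
    have hv : (v - 1)⁻¹ * (v - 1) = 1 := inv_mul_cancel₀ h0
    linear_combination (((Real.cos r - Real.cos θ) ^ 2 : ℝ) : ℂ) * (v - 1)⁻¹ ^ k *
      exp (-(l * θ * I)) * hv
  · refine ContinuousOn.intervalIntegrable ?_
    fun_prop
  · refine ContinuousOn.intervalIntegrable ?_
    fun_prop

theorem tendsto_kernelCoeff_zero (l : ℤ) :
    Tendsto (fun r => kernelCoeff r 0 l) (𝓝[>] 0) (𝓝 (kernelCoeff 0 0 l)) := by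
  have hf : Continuous (uncurry fun (r θ : ℝ) =>
      (((Real.cos r - Real.cos θ) ^ 2 : ℝ) : ℂ) * exp (-(l * θ * I))) := by
    unfold uncurry
    fun_prop
  have h : Continuous fun r => kernelCoeff r 0 l := by
    have h1 := intervalIntegral.continuous_parametric_intervalIntegral_of_continuous
      (μ := MeasureTheory.volume) (a₀ := 0) hf
      (s := fun r => 2 * Real.pi - r) (by fun_prop)
    have h2 := intervalIntegral.continuous_parametric_intervalIntegral_of_continuous
      (μ := MeasureTheory.volume) (a₀ := 0) hf
      (s := fun r => r) (by fun_prop)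
    refine (h1.sub h2).congr fun r => ?_
    have hi : ∀ a b, IntervalIntegrable (fun θ : ℝ =>
        (((Real.cos r - Real.cos θ) ^ 2 : ℝ) : ℂ) * exp (-(l * θ * I))) MeasureTheory.volume a b :=
      fun a b => Continuous.intervalIntegrable (by fun_prop) a b
    simp only [Pi.sub_apply]
    rw [intervalIntegral.integral_interval_sub_left (hi _ _) (hi _ _)]
    simp [kernelCoeff, kernelSymbol]
  exact (h.tendsto 0).mono_left nhdsWithin_le_nhds

theorem integral_exp_int_mul_I (j : ℤ) :
    ∫ θ in (0 : ℝ)..(2 * Real.pi), exp (j * I * θ) = if j = 0 then (2 * Real.pi : ℂ) else 0 := by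
  split_ifs with hj
  · simp [hj]
  · have hc : (j : ℂ) * I ≠ 0 := mul_ne_zero (by exact_mod_cast hj) I_ne_zero
    rw [integral_exp_mul_complex hc]
    have : (j : ℂ) * I * ((2 * Real.pi : ℝ) : ℂ) = j * (2 * Real.pi * I) := by push_cast; ring
    rw [this, Complex.exp_int_mul_two_pi_mul_I]
    simp

theorem kernelCoeff_zero_zero (l : ℤ) : kernelCoeff 0 0 l = Real.pi / 2 *
    ((if 2 - l = 0 then 1 else 0) - 4 * (if 1 - l = 0 then 1 else 0) + 6 * (if -l = 0 then 1 else 0)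
      - 4 * (if -1 - l = 0 then 1 else 0) + (if -2 - l = 0 then 1 else 0)) := by
  have h : ∀ θ : ℝ, kernelSymbol 0 0 θ * exp (-(l * θ * I)) =
      1 / 4 * (exp ((2 - l : ℤ) * I * θ) - 4 * exp ((1 - l : ℤ) * I * θ)
        + 6 * exp ((-l : ℤ) * I * θ) - 4 * exp ((-1 - l : ℤ) * I * θ)
        + exp ((-2 - l : ℤ) * I * θ)) := by
    intro θ
    have e1 : ∀ j : ℤ, exp ((j - l : ℤ) * I * θ) = exp (-(l * θ * I)) * exp (θ * I) ^ j := by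
      intro j
      rw [← Complex.exp_int_mul, ← Complex.exp_add]
      congr 1
      push_cast
      ring
    have hz : ((-l : ℤ) : ℂ) = ((0 - l : ℤ) : ℂ) := by simp
    rw [hz, e1, e1, e1, e1, e1]
    simp only [kernelSymbol, Real.cos_zero, pow_zero, mul_one]
    push_cast
    have hv : exp (θ * I) ≠ 0 := Complex.exp_ne_zero _
    have hcos : Complex.cos θ = (exp (θ * I) + (exp (θ * I))⁻¹) / 2 := by
      rw [← Complex.exp_neg, Complex.cos, neg_mul]
    rw [hcos, zpow_neg_one]
    set v := exp (θ * I)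
    have h2 : v ^ (-2 : ℤ) = (v ^ 2)⁻¹ := by
      rw [zpow_neg]; rfl
    have h3 : v ^ (2 : ℤ) = v ^ 2 := rfl
    rw [h2, h3, zpow_one, zpow_zero]
    field_simp
    ring
  unfold kernelCoeff
  simp only [h, sub_zero]
  have hi : ∀ j : ℤ, IntervalIntegrable (fun θ : ℝ => exp (j * I * θ)) MeasureTheory.volume 0
      (2 * Real.pi) := fun j => Continuous.intervalIntegrable (by fun_prop) _ _
  rw [intervalIntegral.integral_const_mul, intervalIntegral.integral_add,
    intervalIntegral.integral_sub, intervalIntegral.integral_add, intervalIntegral.integral_sub,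
    intervalIntegral.integral_const_mul, intervalIntegral.integral_const_mul,
    intervalIntegral.integral_const_mul]
  · simp only [integral_exp_int_mul_I]
    split_ifs <;> ring
  all_goals exact Continuous.intervalIntegrable (by fun_prop) _ _

end FourierKernel

section InnerRegion

variable {E : Type*} [NormedAddCommGroup E] [NormedSpace ℂ E]

/-- A region internally tangent at `p` to the hyperplane `{Re ℓ(z - p) = 0}`. -/
def innerRegion (p : E) (ℓ : E →L[ℂ] ℂ) (C : ℝ) : Set E :=
  {z | C * ‖z - p‖ ^ 2 < (-ℓ (z - p)).re}

theorem isOpen_innerRegion (p : E) (ℓ : E →L[ℂ] ℂ) (C : ℝ) : IsOpen (innerRegion p ℓ C) :=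
  isOpen_lt (by fun_prop) (by fun_prop)

theorem add_inv_smul_mem_innerRegion {p : E} {ℓ : E →L[ℂ] ℂ} {C : ℝ} (hC : 0 ≤ C) {a : E}
    (ha : ℓ a = -1) {y : ℂ} (hy : C * ‖a‖ ^ 2 < y.re) : p + y⁻¹ • a ∈ innerRegion p ℓ C := by
  have hy0 : 0 < y.re := lt_of_le_of_lt (by positivity) hy
  have hn : 0 < normSq y := normSq_pos.2 fun h => by simp [h] at hy0
  simp only [innerRegion, mem_ofPred_eq, add_sub_cancel_left, map_smul, ha, smul_eq_mul, mul_neg,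
    mul_one, neg_neg, inv_re, norm_smul, norm_inv]
  rw [mul_pow, inv_pow, ← normSq_eq_norm_sq, lt_div_iff₀ hn]
  calc C * ((normSq y)⁻¹ * ‖a‖ ^ 2) * normSq y = C * ‖a‖ ^ 2 := by field_simp
    _ < y.re := hy

theorem exists_eq_add_inv_smul_of_mem_innerRegion {p : E} {ℓ : E →L[ℂ] ℂ} {C : ℝ} (hC : 0 ≤ C)
    {z : E} (hz : z ∈ innerRegion p ℓ C) :
    ∃ (a : E) (y : ℂ), ℓ a = -1 ∧ C * ‖a‖ ^ 2 < y.re ∧ y⁻¹ = -ℓ (z - p) ∧ z = p + y⁻¹ • a := by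
  have hz' : C * ‖z - p‖ ^ 2 < (-ℓ (z - p)).re := hz
  set x := -ℓ (z - p) with hx
  have hx0 : 0 < x.re := lt_of_le_of_lt (by positivity) hz'
  have hxne : x ≠ 0 := fun h => by simp [h] at hx0
  refine ⟨x⁻¹ • (z - p), x⁻¹, ?_, ?_, inv_inv x, ?_⟩
  · have : ℓ (z - p) = -x := by rw [hx, neg_neg]
    rw [map_smul, this, smul_eq_mul, mul_neg, inv_mul_cancel₀ hxne]
  · have hn : 0 < normSq x := normSq_pos.2 hxne
    rw [norm_smul, norm_inv, mul_pow, inv_pow, ← normSq_eq_norm_sq, inv_re, lt_div_iff₀ hn]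
    calc C * ((normSq x)⁻¹ * ‖z - p‖ ^ 2) * normSq x = C * ‖z - p‖ ^ 2 := by field_simp
      _ < x.re := hz'
  · rw [inv_inv, smul_smul, mul_inv_cancel₀ hxne, one_smul, add_sub_cancel]

theorem exists_ball_subset_innerRegion (p : E) (ℓ : E →L[ℂ] ℂ) {C : ℝ} (hC : 0 ≤ C) {a : E}
    (ha : ℓ a = -1) : ∃ c > 0, ∃ t₀ > 0, ∀ t : ℝ, 0 < t → t < t₀ →
      ball (p + (t : ℂ) • a) (c * t) ⊆ innerRegion p ℓ C := by
  set c : ℝ := 1 / (2 * (‖ℓ‖ + 1)) with hc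
  have hc0 : 0 < c := by positivity
  refine ⟨c, hc0, 1 / (2 * (C + 1) * (‖a‖ + c) ^ 2), by positivity, fun t ht ht' z hz => ?_⟩
  obtain ⟨h, rfl⟩ : ∃ h, z = p + ((t : ℂ) • a + h) := ⟨z - p - (t : ℂ) • a, by abel⟩
  have hh : ‖h‖ < c * t := by
    rw [mem_ball, dist_eq_norm] at hz
    rwa [show p + ((t : ℂ) • a + h) - (p + (t : ℂ) • a) = h by abel] at hz
  simp only [innerRegion, mem_ofPred_eq, add_sub_cancel_left, map_add, map_smul, ha, smul_eq_mul,
    mul_neg, mul_one, neg_add, neg_neg, add_re, neg_re, ofReal_re]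
  have h1 : (ℓ h).re ≤ t / 2 := by
    calc (ℓ h).re ≤ ‖ℓ h‖ := re_le_norm _
      _ ≤ ‖ℓ‖ * ‖h‖ := ℓ.le_opNorm h
      _ ≤ (‖ℓ‖ + 1) * (c * t) := by gcongr; linarith
      _ = t / 2 := by rw [hc]; field_simp
  have h2 : ‖(t : ℂ) • a + h‖ ≤ (‖a‖ + c) * t := by
    refine (norm_add_le _ _).trans ?_
    rw [norm_smul, Complex.norm_real, Real.norm_of_nonneg ht.le]
    linarith
  have hpos : 0 < (‖a‖ + c) ^ 2 := by positivity
  have h3 : C * ‖(t : ℂ) • a + h‖ ^ 2 < t / 2 := by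
    calc C * ‖(t : ℂ) • a + h‖ ^ 2 ≤ C * ((‖a‖ + c) * t) ^ 2 := by gcongr
      _ ≤ (C + 1) * (‖a‖ + c) ^ 2 * t * t := by nlinarith [mul_pos hpos (mul_pos ht ht)]
      _ < t / 2 := by
        rw [lt_div_iff₀ (by positivity)] at ht'
        nlinarith
  linarith

end InnerRegion

section Decay

variable {E G : Type*} [NormedAddCommGroup E] [NormedSpace ℂ E] [NormedAddCommGroup G]
  [NormedSpace ℂ G]

theorem norm_le_of_difference_tower {B : ℕ → E → G} {F : E → E} {w : E} {r δ : ℝ} (hr : 0 < r)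
    (hδ : δ < r) (k : ℕ) {M : ℝ}
    (hB : ∀ j, DifferentiableOn ℂ (B j) (ball w ((k + 1) * r)))
    (hdiff : ∀ j, ∀ z ∈ ball w ((k + 1) * r), B (j + 1) (F z) - B (j + 1) z = B j z)
    (hF : ∀ z ∈ ball w ((k + 1) * r), ‖F z - z‖ ≤ δ)
    (hM : ∀ z ∈ ball w ((k + 1) * r), ‖B k z‖ ≤ M) :
    ‖B 0 w‖ ≤ M * (2 * δ / r) ^ k := by
  induction k generalizing M with
  | zero => simpa using hM w (mem_ball_self (by simpa using hr))
  | succ k ih =>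
    have hsub : ball w ((k + 1) * r) ⊆ ball w (((k + 1 : ℕ) + 1) * r) := by
      refine ball_subset_ball ?_
      push_cast
      linarith
    have := ih (M := M * (2 * δ / r)) (fun j => (hB j).mono hsub) (fun j z hz => hdiff j z (hsub hz))
      (fun z hz => hF z (hsub hz)) ?_
    · refine this.trans (le_of_eq ?_)
      ring
    · intro z hz
      have hsubz : ball z r ⊆ ball w (((k + 1 : ℕ) + 1) * r) := by
        refine ball_subset_ball' ?_
        have := mem_ball.1 hz
        push_cast
        linarith
      have hFz : F z ∈ ball z r := by
        rw [mem_ball, dist_eq_norm]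
        exact (hF z (hsub hz)).trans_lt hδ
      rw [← hdiff k z (hsub hz)]
      have h := Complex.dist_le_div_mul_dist_of_mapsTo_ball (f := B (k + 1)) (c := z) (R₁ := r)
        (R₂ := 2 * M) ((hB (k + 1)).mono hsubz) (fun y hy => ?_) hFz
      · rw [dist_eq_norm, dist_eq_norm] at h
        refine h.trans ?_
        have hM0 : 0 ≤ M := (norm_nonneg _).trans (hM z (hsub hz))
        calc 2 * M / r * ‖F z - z‖ ≤ 2 * M / r * δ := by
              gcongr
              exact hF z (hsub hz)
          _ = _ := by ring
      · rw [mem_closedBall, dist_eq_norm]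
        have := norm_sub_le (B (k + 1) y) (B (k + 1) z)
        linarith [hM y (hsubz hy), hM z (hsub hz)]

theorem eventually_norm_le_exp_of_difference_tower {Ω : Set E}
    {F : E → E} {p a : E} {ℓ : E →L[ℂ] ℂ} {C₀ : ℝ} (hC₀ : 0 ≤ C₀) (hV : innerRegion p ℓ C₀ ⊆ Ω)
    (ha : ℓ a = -1)
    (hflat : ∀ ε > 0, ∃ δ > 0, ∀ z ∈ Ω, ‖z - p‖ < δ → ‖F z - z‖ ≤ ε * ‖z - p‖ ^ 2)
    {B : ℕ → E → G} (hB : ∀ j, DifferentiableOn ℂ (B j) Ω)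
    (hdiff : ∀ j, ∀ z ∈ Ω, B (j + 1) (F z) - B (j + 1) z = B j z)
    {K U : ℝ} (hU : 1 ≤ U) (hK0 : 0 ≤ K) (hK : ∀ j, ∀ z ∈ Ω, ‖B j z‖ ≤ K * U ^ j)
    {Y L : ℝ} (hYpos : 0 ≤ Y) (hL1 : 1 ≤ L) :
    ∀ᶠ x : ℝ in atTop, ‖B 0 (p + ((x : ℂ) + Y)⁻¹ • a)‖ ≤
      K * Real.exp 1 * Real.exp (-L * x) := by
  obtain ⟨c, hc, t₀, ht₀, hball⟩ := exists_ball_subset_innerRegion p ℓ hC₀ ha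
  set A : ℝ := ‖a‖ + c with hA
  have hA0 : 0 < A := by positivity
  have hL0 : 0 < L := by linarith
  set ε : ℝ := c / (4 * U * A ^ 2 * L) * Real.exp (-1) with hε
  have hU0 : 0 < U := by linarith
  have hε0 : 0 < ε := by positivity
  have hε1 : U * (4 * ε * A ^ 2 * L / c) = Real.exp (-1) := by
    rw [hε]; field_simp
  obtain ⟨δ, hδ, hFδ⟩ := hflat ε hε0
  filter_upwards [eventually_gt_atTop 0, eventually_gt_atTop (1 / t₀),
    eventually_gt_atTop (A / δ), eventually_gt_atTop 1] with x hx0 hx1 hx2 hx4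
  set t : ℝ := (x + Y)⁻¹ with ht
  have hxY : 0 < x + Y := by linarith
  have ht0 : 0 < t := inv_pos.2 hxY
  have htxy : t * (x + Y) = 1 := inv_mul_cancel₀ hxY.ne'
  have htt : t < t₀ := by
    rw [ht, inv_lt_comm₀ hxY ht₀, ← one_div]
    linarith
  have htδ : A * t < δ := by
    rw [div_lt_iff₀ hδ] at hx2
    rw [ht, ← div_eq_mul_inv, div_lt_iff₀ hxY]
    nlinarith
  have hcast : ((x : ℂ) + Y)⁻¹ = (t : ℂ) := by rw [ht]; push_cast; rfl
  have hLt : 1 ≤ L * (x + Y) := by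
    nlinarith
  set k : ℕ := ⌊L * (x + Y)⌋₊ with hk
  have hk1 : (k : ℝ) ≤ L * (x + Y) := Nat.floor_le (by positivity)
  have hk2 : L * (x + Y) < k + 1 := Nat.lt_floor_add_one _
  have hk3 : (k : ℝ) + 1 ≤ 2 * (L * (x + Y)) := by linarith
  set r : ℝ := c * t / (k + 1) with hr
  have hr0 : 0 < r := by positivity
  have hkr : ((k : ℝ) + 1) * r = c * t := by rw [hr]; field_simp
  set w := p + (t : ℂ) • a with hw
  have hsub : ball w (((k : ℝ) + 1) * r) ⊆ Ω := by
    rw [hkr]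
    exact (hball t ht0 htt).trans hV
  have hdist : ∀ z ∈ ball w (((k : ℝ) + 1) * r), ‖z - p‖ ≤ A * t := by
    intro z hz
    rw [hkr, mem_ball, dist_eq_norm] at hz
    have h1 : z - p = (z - w) + (t : ℂ) • a := by rw [hw]; abel
    have h2 := norm_add_le (z - w) ((t : ℂ) • a)
    rw [norm_smul, Complex.norm_real, Real.norm_of_nonneg ht0.le] at h2
    rw [h1, hA]
    linarith
  have hkey := norm_le_of_difference_tower (B := B) (F := F) (w := w) (r := r)
    (δ := ε * (A * t) ^ 2) hr0 ?_ k (M := K * U ^ k)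
    (fun j => (hB j).mono hsub) (fun j z hz => hdiff j z (hsub hz))
    (fun z hz => ?_) (fun z hz => hK k z (hsub hz))
  · have hq : U * (2 * (ε * (A * t) ^ 2) / r) ≤ Real.exp (-1) := by
      rw [← hε1]
      refine mul_le_mul_of_nonneg_left ?_ hU0.le
      calc 2 * (ε * (A * t) ^ 2) / r = 2 * ε * A ^ 2 * t * (k + 1) / c := by
            rw [hr]; field_simp
        _ ≤ 2 * ε * A ^ 2 * t * (2 * (L * (x + Y))) / c := by gcongr
        _ = 4 * ε * A ^ 2 * L * (t * (x + Y)) / c := by ring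
        _ = _ := by rw [htxy, mul_one]
    rw [hcast]
    calc ‖B 0 w‖ ≤ K * U ^ k * (2 * (ε * (A * t) ^ 2) / r) ^ k := hkey
      _ = K * (U * (2 * (ε * (A * t) ^ 2) / r)) ^ k := by rw [mul_pow U, mul_assoc]
      _ ≤ K * Real.exp (-1) ^ k := by gcongr
      _ = K * Real.exp (-k) := by rw [← Real.exp_nat_mul]; ring_nf
      _ ≤ K * Real.exp (1 + -L * x) := by
          gcongr
          nlinarith
      _ = _ := by rw [Real.exp_add]; ring
  · have h4 : Real.exp (-1) < 1 := by rw [Real.exp_lt_one_iff]; norm_num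
    have h5 : 4 * ε * A ^ 2 * L / c < 1 := by
      have h6 : 0 < 4 * ε * A ^ 2 * L / c := by positivity
      nlinarith
    rw [div_lt_one hc] at h5
    rw [hr, lt_div_iff₀ (by positivity)]
    calc ε * (A * t) ^ 2 * (k + 1) ≤ ε * (A * t) ^ 2 * (2 * (L * (x + Y))) := by gcongr
      _ = 2 * ε * A ^ 2 * L * t * (t * (x + Y)) := by ring
      _ = 2 * ε * A ^ 2 * L * t := by rw [htxy, mul_one]
      _ < c * t := by nlinarith [mul_pos (mul_pos (mul_pos hε0 (pow_pos hA0 2)) hL0) ht0]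
  · have hz' := hdist z hz
    refine (hFδ z (hsub hz) (hz'.trans_lt htδ)).trans ?_
    gcongr

theorem eq_zero_on_innerRegion_of_difference_tower [CompleteSpace G] {Ω : Set E}
    {F : E → E} {p : E} {ℓ : E →L[ℂ] ℂ} {C₀ : ℝ} (hC₀ : 0 ≤ C₀) (hV : innerRegion p ℓ C₀ ⊆ Ω)
    (hflat : ∀ ε > 0, ∃ δ > 0, ∀ z ∈ Ω, ‖z - p‖ < δ → ‖F z - z‖ ≤ ε * ‖z - p‖ ^ 2)
    {B : ℕ → E → G} (hB : ∀ j, DifferentiableOn ℂ (B j) Ω)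
    (hdiff : ∀ j, ∀ z ∈ Ω, B (j + 1) (F z) - B (j + 1) z = B j z)
    {K U : ℝ} (hU : 1 ≤ U) (hK : ∀ j, ∀ z ∈ Ω, ‖B j z‖ ≤ K * U ^ j) :
    ∀ z ∈ innerRegion p ℓ C₀, B 0 z = 0 := by
  intro z hz
  obtain ⟨a, y, ha, hay, -, rfl⟩ := exists_eq_add_inv_smul_of_mem_innerRegion hC₀ hz
  obtain ⟨Y, hY1, hY2⟩ := exists_between hay
  have hYpos : 0 < Y := lt_of_le_of_lt (by positivity) hY1
  have hK0 : 0 ≤ K := by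
    have := (norm_nonneg _).trans (hK 0 _ (hV hz))
    simpa using this
  set f : ℂ → G := fun s => B 0 (p + (s + Y)⁻¹ • a) with hf
  have hmem : ∀ s : ℂ, 0 ≤ s.re → p + (s + Y)⁻¹ • a ∈ Ω := fun s hs =>
    hV (add_inv_smul_mem_innerRegion hC₀ ha (by simp; linarith))
  have hne : ∀ s : ℂ, 0 ≤ s.re → s + Y ≠ 0 := fun s hs h => by
    have := congrArg Complex.re h
    simp at this
    linarith
  have hclos : closure {z : ℂ | 0 < z.re} = {z : ℂ | 0 ≤ z.re} := Complex.closure_setOfPred_lt_re 0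
  have hd : DiffContOnCl ℂ f {z | 0 < z.re} := by
    refine DifferentiableOn.diffContOnCl ?_
    rw [hclos]
    refine (hB 0).comp ?_ fun s hs => hmem s hs
    intro s hs
    refine DifferentiableAt.differentiableWithinAt ?_
    have := hne s hs
    fun_prop (disch := assumption)
  have hbdd : ∀ s : ℂ, 0 ≤ s.re → ‖f s‖ ≤ K := fun s hs => by
    simpa using hK 0 _ (hmem s hs)
  have hzero : EqOn f 0 {z | 0 ≤ z.re} := by
    refine PhragmenLindelof.eq_zero_on_right_half_plane_of_superexponential_decay hd
      ⟨1, by norm_num, 0, ?_⟩ ?_ ⟨K, fun x => hbdd _ (by simp)⟩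
    · refine Asymptotics.IsBigO.of_bound K ?_
      have : {z : ℂ | 0 < z.re} ∈ Bornology.cobounded ℂ ⊓ 𝓟 {z : ℂ | 0 < z.re} :=
        mem_inf_of_right (mem_principal_self _)
      filter_upwards [this] with s hs
      simpa using hbdd s (le_of_lt hs)
    · intro N
      set L : ℝ := N + 1 with hL
      have hL1 : 1 ≤ L := by rw [hL]; linarith [(Nat.cast_nonneg N : (0 : ℝ) ≤ N)]
      have key := eventually_norm_le_exp_of_difference_tower hC₀ hV ha hflat hB hdiff hU hK0 hK
        hYpos.le hL1
      have hlim : Tendsto (fun x : ℝ => K * Real.exp 1 * Real.exp (-x)) atTop (𝓝 0) := by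
        simpa using Real.tendsto_exp_neg_atTop_nhds_zero.const_mul (K * Real.exp 1)
      refine squeeze_zero' (.of_forall fun x => by positivity) ?_ hlim
      filter_upwards [key] with x hx
      calc Real.exp x ^ N * ‖f x‖ ≤ Real.exp x ^ N * (K * Real.exp 1 * Real.exp (-L * x)) := by
            gcongr
        _ = K * Real.exp 1 * (Real.exp (N * x) * Real.exp (-L * x)) := by
            rw [← Real.exp_nat_mul]; ring
        _ = K * Real.exp 1 * Real.exp (-x) := by
            rw [← Real.exp_add, hL]; ring_nf
  have := hzero (show (y - Y) ∈ {z : ℂ | 0 ≤ z.re} by simp; linarith)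
  simpa [hf] using this

end Decay

section TwoSided

theorem Int.eq_of_bounded_of_second_difference {V : Type*} [NormedAddCommGroup V] [NormedSpace ℂ V]
    {s : ℤ → V} {B : ℝ} (hB : ∀ m, ‖s m‖ ≤ B)
    (h : ∀ m, s (m + 2) - s (m + 1) = s (m + 1) - s m) (m : ℤ) : s (m + 1) - s m = 0 := by
  set e := s (m + 1) - s m with he
  have hstep : ∀ j : ℕ, s (m + j + 1) - s (m + j) = e := by
    intro j
    induction j with
    | zero => simp [he]
    | succ j ih =>
      rw [← ih, ← h (m + j)]
      push_cast
      congr 2 <;> ring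
  have hsum : ∀ j : ℕ, s (m + j) = s m + (j : ℂ) • e := by
    intro j
    induction j with
    | zero => simp
    | succ j ih =>
      have h1 := hstep j
      rw [sub_eq_iff_eq_add, ih] at h1
      push_cast
      rw [← add_assoc, h1]
      module
  by_contra hne
  have hpos : 0 < ‖e‖ := norm_pos_iff.2 hne
  obtain ⟨j, hj⟩ := exists_nat_gt (2 * B / ‖e‖)
  rw [div_lt_iff₀ hpos] at hj
  have h1 : (j : ℂ) • e = s (m + j) - s m := by rw [hsum j]; abel
  have h2 := congrArg norm h1
  rw [norm_smul, Complex.norm_natCast] at h2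
  have h3 := norm_sub_le (s (m + j)) (s m)
  linarith [hB (m + j), hB m]

theorem Int.eq_of_bounded_of_fourth_difference {V : Type*} [NormedAddCommGroup V]
    [NormedSpace ℂ V] {s : ℤ → V} {B : ℝ} (hB : ∀ m, ‖s m‖ ≤ B)
    (h : ∀ m, s (m + 4) - (4 : ℂ) • s (m + 3) + (6 : ℂ) • s (m + 2) - (4 : ℂ) • s (m + 1) + s m = 0)
    (m : ℤ) : s (m + 1) - s m = 0 := by
  have hB1 : ∀ m, ‖s (m + 1) - s m‖ ≤ 2 * B := fun m => by
    have := norm_sub_le (s (m + 1)) (s m)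
    linarith [hB (m + 1), hB m]
  have hB2 : ∀ m, ‖(s (m + 2) - s (m + 1)) - (s (m + 1) - s m)‖ ≤ 4 * B := fun m => by
    have h1 := norm_sub_le (s (m + 2) - s (m + 1)) (s (m + 1) - s m)
    have h2 := hB1 (m + 1)
    rw [show m + 1 + 1 = m + 2 by ring] at h2
    linarith [hB1 m]
  have e1 : ∀ m : ℤ, m + 1 + 1 = m + 2 := fun m => by ring
  have e2 : ∀ m : ℤ, m + 2 + 1 = m + 3 := fun m => by ring
  have e3 : ∀ m : ℤ, m + 2 + 2 = m + 4 := fun m => by ring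
  have e4 : ∀ m : ℤ, m + 1 + 2 = m + 3 := fun m => by ring
  have h3 := Int.eq_of_bounded_of_second_difference
    (s := fun m => (s (m + 2) - s (m + 1)) - (s (m + 1) - s m)) hB2 (fun m => by
      simp only [e1, e2, e3, e4]
      rw [← sub_eq_zero]
      refine Eq.trans ?_ (h m)
      module)
  have h2 := Int.eq_of_bounded_of_second_difference
    (s := fun m => s (m + 1) - s m) hB1 (fun m => by
      have := h3 m
      simp only [e1, e2, e4] at this ⊢
      rwa [sub_eq_zero] at this)
  refine Int.eq_of_bounded_of_second_difference hB (fun m => ?_) m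
  have := h2 m
  simp only [e1] at this
  rwa [sub_eq_zero] at this

variable {E G : Type*} [NormedAddCommGroup E] [NormedSpace ℂ E] [NormedAddCommGroup G]
  [NormedSpace ℂ G] [FiniteDimensional ℂ E] [FiniteDimensional ℂ G]

/-- A bounded two-sided family with `a_m ∘ F = a_{m+1}` is constant in `m` if `F` is tangent to the
identity to second order at `p`. -/
theorem eq_of_two_sided_family {Ω : Set E} (hΩ : IsOpen Ω) (hc : IsPreconnected Ω)
    {F : E → E} {p : E} {ℓ : E →L[ℂ] ℂ} {C₀ : ℝ} (hC₀ : 0 ≤ C₀) (hV : innerRegion p ℓ C₀ ⊆ Ω)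
    {a₀ : E} (ha₀ : ℓ a₀ = -1)
    (hflat : ∀ ε > 0, ∃ δ > 0, ∀ z ∈ Ω, ‖z - p‖ < δ → ‖F z - z‖ ≤ ε * ‖z - p‖ ^ 2)
    {a : ℤ → E → G} (hF : MapsTo F Ω Ω) (ha : ∀ m, DifferentiableOn ℂ (a m) Ω) {B : ℝ}
    (hB : ∀ m, ∀ z ∈ Ω, ‖a m z‖ ≤ B) (hshift : ∀ m, ∀ z ∈ Ω, a m (F z) = a (m + 1) z) :
    ∀ z ∈ Ω, a 1 z = a 0 z := by
  have : CompleteSpace G := FiniteDimensional.complete ℂ G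
  set V := innerRegion p ℓ C₀ with hVdef
  have hS := summable_one_div_one_add_int_sq
  -- the multipliers annihilate the family on the inner region
  have hvanish : ∀ r : ℝ, 0 < r → r ≤ Real.pi → ∀ m : ℤ, ∀ z ∈ V,
      ∑' l : ℤ, kernelCoeff r 0 l • a (l + m) z = 0 := by
    intro r hr hr2 m
    obtain ⟨C, U, hC, hU, hq⟩ := exists_kernelCoeff_bound hr hr2
    have hbound : ∀ k l, ∀ z ∈ Ω, ‖kernelCoeff r k l • a (l + m) z‖ ≤
        C * U ^ k * B * (1 / (1 + (l : ℝ) ^ 2)) := by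
      intro k l z hz
      rw [norm_smul]
      calc ‖kernelCoeff r k l‖ * ‖a (l + m) z‖
          ≤ (C * U ^ k * (1 / (1 + (l : ℝ) ^ 2))) * B :=
            mul_le_mul (hq k l) (hB _ z hz) (norm_nonneg _) (by positivity)
        _ = _ := by ring
    have hsum : ∀ k, ∀ z ∈ Ω, Summable fun l : ℤ => kernelCoeff r k l • a (l + m) z :=
      fun k z hz => Summable.of_norm_bounded (hS.mul_left _) (fun l => hbound k l z hz)
    set S := ∑' l : ℤ, 1 / (1 + (l : ℝ) ^ 2) with hSdef
    have hnorm : ∀ k, ∀ s : Finset ℤ, ∀ z ∈ Ω,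
        ‖∑ l ∈ s, kernelCoeff r k l • a (l + m) z‖ ≤ C * B * S * U ^ k := by
      intro k s z hz
      refine (norm_sum_le _ _).trans ?_
      have hB0 : 0 ≤ B := (norm_nonneg _).trans (hB 0 z hz)
      calc ∑ l ∈ s, ‖kernelCoeff r k l • a (l + m) z‖
          ≤ ∑ l ∈ s, C * U ^ k * B * (1 / (1 + (l : ℝ) ^ 2)) :=
            Finset.sum_le_sum fun l _ => hbound k l z hz
        _ ≤ ∑' l : ℤ, C * U ^ k * B * (1 / (1 + (l : ℝ) ^ 2)) :=
            (hS.mul_left _).sum_le_tsum _ (fun l _ => by positivity)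
        _ = _ := by rw [tsum_mul_left]; ring
    refine eq_zero_on_innerRegion_of_difference_tower (Ω := Ω) (F := F) hC₀ hV hflat
      (B := fun k z => ∑' l : ℤ, kernelCoeff r k l • a (l + m) z) (K := C * B * S) (U := U)
      (fun k => ?_) (fun k z hz => ?_) hU (fun k z hz => ?_)
    · refine differentiableOn_of_tendsto (l := (atTop : Filter (Finset ℤ)))
        (f := fun s z => ∑ l ∈ s, kernelCoeff r k l • a (l + m) z) hΩ (fun s => ?_)
        (hnorm k) (fun z hz => (hsum k z hz).hasSum)
      exact DifferentiableOn.fun_sum fun l _ => (ha _).const_smul _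
    · have h1 : ∑' l : ℤ, kernelCoeff r (k + 1) l • a (l + m) (F z) =
          ∑' l : ℤ, kernelCoeff r (k + 1) (l - 1) • a (l + m) z := by
        rw [← (Equiv.subRight (1 : ℤ)).tsum_eq]
        refine tsum_congr fun l => ?_
        rw [Equiv.subRight_apply, hshift _ z hz]
        congr 2
        ring
      have hs1 : Summable fun l : ℤ => kernelCoeff r (k + 1) (l - 1) • a (l + m) z := by
        have := hsum (k + 1) (F z) (hF hz)
        rw [← (Equiv.subRight (1 : ℤ)).summable_iff] at this
        refine this.congr fun l => ?_
        simp only [comp_apply, Equiv.subRight_apply, hshift _ z hz]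
        congr 2
        ring
      rw [h1, ← hs1.tsum_sub (hsum (k + 1) z hz)]
      refine tsum_congr fun l => ?_
      rw [← sub_smul, kernelCoeff_succ_sub hr hr2]
    · exact le_of_tendsto (hsum k z hz).hasSum.norm (.of_forall fun s => hnorm k s z hz)
  have hconst : ∀ z ∈ V, a 1 z = a 0 z := by
    intro z hz
    have hzΩ := hV hz
    have hlim : ∀ m : ℤ, ∑' l : ℤ, kernelCoeff 0 0 l • a (l + m) z = 0 := by
      intro m
      have hB0 : 0 ≤ B := (norm_nonneg _).trans (hB 0 z hzΩ)
      have h := tendsto_tsum_of_dominated_convergence (𝓕 := 𝓝[>] (0 : ℝ))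
        (f := fun r l => kernelCoeff r 0 l • a (l + m) z)
        (g := fun l => kernelCoeff 0 0 l • a (l + m) z)
        (bound := fun l : ℤ => 24 * Real.pi * B * (1 / (1 + (l : ℝ) ^ 2)))
        (hS.mul_left _) (fun l => (tendsto_kernelCoeff_zero l).smul_const _) ?_
      · refine tendsto_nhds_unique h ?_
        refine (tendsto_const_nhds (x := (0 : G))).congr' ?_
        filter_upwards [Ioc_mem_nhdsGT Real.pi_pos] with r hr
        exact (hvanish r hr.1 hr.2 m z hz).symm
      · filter_upwards [Ioc_mem_nhdsGT Real.pi_pos] with r hr l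
        rw [norm_smul]
        calc ‖kernelCoeff r 0 l‖ * ‖a (l + m) z‖
            ≤ (24 * Real.pi * (1 / (1 + (l : ℝ) ^ 2))) * B :=
              mul_le_mul (norm_kernelCoeff_zero_le hr.1 hr.2 l) (hB _ z hzΩ) (norm_nonneg _)
                (by positivity)
          _ = _ := by ring
    have h4 := Int.eq_of_bounded_of_fourth_difference (s := fun m => a m z) (B := B)
      (fun m => hB m z hzΩ) (fun m => ?_) 0
    · simpa [sub_eq_zero] using h4
    · have h1 := hlim (m + 2)
      rw [tsum_eq_sum (s := {-2, -1, 0, 1, 2})] at h1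
      · have hpi : (Real.pi / 2 : ℂ) ≠ 0 := by simp [Real.pi_ne_zero]
        simp only [kernelCoeff_zero_zero] at h1
        norm_num at h1
        rw [(by ring : -1 + (m + 2) = m + 1), (by ring : 1 + (m + 2) = m + 3),
          (by ring : 2 + (m + 2) = m + 4)] at h1
        refine (smul_eq_zero.1 ?_).resolve_left hpi
        rw [← h1]
        module
      · intro l hl
        rw [kernelCoeff_zero_zero]
        simp only [Finset.mem_insert, Finset.mem_singleton, not_or] at hl
        obtain ⟨h1, h2, h3, h4, h5⟩ := hl
        rw [if_neg (by omega), if_neg (by omega), if_neg (by omega), if_neg (by omega),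
          if_neg (by omega)]
        simp
  have hY : ∃ Y : ℝ, C₀ * ‖a₀‖ ^ 2 < Y := exists_gt _
  obtain ⟨Y, hY⟩ := hY
  have hz₀ : p + (Y : ℂ)⁻¹ • a₀ ∈ V := add_inv_smul_mem_innerRegion hC₀ ha₀ (by simpa using hY)
  refine eqOn_of_eventuallyEq_of_isPreconnected hΩ hc (ha 1) (ha 0) (hV hz₀) ?_
  filter_upwards [(isOpen_innerRegion p ℓ C₀).mem_nhds hz₀] with z hz using hconst z hz

end TwoSided

section Peak

variable {E : Type*} [NormedAddCommGroup E] [NormedSpace ℂ E] [NormedSpace ℝ E]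
  [IsScalarTower ℝ ℂ E]

/-- The complex linear part (up to the factor `2`) of a real linear map. -/
def complexLinearPart {W : Type*} [AddCommGroup W] [Module ℂ W] [Module ℝ W]
    [IsScalarTower ℝ ℂ W] (T : E →ₗ[ℝ] W) : E →ₗ[ℂ] W where
  toFun v := T v - I • T (I • v)
  map_add' v w := by simp only [smul_add, map_add]; abel
  map_smul' c v := by
    have hr : ∀ (x : ℝ) (u : E), T ((x : ℂ) • u) = (x : ℂ) • T u := fun x u => by
      have h1 : ((x : ℂ) • u) = x • u := algebraMap_smul ℂ x u
      have h2 : ((x : ℂ) • T u) = x • T u := algebraMap_smul ℂ x (T u)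
      rw [h1, h2, map_smul]
    have hneg : ∀ u : E, T (I • I • u) = - T u := fun u => by
      rw [smul_smul, Complex.I_mul_I, neg_one_smul, map_neg]
    rw [← Complex.re_add_im c]
    simp only [add_smul, mul_smul, smul_add, map_add, hr, RingHom.id_apply, smul_comm I ((_ : ℝ) : ℂ),
      hneg, smul_sub, smul_neg]
    have h1 : ∀ w : W, I • I • w = -w := fun w => by
      rw [smul_smul, Complex.I_mul_I, neg_one_smul]
    rw [h1]
    module

theorem exists_complex_bilinear_re_diag [FiniteDimensional ℂ E] (H : E →L[ℝ] E →L[ℝ] ℝ) :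
    ∃ B : E →L[ℂ] E →L[ℂ] ℂ, ∀ v, (B v v).re = H v v - H (I • v) (I • v) := by
  set T : E →ₗ[ℝ] (E →L[ℂ] ℂ) :=
    (StrongDual.extendRCLikeₗ (𝕜 := ℂ) (F := E)).toLinearMap ∘ₗ H.toLinearMap with hT
  refine ⟨LinearMap.toContinuousLinearMap (complexLinearPart T), fun v => ?_⟩
  simp [complexLinearPart, hT, StrongDual.extendRCLikeₗ_apply, StrongDual.extendRCLike_apply]

theorem abs_sub_sub_sub_half_le {E : Type*} [NormedAddCommGroup E] [NormedSpace ℝ E]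
    {σ : E → ℝ} {D : E → E →L[ℝ] ℝ}
    {H : E →L[ℝ] E →L[ℝ] ℝ} (hσ : ∀ z, HasFDerivAt σ (D z) z) {p : E}
    (hD : HasStrictFDerivAt D H p) {ε : ℝ} (hε : 0 < ε) :
    ∃ r > 0, ∀ q ∈ ball p r, ∀ z ∈ ball p r,
      |σ z - σ q - D q (z - q) - 1 / 2 * H (z - q) (z - q)| ≤ ε * ‖z - q‖ ^ 2 := by
  have h := hD.isLittleO.def hε
  rw [nhds_prod_eq, eventually_prod_self_iff'] at h
  obtain ⟨t, ht, h⟩ := h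
  obtain ⟨r, hr, hrt⟩ := Metric.mem_nhds_iff.1 ht
  refine ⟨r, hr, fun q hq z hz => ?_⟩
  set v := z - q with hv
  set g : ℝ → ℝ := fun s => σ (q + s • v) - s * D q v - s ^ 2 / 2 * H v v with hg
  have hder : ∀ s, HasDerivAt g (D (q + s • v) v - D q v - s * H v v) s := by
    intro s
    have h1 : HasDerivAt (fun s : ℝ => q + s • v) v s := by
      simpa using ((hasDerivAt_id s).smul_const v).const_add q
    have h2 := (hσ (q + s • v)).comp_hasDerivAt s h1
    have h3 := (hasDerivAt_id s).mul_const (D q v)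
    have h4 := ((hasDerivAt_pow 2 s).div_const 2).mul_const (H v v)
    refine ((h2.sub h3).sub h4).congr_deriv ?_
    simp
  have hb := norm_image_sub_le_of_norm_deriv_le_segment_01' (f := g)
    (C := ε * ‖v‖ ^ 2) (fun s _ => (hder s).hasDerivWithinAt) (fun s hs => ?_)
  · rw [Real.norm_eq_abs] at hb
    convert hb using 2
    simp [hg, hv]
    ring
  · have hmem : q + s • v ∈ ball p r := by
      have := (convex_ball p r).add_smul_sub_mem hq hz ⟨hs.1, hs.2.le⟩
      simpa [hv] using this
    have h5 := h _ (hrt hmem) _ (hrt hq)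
    simp only [add_sub_cancel_left] at h5
    have h6 : D (q + s • v) v - D q v - s * H v v = (D (q + s • v) - D q - H (s • v)) v := by
      simp
    rw [h6]
    calc ‖(D (q + s • v) - D q - H (s • v)) v‖ ≤ (ε * ‖s • v‖) * ‖v‖ :=
          (ContinuousLinearMap.le_opNorm _ _).trans (by gcongr)
      _ = ε * ‖v‖ ^ 2 * s := by
          rw [norm_smul, Real.norm_of_nonneg hs.1]; ring
      _ ≤ ε * ‖v‖ ^ 2 := mul_le_of_le_one_right (by positivity) hs.2.le

theorem IsCompact.exists_pos_le_add_mul {X : Type*} [TopologicalSpace X] {K : Set X}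
    (hK : IsCompact K) {f g : X → ℝ} (hf : Continuous f) (hg : Continuous g) (hg0 : ∀ x, 0 ≤ g x)
    (h : ∀ x ∈ K, g x = 0 → 0 < f x) : ∃ A : ℝ, 0 ≤ A ∧ ∃ c > 0, ∀ x ∈ K, c ≤ f x + A * g x := by
  obtain ⟨m, hm⟩ := hK.elim_directed_cover (fun m : ℕ => {x | 0 < f x + m * g x})
    (fun m => isOpen_lt continuous_const (by fun_prop)) (fun x hx => by
      rw [mem_iUnion]
      rcases (hg0 x).eq_or_lt with h0 | h0
      · exact ⟨0, by simpa using h x hx h0.symm⟩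
      · obtain ⟨m, hm⟩ := exists_nat_gt (-f x / g x)
        rw [div_lt_iff₀ h0] at hm
        exact ⟨m, by simp only [mem_ofPred_eq]; linarith⟩)
    (directed_of_isDirected_le fun m m' hmm x hx => by
      simp only [mem_ofPred_eq] at hx ⊢
      have : (m : ℝ) * g x ≤ m' * g x := by
        have := hg0 x
        gcongr
      linarith)
  refine ⟨m, by positivity, ?_⟩
  rcases K.eq_empty_or_nonempty with rfl | hne
  · exact ⟨1, one_pos, by simp⟩
  · obtain ⟨x₀, hx₀, hmin⟩ := hK.exists_isMinOn hne
      (f := fun x => f x + m * g x) (by fun_prop)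
    exact ⟨_, hm hx₀, fun x hx => hmin hx⟩

/-- Holomorphic support functions near a strictly pseudoconvex point. -/
theorem exists_support_functions [FiniteDimensional ℂ E] {ρ : E → ℝ} (hρ : ContDiff ℝ 2 ρ) {p : E}
    (hp : ρ p = 0) (hpos : ∀ ξ : E, ξ ≠ 0 → fderiv ℝ ρ p ξ = 0 → fderiv ℝ ρ p (I • ξ) = 0 →
      0 < fderiv ℝ (fderiv ℝ ρ) p ξ ξ + fderiv ℝ (fderiv ℝ ρ) p (I • ξ) (I • ξ)) :
    ∃ r > 0, ∃ c > 0, ∃ B : E →L[ℂ] E →L[ℂ] ℂ, ∀ q ∈ ball p r, ρ q = 0 →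
      ∀ z ∈ ball p r, ρ z ≤ 0 →
        ((StrongDual.extendRCLike (𝕜 := ℂ) (fderiv ℝ ρ q) : E →L[ℂ] ℂ) (z - q)
          + B (z - q) (z - q)).re ≤ -c * ‖z - q‖ ^ 2 := by
  have : FiniteDimensional ℝ E := FiniteDimensional.trans ℝ ℂ E
  have hprop : ProperSpace E := FiniteDimensional.proper_real E
  set D := fderiv ℝ ρ with hD
  set H := fderiv ℝ D p with hH
  have hDd : HasStrictFDerivAt D H p :=
    (hρ.fderiv_right (m := 1) (by norm_num)).hasStrictFDerivAt (by norm_num)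
  have hIc : Continuous fun v : E => I • v := continuous_const_smul I
  obtain ⟨A, hA, c, hc, hAc⟩ := (isCompact_sphere (0 : E) 1).exists_pos_le_add_mul
    (f := fun v => H v v + H (I • v) (I • v)) (g := fun v => D p v ^ 2 + D p (I • v) ^ 2)
    (by fun_prop) (by fun_prop) (fun v => by positivity) (fun v hv h0 => by
      have h1 : D p v = 0 := by nlinarith [sq_nonneg (D p v), sq_nonneg (D p (I • v))]
      have h2 : D p (I • v) = 0 := by nlinarith [sq_nonneg (D p v), sq_nonneg (D p (I • v))]
      refine hpos v ?_ h1 h2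
      rintro rfl
      simp at hv)
  set H' : E →L[ℝ] E →L[ℝ] ℝ := H + (A • D p).smulRight (D p) with hH'
  have hLevi : ∀ v, c * ‖v‖ ^ 2 ≤ H' v v + H' (I • v) (I • v) := by
    intro v
    rcases eq_or_ne v 0 with rfl | hv
    · simp
    have hn : 0 < ‖v‖ := norm_pos_iff.2 hv
    have h1 := hAc (‖v‖⁻¹ • v) (by simp [norm_smul, hn.ne'])
    rw [smul_comm I] at h1
    simp only [map_smul, smul_apply, smul_eq_mul] at h1
    have h2 : c * ‖v‖ ^ 2 ≤ _ := mul_le_mul_of_nonneg_right h1 (sq_nonneg ‖v‖)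
    refine h2.trans (le_of_eq ?_)
    simp [hH']
    field_simp
    ring
  obtain ⟨B, hB⟩ := exists_complex_bilinear_re_diag H'
  set σ : E → ℝ := fun z => ρ z + A / 2 * ρ z ^ 2 with hσ
  set D' : E → E →L[ℝ] ℝ := fun z => (1 + A * ρ z) • D z with hD'
  have hρd : ∀ z, HasFDerivAt ρ (D z) z := fun z =>
    (hρ.differentiable (by norm_num) z).hasFDerivAt
  have hσd : ∀ z, HasFDerivAt σ (D' z) z := by
    intro z
    refine ((hρd z).add (((hρd z).pow 2).const_mul (A / 2))).congr_fderiv ?_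
    ext v
    simp [hD']
    ring
  have hρs : HasStrictFDerivAt ρ (D p) p := hρ.hasStrictFDerivAt (by norm_num)
  have hDd' : HasStrictFDerivAt D' H' p := by
    refine (((hρs.const_mul A).const_add 1).smul hDd).congr_fderiv ?_
    ext v w
    simp [hH', hp]
  obtain ⟨r₁, hr₁, hT⟩ := abs_sub_sub_sub_half_le hσd hDd' (show 0 < c / 8 by positivity)
  have hsmall : ∀ᶠ z in 𝓝 p, -1 ≤ A / 2 * ρ z := by
    have h1 : Tendsto (fun z => A / 2 * ρ z) (𝓝 p) (𝓝 0) := by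
      have := (hρ.continuous.tendsto p).const_mul (A / 2)
      simpa [hp] using this
    exact h1.eventually (Ici_mem_nhds (by norm_num))
  obtain ⟨r₂, hr₂, hsm⟩ := Metric.eventually_nhds_iff_ball.1 hsmall
  refine ⟨min r₁ r₂, lt_min hr₁ hr₂, c / 8, by positivity, (4⁻¹ : ℂ) • B, ?_⟩
  intro q hq hq0 z hz hz0
  have h1 := hT q (ball_subset_ball (min_le_left _ _) hq) z (ball_subset_ball (min_le_left _ _) hz)
  have h2 := hsm z (ball_subset_ball (min_le_right _ _) hz)
  set v := z - q
  have hDq : D' q = D q := by simp [hD', hq0]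
  have hσq : σ q = 0 := by simp [hσ, hq0]
  have hσz : σ z ≤ 0 := by
    have : σ z = ρ z * (1 + A / 2 * ρ z) := by simp only [hσ]; ring
    rw [this]
    exact mul_nonpos_of_nonpos_of_nonneg hz0 (by linarith)
  rw [hDq, hσq] at h1
  have h3 := abs_le.1 h1
  have h4 := hLevi v
  have h5 : ((StrongDual.extendRCLike (𝕜 := ℂ) (D q) : E →L[ℂ] ℂ) v
      + ((4⁻¹ : ℂ) • B) v v).re = D q v + 1 / 4 * (H' v v - H' (I • v) (I • v)) := by
    rw [← hB]
    simp [StrongDual.extendRCLike_apply]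
  rw [h5]
  linarith [h3.1]

theorem exists_innerRegion_subset [FiniteDimensional ℂ E] {ρ : E → ℝ} (hρ : ContDiff ℝ 2 ρ) {p : E}
    (hp : ρ p = 0) : ∃ C₀ : ℝ, 0 ≤ C₀ ∧
      innerRegion p (StrongDual.extendRCLike (𝕜 := ℂ) (fderiv ℝ ρ p)) C₀ ⊆ {z | ρ z < 0} := by
  set D := fderiv ℝ ρ with hD
  set H := fderiv ℝ D p with hH
  have hDd : HasStrictFDerivAt D H p :=
    (hρ.fderiv_right (m := 1) (by norm_num)).hasStrictFDerivAt (by norm_num)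
  obtain ⟨r, hr, hT⟩ := abs_sub_sub_sub_half_le (fun z => (hρ.differentiable (by norm_num)
    z).hasFDerivAt) hDd (one_pos)
  set ℓ : E →L[ℂ] ℂ := StrongDual.extendRCLike (𝕜 := ℂ) (D p) with hℓ
  refine ⟨‖H‖ + 1 + ‖ℓ‖ / r, by positivity, fun z hz => ?_⟩
  simp only [innerRegion, mem_ofPred_eq] at hz
  have hre : (ℓ (z - p)).re = D p (z - p) := by
    simp [hℓ, StrongDual.extendRCLike_apply]
  have h1 : (-ℓ (z - p)).re ≤ ‖ℓ‖ * ‖z - p‖ :=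
    (Complex.re_le_norm _).trans (by rw [norm_neg]; exact ℓ.le_opNorm _)
  rw [Complex.neg_re, hre] at hz
  rw [Complex.neg_re, hre] at h1
  have hzr : z ∈ ball p r := by
    rw [mem_ball, dist_eq_norm]
    by_contra hcon
    push Not at hcon
    have h2 : ‖ℓ‖ * ‖z - p‖ ≤ ‖ℓ‖ / r * ‖z - p‖ ^ 2 := by
      have : ‖ℓ‖ / r * ‖z - p‖ ^ 2 = ‖ℓ‖ * ‖z - p‖ * (‖z - p‖ / r) := by field_simp
      rw [this]
      exact le_mul_of_one_le_right (by positivity) ((one_le_div hr).2 hcon)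
    nlinarith [norm_nonneg H, sq_nonneg ‖z - p‖, mul_nonneg (norm_nonneg H) (sq_nonneg ‖z - p‖)]
  have h3 := (abs_le.1 (hT p (mem_ball_self hr) z hzr)).2
  rw [hp] at h3
  have h4 : H (z - p) (z - p) ≤ ‖H‖ * ‖z - p‖ ^ 2 := by
    refine (Real.le_norm_self _).trans ((H.le_opNorm₂ _ _).trans (le_of_eq (by ring)))
  have h5 : 0 ≤ ‖ℓ‖ / r * ‖z - p‖ ^ 2 := by positivity
  have h6 : 0 ≤ ‖H‖ * ‖z - p‖ ^ 2 := by positivity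
  simp only [mem_ofPred_eq]
  nlinarith

end Peak

section Barrier

variable {E : Type*} [NormedAddCommGroup E] [NormedSpace ℂ E]

/-- Harnack's inequality for holomorphic functions with positive real part on the unit disc. -/
theorem re_mul_one_sub_norm_le_of_re_pos {f : ℂ → ℂ} (hf : DifferentiableOn ℂ f (ball 0 1))
    (hpos : ∀ z ∈ ball (0 : ℂ) 1, 0 < (f z).re) {ξ : ℂ} (hξ : ξ ∈ ball (0 : ℂ) 1) :
    (f ξ).re * (1 - ‖ξ‖) ≤ (f 0).re * (1 + ‖ξ‖) := by
  have h0 : (0 : ℂ) ∈ ball (0 : ℂ) 1 := mem_ball_self one_pos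
  set a := f 0 with ha
  have ha0 : 0 < a.re := hpos 0 h0
  have hden : ∀ z ∈ ball (0 : ℂ) 1, f z + (starRingEnd ℂ) a ≠ 0 := fun z hz h => by
    have := congrArg Complex.re h
    simp at this
    linarith [hpos z hz]
  set φ : ℂ → ℂ := fun z => (f z - a) / (f z + (starRingEnd ℂ) a) with hφ
  have hφd : DifferentiableOn ℂ φ (ball 0 1) :=
    (hf.sub_const a).div (hf.add_const _) hden
  have hφ0 : φ 0 = 0 := by simp [hφ, ha]
  have hsq : ∀ z, ‖f z - a‖ ^ 2 = ((f z).re - a.re) ^ 2 + ((f z).im - a.im) ^ 2 := fun z => by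
    rw [← Complex.normSq_eq_norm_sq, Complex.normSq_apply]; simp; ring
  have hsq' : ∀ z, ‖f z + (starRingEnd ℂ) a‖ ^ 2 =
      ((f z).re + a.re) ^ 2 + ((f z).im - a.im) ^ 2 := fun z => by
    rw [← Complex.normSq_eq_norm_sq, Complex.normSq_apply]; simp; ring
  have hmaps : MapsTo φ (ball 0 1) (closedBall (φ 0) 1) := by
    intro z hz
    rw [hφ0, mem_closedBall_zero_iff]
    simp only [hφ, norm_div]
    refine div_le_one_of_le₀ ?_ (norm_nonneg _)
    refine le_of_sq_le_sq ?_ (norm_nonneg _)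
    rw [hsq, hsq']
    nlinarith [hpos z hz, mul_pos (hpos z hz) ha0]
  have hS := Complex.dist_le_div_mul_dist_of_mapsTo_ball hφd hmaps hξ
  rw [hφ0, dist_zero_right, dist_zero_right, div_one, one_mul] at hS
  have hdpos : 0 < ‖f ξ + (starRingEnd ℂ) a‖ := norm_pos_iff.2 (hden ξ hξ)
  simp only [hφ, norm_div] at hS
  rw [div_le_iff₀ hdpos] at hS
  have hs1 : ‖ξ‖ < 1 := by simpa using hξ
  have h1 : ‖f ξ - a‖ ^ 2 ≤ ‖ξ‖ ^ 2 * ‖f ξ + (starRingEnd ℂ) a‖ ^ 2 := by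
    rw [← mul_pow]; gcongr
  rw [hsq, hsq'] at h1
  have hx := hpos ξ hξ
  have h2 : ((f ξ).re - a.re) ^ 2 ≤ (‖ξ‖ * ((f ξ).re + a.re)) ^ 2 := by
    have h3 : ‖ξ‖ ^ 2 ≤ 1 := by nlinarith [norm_nonneg ξ]
    nlinarith [mul_nonneg (sub_nonneg.2 h3) (sq_nonneg ((f ξ).im - a.im))]
  have h4 := abs_le_of_sq_le_sq h2 (by positivity)
  linarith [(abs_le.1 h4).2]

theorem exists_barrier_constant {Ω : Set E} {p : E} {P : E → ℂ} (hP : Differentiable ℂ P)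
    {D r c : ℝ} (hΩ : ∀ z ∈ Ω, ∀ w ∈ Ω, dist z w ≤ D) (hc : 0 < c)
    (hpeak : ∀ z ∈ Ω, z ∈ ball p r → (P z).re ≤ -c * ‖z - p‖ ^ 2) {s : ℝ} (hs : 0 < s)
    (hsr : s ≤ r) :
    ∃ κ > 0, ∀ ψ : ℂ → E, DifferentiableOn ℂ ψ (ball 0 1) → MapsTo ψ (ball 0 1) Ω →
      ∀ ξ ∈ ball (0 : ℂ) 1, ψ ξ ∈ ball p r → -(P (ψ ξ)).re < κ * (1 - ‖ξ‖) → ‖ψ 0 - p‖ < s := by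
  set D' : ℝ := max D 0 with hD'
  set η : ℝ := s / (2 * (D' + s)) with hη
  have hD0 : 0 ≤ D' := le_max_right _ _
  have hη0 : 0 < η := by positivity
  have hη1 : η < 1 := by rw [hη, div_lt_one (by positivity)]; linarith
  have hDη : D' * η ≤ s / 2 := by
    rw [hη, mul_div_assoc', div_le_div_iff₀ (by positivity) two_pos]
    nlinarith
  set c₁ : ℝ := c * s ^ 2 / 4 with hc₁
  have hc₁0 : 0 < c₁ := by positivity
  set L : ℝ := Real.log (1 / η) / c₁ with hL
  have hL0 : 0 < L := div_pos (Real.log_pos (by rw [one_div]; exact (one_lt_inv₀ hη0).2 hη1)) hc₁0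
  have hLc : Real.exp (-(L * c₁)) = η := by
    rw [hL, div_mul_cancel₀ _ hc₁0.ne', one_div, Real.log_inv, neg_neg, Real.exp_log hη0]
  refine ⟨min (1 / L) c₁, by positivity, fun ψ hψ hmaps ξ₀ hξ₀ hball hlt => ?_⟩
  by_contra hcon
  push Not at hcon
  have h0 : (0 : ℂ) ∈ ball (0 : ℂ) 1 := mem_ball_self one_pos
  have hξ1 : ‖ξ₀‖ < 1 := by simpa using hξ₀
  have hfar : ∀ ξ ∈ ball (0 : ℂ) 1, ‖ψ ξ - p‖ < s / 2 → η < ‖ξ‖ := by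
    intro ξ hξ hlt'
    by_contra hle
    push Not at hle
    have h1 := Complex.dist_le_div_mul_dist_of_mapsTo_ball (f := ψ) (c := 0) (R₁ := 1) (R₂ := D')
      hψ (fun z hz => mem_closedBall.2
        ((hΩ _ (hmaps hz) _ (hmaps h0)).trans (le_max_left _ _))) hξ
    rw [dist_zero_right, div_one, dist_eq_norm] at h1
    have h2 : D' * ‖ξ‖ ≤ D' * η := by gcongr
    have h3 := norm_sub_le_norm_sub_add_norm_sub (ψ 0) (ψ ξ) p
    rw [norm_sub_rev (ψ 0) (ψ ξ)] at h3
    linarith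
  have hclose : ∀ ξ ∈ ball (0 : ℂ) 1, ψ ξ ∈ ball p r → -c₁ < (P (ψ ξ)).re →
      ‖ψ ξ - p‖ < s / 2 := by
    intro ξ hξ h1 h2
    have h3 := hpeak _ (hmaps hξ) h1
    refine lt_of_pow_lt_pow_left₀ 2 (by positivity) ?_
    have : c * ‖ψ ξ - p‖ ^ 2 < c * (s / 2) ^ 2 := by
      rw [hc₁] at h2
      linarith
    exact lt_of_mul_lt_mul_left this hc.le
  have hPξ₀ : -c₁ < (P (ψ ξ₀)).re := by
    have : min (1 / L) c₁ * (1 - ‖ξ₀‖) ≤ c₁ * 1 :=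
      mul_le_mul (min_le_right _ _) (by linarith [norm_nonneg ξ₀]) (by linarith) hc₁0.le
    linarith
  have hmain : ∀ R, ‖ξ₀‖ < R → R < 1 → Real.exp (L * (P (ψ ξ₀)).re) * R ≤ ‖ξ₀‖ := by
    intro R hR hR1
    have hR0 : 0 < R := (norm_nonneg _).trans_lt hR
    have hsubR : closedBall (0 : ℂ) R ⊆ ball 0 1 := closedBall_subset_ball hR1
    set Z : Set ℂ := ball 0 R ∩ ψ ⁻¹' (ball p r ∩ {z | -c₁ < (P z).re}) with hZ
    have hψR : ContinuousOn ψ (ball 0 R) :=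
      hψ.continuousOn.mono (ball_subset_ball hR1.le)
    have hPre : Continuous fun z => (P z).re := Complex.continuous_re.comp hP.continuous
    have hZo : IsOpen Z := hψR.isOpen_inter_preimage isOpen_ball
      (isOpen_ball.inter (isOpen_lt continuous_const hPre))
    have hclZ : ∀ ξ ∈ closure Z, ξ ∈ closedBall (0 : ℂ) R ∧ ‖ψ ξ - p‖ ≤ s / 2 ∧ η ≤ ‖ξ‖ := by
      intro ξ hξ
      have h1 : ξ ∈ closedBall (0 : ℂ) R :=
        closure_ball_subset_closedBall (closure_mono inter_subset_left hξ)
      have h2 : ContinuousAt ψ ξ :=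
        (hψ.differentiableAt (isOpen_ball.mem_nhds (hsubR h1))).continuousAt
      have : (𝓝[Z] ξ).NeBot := mem_closure_iff_nhdsWithin_neBot.1 hξ
      have hmem : ∀ᶠ x in 𝓝[Z] ξ, ‖ψ x - p‖ < s / 2 ∧ η < ‖x‖ := by
        filter_upwards [self_mem_nhdsWithin] with x hx
        have hx1 : x ∈ ball (0 : ℂ) 1 := ball_subset_ball hR1.le hx.1
        have := hclose x hx1 hx.2.1 hx.2.2
        exact ⟨this, hfar x hx1 this⟩
      refine ⟨h1, ?_, ?_⟩
      · refine le_of_tendsto (f := fun x => ‖ψ x - p‖) (x := 𝓝[Z] ξ) ?_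
          (hmem.mono fun x hx => hx.1.le)
        exact ((h2.sub continuousAt_const).norm.tendsto).mono_left nhdsWithin_le_nhds
      · exact ge_of_tendsto (f := fun x : ℂ => ‖x‖) (x := 𝓝[Z] ξ)
          (continuous_norm.continuousAt.tendsto.mono_left nhdsWithin_le_nhds)
          (hmem.mono fun x hx => hx.2.le)
    set f : ℂ → ℂ := fun ξ => Complex.exp (L * P (ψ ξ)) / ξ with hf
    have hnormf : ∀ ξ, ‖f ξ‖ = Real.exp (L * (P (ψ ξ)).re) / ‖ξ‖ := fun ξ => by
      simp only [hf, norm_div, Complex.norm_exp, Complex.re_ofReal_mul]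
    have hfd : DiffContOnCl ℂ f Z := by
      refine DifferentiableOn.diffContOnCl fun ξ hξ => ?_
      obtain ⟨h1, -, h3⟩ := hclZ ξ hξ
      have hne : ξ ≠ 0 := norm_pos_iff.1 (hη0.trans_le h3)
      have h2 : DifferentiableAt ℂ ψ ξ := hψ.differentiableAt (isOpen_ball.mem_nhds (hsubR h1))
      have h4 : DifferentiableAt ℂ (fun ξ => P (ψ ξ)) ξ := (hP _).comp ξ h2
      exact (((h4.const_mul (L : ℂ)).cexp).div differentiableAt_id hne).differentiableWithinAt
    have hbd : Bornology.IsBounded Z := isBounded_ball.subset inter_subset_left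
    have hle := Complex.norm_le_of_forall_mem_frontier_norm_le hbd hfd (C := 1 / R)
      (fun ξ hξ => ?_) (z := ξ₀) (subset_closure ⟨by simpa using hR, hball, hPξ₀⟩)
    · rw [hnormf] at hle
      have hpos : 0 < ‖ξ₀‖ := hη0.trans (hfar ξ₀ hξ₀ (hclose ξ₀ hξ₀ hball hPξ₀))
      rw [div_le_div_iff₀ hpos hR0] at hle
      linarith
    · rw [hZo.frontier_eq] at hξ
      obtain ⟨hξc, hξn⟩ := hξ
      obtain ⟨h1, h2, h3⟩ := hclZ ξ hξc
      have hb : ψ ξ ∈ ball p r := by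
        rw [mem_ball, dist_eq_norm]
        linarith
      have hnpos : 0 < ‖ξ‖ := hη0.trans_le h3
      have hre : (P (ψ ξ)).re ≤ 0 := by
        refine (hpeak _ (hmaps (hsubR h1)) hb).trans ?_
        have : 0 ≤ c * ‖ψ ξ - p‖ ^ 2 := by positivity
        linarith
      rw [hnormf]
      by_cases hin : ‖ξ‖ < R
      · have hP1 : (P (ψ ξ)).re ≤ -c₁ := by
          by_contra hcc
          push Not at hcc
          exact hξn ⟨by simpa using hin, hb, hcc⟩
        have h5 : Real.exp (L * (P (ψ ξ)).re) ≤ η := by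
          rw [← hLc]
          refine Real.exp_le_exp.2 ?_
          nlinarith
        have h6 : Real.exp (L * (P (ψ ξ)).re) / ‖ξ‖ ≤ 1 := by
          rw [div_le_one hnpos]; linarith
        refine h6.trans ?_
        rw [le_div_iff₀ hR0]; linarith
      · push Not at hin
        have h5 : Real.exp (L * (P (ψ ξ)).re) ≤ 1 := by
          rw [Real.exp_le_one_iff]
          exact mul_nonpos_of_nonneg_of_nonpos hL0.le hre
        gcongr
  have hexp : Real.exp (L * (P (ψ ξ₀)).re) ≤ ‖ξ₀‖ := by
    by_contra hcc
    push Not at hcc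
    set e := Real.exp (L * (P (ψ ξ₀)).re) with he
    have he0 : 0 < e := Real.exp_pos _
    obtain ⟨R, hR1, hR2⟩ := exists_between
      (max_lt hξ1 ((div_lt_one he0).2 hcc))
    have h1 := hmain R ((le_max_left _ _).trans_lt hR1) hR2
    have h2 := (le_max_right _ _).trans_lt hR1
    rw [div_lt_iff₀ he0] at h2
    linarith
  have h1 := Real.add_one_le_exp (L * (P (ψ ξ₀)).re)
  have h2 : min (1 / L) c₁ * (1 - ‖ξ₀‖) ≤ 1 / L * (1 - ‖ξ₀‖) := by
    have : 0 ≤ 1 - ‖ξ₀‖ := by linarith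
    gcongr
    exact min_le_left _ _
  have h3 : L * (1 / L * (1 - ‖ξ₀‖)) = 1 - ‖ξ₀‖ := by field_simp
  have h4 : L * (-(P (ψ ξ₀)).re) < L * (1 / L * (1 - ‖ξ₀‖)) := by
    gcongr
    linarith
  linarith

end Barrier

section Support

variable {E : Type*} [NormedAddCommGroup E]

/-- `G` agrees with the identity up to `o(‖z - p‖ ^ k)` at `p` within `Ω`. -/
def FlatAt (Ω : Set E) (p : E) (k : ℕ) (G : E → E) : Prop :=
  ∀ ε > 0, ∃ δ > 0, ∀ z ∈ Ω, ‖z - p‖ < δ → ‖G z - z‖ ≤ ε * ‖z - p‖ ^ k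

theorem FlatAt.mono {Ω : Set E} {p : E} {k l : ℕ} {G : E → E} (h : FlatAt Ω p k G) (hlk : l ≤ k) :
    FlatAt Ω p l G := by
  intro ε hε
  obtain ⟨δ, hδ, H⟩ := h ε hε
  refine ⟨min δ 1, by positivity, fun z hz hzδ => (H z hz (hzδ.trans_le (min_le_left _ _))).trans ?_⟩
  have : ‖z - p‖ ^ k ≤ ‖z - p‖ ^ l :=
    pow_le_pow_of_le_one (norm_nonneg _) (hzδ.trans_le (min_le_right _ _)).le hlk
  gcongr

theorem FlatAt.comp {Ω : Set E} {p : E} {k : ℕ} (hk : 1 ≤ k) {F G : E → E} (hF : FlatAt Ω p k F)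
    (hG : FlatAt Ω p k G) (hmaps : MapsTo G Ω Ω) : FlatAt Ω p k (F ∘ G) := by
  intro ε hε
  obtain ⟨δ₁, hδ₁, H₁⟩ := hF (ε / (2 * 2 ^ k)) (by positivity)
  obtain ⟨δ₂, hδ₂, H₂⟩ := hG (ε / 2) (by positivity)
  obtain ⟨δ₃, hδ₃, H₃⟩ := (hG.mono hk) 1 one_pos
  refine ⟨min (δ₁ / 2) (min δ₂ δ₃), by positivity, fun z hz hzδ => ?_⟩
  have h1 : ‖z - p‖ < δ₁ / 2 := hzδ.trans_le (min_le_left _ _)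
  have h2 := H₂ z hz (hzδ.trans_le ((min_le_right _ _).trans (min_le_left _ _)))
  have h3 := H₃ z hz (hzδ.trans_le ((min_le_right _ _).trans (min_le_right _ _)))
  have h4 : ‖G z - p‖ ≤ 2 * ‖z - p‖ := by
    have := norm_sub_le_norm_sub_add_norm_sub (G z) z p
    simp only [pow_one, one_mul] at h3
    linarith
  have h5 := H₁ (G z) (hmaps hz) (by linarith)
  have h6 := norm_sub_le_norm_sub_add_norm_sub (F (G z)) (G z) z
  have h7 : ε / (2 * 2 ^ k) * ‖G z - p‖ ^ k ≤ ε / 2 * ‖z - p‖ ^ k := by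
    calc ε / (2 * 2 ^ k) * ‖G z - p‖ ^ k ≤ ε / (2 * 2 ^ k) * (2 * ‖z - p‖) ^ k := by gcongr
      _ = _ := by rw [mul_pow]; field_simp
  simp only [comp_apply]
  linarith

theorem FlatAt.iterate {Ω : Set E} {p : E} {k : ℕ} (hk : 1 ≤ k) {F : E → E} (hF : FlatAt Ω p k F)
    (hmaps : MapsTo F Ω Ω) (m : ℕ) : FlatAt Ω p k F^[m] := by
  induction m with
  | zero => exact fun ε hε => ⟨1, one_pos, fun z _ _ => by simp; positivity⟩
  | succ m ih =>
    rw [iterate_succ']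
    exact hF.comp hk ih (hmaps.iterate m)

variable [NormedSpace ℂ E]

theorem DifferentiableOn.iterate_of_mapsTo {Ω : Set E} {F : E → E} (hF : DifferentiableOn ℂ F Ω)
    (hmaps : MapsTo F Ω Ω) (m : ℕ) : DifferentiableOn ℂ F^[m] Ω := by
  induction m with
  | zero => exact differentiableOn_id
  | succ m ih =>
    rw [iterate_succ']
    exact hF.comp ih (hmaps.iterate m)

/-- The quadratic polynomial with linear part `ℓ` and quadratic part `B` centred at `p`. -/
def quadPoly (p : E) (ℓ : E →L[ℂ] ℂ) (B : E →L[ℂ] E →L[ℂ] ℂ) (z : E) : ℂ :=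
  ℓ (z - p) + B (z - p) (z - p)

theorem differentiable_quadPoly (p : E) (ℓ : E →L[ℂ] ℂ) (B : E →L[ℂ] E →L[ℂ] ℂ) :
    Differentiable ℂ (quadPoly p ℓ B) := by
  unfold quadPoly
  fun_prop

/-- Local holomorphic support data of `Ω` at a boundary point `p`. -/
structure IsSupportAt (Ω : Set E) (p : E) (ℓ : E →L[ℂ] ℂ) (B : E →L[ℂ] E →L[ℂ] ℂ)
    (r c C₀ : ℝ) : Prop where
  notMem : p ∉ Ω
  r_pos : 0 < r
  c_pos : 0 < c
  C₀_nonneg : 0 ≤ C₀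
  ne_zero : ℓ ≠ 0
  inner_subset : innerRegion p ℓ C₀ ⊆ Ω
  peak : ∀ z ∈ closure Ω, z ∈ ball p r → (quadPoly p ℓ B z).re ≤ -c * ‖z - p‖ ^ 2

theorem FlatAt.tendsto_smul_sub {Ω : Set E} {p a : E} {G : E → E} (hG : FlatAt Ω p 1 G) :
    Tendsto (fun y : ℂ => y • (G (p + y⁻¹ • a) - p))
      (Bornology.cobounded ℂ ⊓ 𝓟 {y | p + y⁻¹ • a ∈ Ω}) (𝓝 a) := by
  rw [tendsto_iff_norm_sub_tendsto_zero, Metric.tendsto_nhds]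
  intro ε hε
  obtain ⟨δ, hδ, H⟩ := hG (ε / (‖a‖ + 1)) (by positivity)
  have h1 : ∀ᶠ y : ℂ in Bornology.cobounded ℂ, ‖a‖ / δ < ‖y‖ :=
    tendsto_norm_cobounded_atTop.eventually (eventually_gt_atTop _)
  filter_upwards [h1.filter_mono inf_le_left,
    mem_inf_of_right (mem_principal_self {y : ℂ | p + y⁻¹ • a ∈ Ω})] with y hy hyΩ
  have hy0 : 0 < ‖y‖ := lt_of_le_of_lt (by positivity) hy
  have hyne : y ≠ 0 := norm_pos_iff.1 hy0
  have hsub : p + y⁻¹ • a - p = y⁻¹ • a := by abel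
  have h2 := H _ hyΩ (by
    rw [hsub, norm_smul, norm_inv, inv_mul_lt_iff₀ hy0]
    rw [div_lt_iff₀ hδ] at hy
    linarith)
  rw [hsub, pow_one, norm_smul, norm_inv] at h2
  have h3 : y • (G (p + y⁻¹ • a) - p) - a = y • (G (p + y⁻¹ • a) - (p + y⁻¹ • a)) := by
    rw [smul_sub, smul_sub, smul_add, smul_smul, mul_inv_cancel₀ hyne, one_smul]
    abel
  rw [dist_zero_right, norm_norm, h3, norm_smul]
  calc ‖y‖ * ‖G (p + y⁻¹ • a) - (p + y⁻¹ • a)‖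
      ≤ ‖y‖ * (ε / (‖a‖ + 1) * (‖y‖⁻¹ * ‖a‖)) := by gcongr
    _ = ε * (‖a‖ / (‖a‖ + 1)) := by field_simp
    _ < ε * 1 := by
        gcongr
        rw [div_lt_one (by positivity)]
        linarith
    _ = ε := mul_one _

theorem FlatAt.tendsto_apply {Ω : Set E} {p a : E} {G : E → E} (hG : FlatAt Ω p 1 G) :
    Tendsto (fun y : ℂ => G (p + y⁻¹ • a))
      (Bornology.cobounded ℂ ⊓ 𝓟 {y | p + y⁻¹ • a ∈ Ω}) (𝓝 p) := by
  have h1 : Tendsto (fun y : ℂ => y⁻¹) (Bornology.cobounded ℂ ⊓ 𝓟 {y | p + y⁻¹ • a ∈ Ω})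
      (𝓝 0) := (tendsto_inv₀_cobounded).mono_left inf_le_left
  have h2 := (h1.smul (hG.tendsto_smul_sub (a := a))).const_add p
  rw [zero_smul, add_zero] at h2
  refine h2.congr' ?_
  have h3 : ∀ᶠ y : ℂ in Bornology.cobounded ℂ, y ≠ 0 := Bornology.eventually_ne_cobounded 0
  filter_upwards [h3.filter_mono inf_le_left] with y hy
  rw [inv_smul_smul₀ hy]
  abel

theorem FlatAt.tendsto_mul_quadPoly {Ω : Set E} {p a : E} {G : E → E} (hG : FlatAt Ω p 1 G)
    {ℓ : E →L[ℂ] ℂ} (B : E →L[ℂ] E →L[ℂ] ℂ) (ha : ℓ a = -1) :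
    Tendsto (fun y : ℂ => y * quadPoly p ℓ B (G (p + y⁻¹ • a)))
      (Bornology.cobounded ℂ ⊓ 𝓟 {y | p + y⁻¹ • a ∈ Ω}) (𝓝 (-1)) := by
  have h1 := hG.tendsto_smul_sub (a := a)
  have h2 := (hG.tendsto_apply (a := a)).sub_const p
  rw [sub_self] at h2
  have hB : Continuous fun q : E × E => ℓ q.1 + B q.1 q.2 := by fun_prop
  have h3 := (hB.tendsto (a, 0)).comp (h1.prodMk_nhds h2)
  simp only [map_zero, add_zero, ha] at h3
  refine h3.congr fun y => ?_
  simp [quadPoly, mul_add]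

theorem exists_disc_to_halfPlane {R : ℝ} {y₁ : ℂ} (h : R < y₁.re) :
    ∃ y : ℂ → ℂ, DifferentiableOn ℂ y (ball 0 1) ∧ (∀ ξ ∈ ball (0 : ℂ) 1, R < (y ξ).re) ∧
      y 0 = y₁ ∧ Tendsto (fun s : ℝ => ((1 - s : ℝ) : ℂ) * y s) (𝓝[<] 1)
        (𝓝 ((2 * (y₁.re - R) : ℝ) : ℂ)) ∧
      Tendsto (fun s : ℝ => y s) (𝓝[<] 1) (Bornology.cobounded ℂ) := by
  set α : ℝ := y₁.re - R with hα
  have hα0 : 0 < α := by linarith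
  set y : ℂ → ℂ := fun ξ => R + y₁.im * I + α * (2 * (1 - ξ)⁻¹ - 1) with hy
  have hlim : Tendsto (fun s : ℝ => ((1 - s : ℝ) : ℂ) * y s) (𝓝[<] 1)
      (𝓝 ((2 * α : ℝ) : ℂ)) := by
    have hc : Continuous fun s : ℝ => ((1 - s : ℝ) : ℂ) * (R + y₁.im * I - α) + 2 * α := by
      fun_prop
    have h1 := (hc.tendsto 1).mono_left (nhdsWithin_le_nhds (s := Iio 1))
    simp only [sub_self, ofReal_zero, zero_mul, zero_add] at h1
    push_cast
    refine h1.congr' ?_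
    filter_upwards [self_mem_nhdsWithin] with s hs
    have hne : (1 - (s : ℂ)) ≠ 0 := by
      rw [sub_ne_zero]
      intro h
      have : (1 : ℝ) = s := by exact_mod_cast h
      simp only [mem_Iio] at hs
      linarith
    simp only [hy]
    push_cast
    field_simp
    ring
  refine ⟨y, ?_, ?_, ?_, hlim, ?_⟩
  · intro ξ hξ
    have hne : (1 - ξ) ≠ 0 := by
      rw [sub_ne_zero]
      rintro rfl
      simp at hξ
    refine DifferentiableAt.differentiableWithinAt ?_
    simp only [hy]
    fun_prop (disch := assumption)
  · intro ξ hξ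
    have hξ1 : ‖ξ‖ < 1 := by simpa using hξ
    have h1 : Complex.normSq ξ < 1 := by
      rw [Complex.normSq_eq_norm_sq]
      nlinarith [norm_nonneg ξ]
    rw [Complex.normSq_apply] at h1
    have h2 : 0 < Complex.normSq (1 - ξ) := by
      rw [Complex.normSq_pos, sub_ne_zero]
      rintro rfl
      simp at hξ
    have h3 : 0 < 2 * ((1 - ξ)⁻¹).re - 1 := by
      rw [Complex.inv_re, sub_pos, mul_div_assoc', lt_div_iff₀ h2, Complex.normSq_apply]
      simp
      nlinarith
    have h4 : (y ξ).re = R + α * (2 * ((1 - ξ)⁻¹).re - 1) := by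
      simp [hy]
    rw [h4]
    have := mul_pos hα0 h3
    linarith
  · simp only [hy, sub_zero, inv_one]
    apply Complex.ext
    · simp [hα]
      ring
    · simp [hα]
  · rw [← tendsto_norm_atTop_iff_cobounded]
    have h1 : Tendsto (fun s : ℝ => (1 - s)⁻¹) (𝓝[<] 1) atTop := by
      refine tendsto_inv_nhdsGT_zero.comp ?_
      refine tendsto_nhdsWithin_iff.2 ⟨?_, ?_⟩
      · have : Continuous fun s : ℝ => 1 - s := by fun_prop
        simpa using (this.tendsto 1).mono_left (nhdsWithin_le_nhds (s := Iio 1))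
      · filter_upwards [self_mem_nhdsWithin] with s hs
        simpa using hs
    have h2 := h1.atTop_mul_pos (C := ‖((2 * α : ℝ) : ℂ)‖) (by
      rw [norm_pos_iff]; exact_mod_cast (by positivity)) hlim.norm
    refine h2.congr' ?_
    filter_upwards [self_mem_nhdsWithin] with s hs
    have : 0 < 1 - s := by simpa using hs
    rw [norm_mul, Complex.norm_real, Real.norm_of_nonneg this.le, inv_mul_cancel_left₀ this.ne']

namespace IsSupportAt

variable {Ω : Set E} {p : E} {ℓ : E →L[ℂ] ℂ} {B : E →L[ℂ] E →L[ℂ] ℂ} {r c C₀ : ℝ}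

theorem quadPoly_re_neg (h : IsSupportAt Ω p ℓ B r c C₀) {z : E} (hz : z ∈ Ω) (hzr : z ∈ ball p r) :
    (quadPoly p ℓ B z).re < 0 := by
  refine (h.peak z (subset_closure hz) hzr).trans_lt ?_
  have : 0 < ‖z - p‖ := norm_pos_iff.2 (sub_ne_zero.2 fun e => h.notMem (e ▸ hz))
  have := mul_pos h.c_pos (pow_pos this 2)
  linarith

/-- Uniform control, near the tip of an inner region, of all holomorphic self-maps that are tangent
to the identity at `p`. -/
theorem exists_uniform_bound (h : IsSupportAt Ω p ℓ B r c C₀) (hbd : Bornology.IsBounded Ω) :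
    ∃ C₁ ≥ C₀, ∀ G : E → E, DifferentiableOn ℂ G Ω → MapsTo G Ω Ω → FlatAt Ω p 1 G →
      ∀ z ∈ innerRegion p ℓ C₁, ‖G z - p‖ < r / 2 ∧
        ((-ℓ (z - p))⁻¹).re / 2 ≤ (-(quadPoly p ℓ B (G z))⁻¹).re := by
  obtain ⟨D, hD⟩ := Metric.isBounded_iff.1 hbd
  obtain ⟨κ, hκ, hbar⟩ := exists_barrier_constant (differentiable_quadPoly p ℓ B) (r := r)
    (fun z hz w hw => hD hz hw) h.c_pos (fun z hz => h.peak z (subset_closure hz))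
    (half_pos h.r_pos) (by linarith [h.r_pos])
  have hC₀ := h.C₀_nonneg
  have hr := h.r_pos
  have hℓ : 0 < ‖ℓ‖ := norm_pos_iff.2 h.ne_zero
  refine ⟨2 * (C₀ + 2 * ‖ℓ‖ ^ 2 / κ), ?_, fun G hG hmaps hflat z hz => ?_⟩
  · have : 0 < 2 * ‖ℓ‖ ^ 2 / κ := by positivity
    linarith
  obtain ⟨a, y₁, ha, hay, -, rfl⟩ :=
    exists_eq_add_inv_smul_of_mem_innerRegion (by positivity) hz
  have hℓa : 1 ≤ ‖ℓ‖ ^ 2 * ‖a‖ ^ 2 := by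
    have h1 : 1 ≤ ‖ℓ‖ * ‖a‖ := by
      have := ℓ.le_opNorm a
      rwa [ha, norm_neg, norm_one] at this
    nlinarith
  set R₀ : ℝ := C₀ * ‖a‖ ^ 2 with hR₀
  have hy₁ : 2 * (R₀ + 2 / κ) < y₁.re := by
    refine lt_of_le_of_lt ?_ hay
    have : 2 / κ ≤ 2 / κ * (‖ℓ‖ ^ 2 * ‖a‖ ^ 2) := le_mul_of_one_le_right (by positivity) hℓa
    calc 2 * (R₀ + 2 / κ) ≤ 2 * (R₀ + 2 / κ * (‖ℓ‖ ^ 2 * ‖a‖ ^ 2)) := by gcongr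
      _ = _ := by rw [hR₀]; ring
  have hR₀0 : 0 ≤ R₀ := by positivity
  have hmem : ∀ y : ℂ, R₀ < y.re → p + y⁻¹ • a ∈ Ω := fun y hy =>
    h.inner_subset (add_inv_smul_mem_innerRegion hC₀ ha hy)
  have hdiff : ∀ y : ℂ → ℂ, DifferentiableOn ℂ y (ball 0 1) →
      (∀ ξ ∈ ball (0 : ℂ) 1, R₀ < (y ξ).re) →
      DifferentiableOn ℂ (fun ξ => G (p + (y ξ)⁻¹ • a)) (ball 0 1) := by
    intro y hy hre
    refine hG.comp ?_ fun ξ hξ => hmem _ (hre ξ hξ)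
    have hne : ∀ ξ ∈ ball (0 : ℂ) 1, y ξ ≠ 0 := fun ξ hξ h0 => by
      have := hre ξ hξ
      rw [h0, Complex.zero_re] at this
      linarith
    exact ((hy.inv hne).smul_const a).const_add p
  have hev : ∀ᶠ s : ℝ in 𝓝[<] 1, (s : ℂ) ∈ ball (0 : ℂ) 1 ∧ 0 < s ∧ s < 1 := by
    filter_upwards [Ioo_mem_nhdsLT (zero_lt_one' ℝ)] with s hs
    refine ⟨?_, hs.1, hs.2⟩
    rw [mem_ball_zero_iff, Complex.norm_real, Real.norm_of_nonneg hs.1.le]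
    exact hs.2
  have htend : ∀ y : ℂ → ℂ, (∀ ξ ∈ ball (0 : ℂ) 1, R₀ < (y ξ).re) →
      Tendsto (fun s : ℝ => y s) (𝓝[<] 1) (Bornology.cobounded ℂ) →
      Tendsto (fun s : ℝ => y s) (𝓝[<] 1)
        (Bornology.cobounded ℂ ⊓ 𝓟 {y | p + y⁻¹ • a ∈ Ω}) := fun y hre hy =>
    tendsto_inf.2 ⟨hy, tendsto_principal.2 (hev.mono fun s hs => hmem _ (hre _ hs.1))⟩
  have hfirst : ∀ w : ℂ, R₀ + 2 / κ < w.re → ‖G (p + w⁻¹ • a) - p‖ < r / 2 := by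
    intro w hw
    have hκ2 : 0 < 2 / κ := by positivity
    obtain ⟨y, hyd, hyre, hy0, hylim, hycob⟩ := exists_disc_to_halfPlane
      (show R₀ < w.re by linarith)
    have hT := htend y hyre hycob
    have h1 := (hflat.tendsto_apply (a := a)).comp hT
    have h2 := (hflat.tendsto_mul_quadPoly B ha).comp hT
    set α := w.re - R₀ with hα
    have hακ : 2 < α * κ := by
      have : 2 / κ < α := by linarith
      rwa [div_lt_iff₀ hκ] at this
    have hα0 : 0 < α := by linarith
    have h3 : ∀ᶠ s : ℝ in 𝓝[<] 1, α < ‖((1 - s : ℝ) : ℂ) * y s‖ := by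
      refine hylim.norm.eventually (lt_mem_nhds ?_)
      rw [Complex.norm_real, Real.norm_of_nonneg (by positivity)]
      linarith
    have h4 : ∀ᶠ s : ℝ in 𝓝[<] 1, ‖y s * quadPoly p ℓ B (G (p + (y s)⁻¹ • a))‖ < 2 := by
      refine h2.norm.eventually (gt_mem_nhds ?_)
      rw [norm_neg, norm_one]
      norm_num
    obtain ⟨s, hs, hs1, hs2, hs3⟩ :=
      (hev.and (h3.and (h4.and (h1.eventually (ball_mem_nhds p h.r_pos))))).exists
    have := hbar _ (hdiff y hyd hyre) (fun ξ hξ => hmaps (hmem _ (hyre ξ hξ))) s hs.1 hs3 ?_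
    · simpa [hy0] using this
    · have hs0 : 0 < 1 - s := by linarith [hs.2.2]
      rw [Complex.norm_real, Real.norm_of_nonneg hs.2.1.le]
      rw [norm_mul, Complex.norm_real, Real.norm_of_nonneg hs0.le] at hs1
      rw [norm_mul] at hs2
      set N := ‖quadPoly p ℓ B (G (p + (y s)⁻¹ • a))‖ with hN
      have h5 : -(quadPoly p ℓ B (G (p + (y s)⁻¹ • a))).re ≤ N :=
        (neg_le_abs _).trans (Complex.abs_re_le_norm _)
      have hN0 : 0 ≤ N := norm_nonneg _
      refine h5.trans_lt ?_
      have hy0' : 0 < ‖y s‖ := by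
        by_contra hcc
        push Not at hcc
        nlinarith
      have h6 : N * ‖y s‖ < κ * (1 - s) * ‖y s‖ := by nlinarith
      exact lt_of_mul_lt_mul_right h6 hy0'.le
  have hy₁' : R₀ + 2 / κ < y₁.re := by
    have : 0 < 2 / κ := by positivity
    linarith
  refine ⟨hfirst y₁ hy₁', ?_⟩
  obtain ⟨y, hyd, hyre, hy0, hylim, hycob⟩ := exists_disc_to_halfPlane hy₁'
  have hκ2 : 0 < 2 / κ := by positivity
  have hyre' : ∀ ξ ∈ ball (0 : ℂ) 1, R₀ < (y ξ).re := fun ξ hξ => by linarith [hyre ξ hξ]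
  have hT := htend y hyre' hycob
  have h2 := (hflat.tendsto_mul_quadPoly B ha).comp hT
  have hneg : ∀ ξ ∈ ball (0 : ℂ) 1, (quadPoly p ℓ B (G (p + (y ξ)⁻¹ • a))).re < 0 := by
    intro ξ hξ
    refine h.quadPoly_re_neg (hmaps (hmem _ (hyre' ξ hξ))) ?_
    rw [mem_ball, dist_eq_norm]
    linarith [hfirst _ (hyre ξ hξ)]
  set f : ℂ → ℂ := fun ξ => -(quadPoly p ℓ B (G (p + (y ξ)⁻¹ • a)))⁻¹ with hf
  have hfd : DifferentiableOn ℂ f (ball 0 1) := by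
    refine (DifferentiableOn.inv ?_ ?_).neg
    · exact (differentiable_quadPoly p ℓ B).comp_differentiableOn (hdiff y hyd hyre')
    · intro ξ hξ h0
      have := hneg ξ hξ
      rw [h0] at this
      simp at this
  have hfpos : ∀ ξ ∈ ball (0 : ℂ) 1, 0 < (f ξ).re := by
    intro ξ hξ
    have h0 := hneg ξ hξ
    simp only [hf, Complex.neg_re, Complex.inv_re, neg_pos]
    refine div_neg_of_neg_of_pos h0 (Complex.normSq_pos.2 fun h1 => ?_)
    rw [h1] at h0
    simp at h0
  have hflim : Tendsto (fun s : ℝ => ((1 - s : ℝ) : ℂ) * f s) (𝓝[<] 1)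
      (𝓝 ((2 * (y₁.re - (R₀ + 2 / κ)) : ℝ) : ℂ)) := by
    have h3 := hylim.mul (h2.inv₀ (by norm_num)).neg
    rw [inv_neg, inv_one, neg_neg, mul_one] at h3
    refine h3.congr' ?_
    filter_upwards [hev] with s hs
    have hne : y s ≠ 0 := fun h0 => by
      have := hyre' s hs.1
      rw [h0, Complex.zero_re] at this
      linarith
    simp only [hf, comp_apply, mul_inv]
    field_simp
  have hre := (Complex.continuous_re.tendsto _).comp hflim
  have hle := le_of_tendsto (b := (f 0).re * 2) hre (by
    filter_upwards [hev] with s hs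
    have h3 := re_mul_one_sub_norm_le_of_re_pos hfd hfpos hs.1
    rw [Complex.norm_real, Real.norm_of_nonneg hs.2.1.le] at h3
    have h4 : 0 < (f 0).re := hfpos 0 (mem_ball_self one_pos)
    simp only [comp_apply, Complex.re_ofReal_mul]
    nlinarith [hs.2.2])
  simp only [Complex.ofReal_re] at hle
  have hf0 : f 0 = -(quadPoly p ℓ B (G (p + y₁⁻¹ • a)))⁻¹ := by simp only [hf, hy0]
  rw [hf0] at hle
  have hx : (-ℓ (p + y₁⁻¹ • a - p))⁻¹ = y₁ := by
    rw [add_sub_cancel_left, map_smul, ha]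
    simp
  rw [hx]
  linarith

end IsSupportAt

end Support

section Determinant

variable {E : Type*} [NormedAddCommGroup E] [NormedSpace ℂ E]

/-- The linear map scaling `a` by `e ^ 2` and `ker ℓ` by `e`, where `ℓ a = -1`. -/
def anisoScale (ℓ : E →L[ℂ] ℂ) (a : E) (e : ℂ) : E →L[ℂ] E :=
  -(e ^ 2) • ℓ.smulRight a + e • (ContinuousLinearMap.id ℂ E + ℓ.smulRight a)

theorem anisoScale_apply (ℓ : E →L[ℂ] ℂ) (a : E) (e : ℂ) (v : E) :
    anisoScale ℓ a e v = -(e ^ 2 * ℓ v) • a + e • (v + ℓ v • a) := by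
  simp only [anisoScale, add_apply, smul_apply,
    ContinuousLinearMap.smulRight_apply, ContinuousLinearMap.id_apply]
  module

theorem apply_anisoScale {ℓ : E →L[ℂ] ℂ} {a : E} (ha : ℓ a = -1) (e : ℂ) (v : E) :
    ℓ (anisoScale ℓ a e v) = e ^ 2 * ℓ v := by
  simp [anisoScale_apply, ha]

theorem anisoScale_comp {ℓ : E →L[ℂ] ℂ} {a : E} (ha : ℓ a = -1) (d e : ℂ) :
    (anisoScale ℓ a d).comp (anisoScale ℓ a e) = anisoScale ℓ a (d * e) := by
  ext v
  rw [ContinuousLinearMap.comp_apply, anisoScale_apply, apply_anisoScale ha, anisoScale_apply,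
    anisoScale_apply]
  module

theorem anisoScale_one (ℓ : E →L[ℂ] ℂ) (a : E) :
    anisoScale ℓ a 1 = ContinuousLinearMap.id ℂ E := by
  ext v
  rw [anisoScale_apply, ContinuousLinearMap.id_apply]
  module

theorem norm_anisoScale_apply_le (ℓ : E →L[ℂ] ℂ) (a : E) (e : ℂ) (v : E) :
    ‖anisoScale ℓ a e v‖ ≤ ‖e‖ ^ 2 * ‖ℓ v‖ * ‖a‖ + ‖e‖ * (‖v‖ + ‖ℓ‖ * ‖v‖ * ‖a‖) := by
  rw [anisoScale_apply]
  refine (norm_add_le _ _).trans ?_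
  rw [norm_smul, norm_neg, norm_mul, norm_pow, norm_smul]
  gcongr
  refine (norm_add_le _ _).trans ?_
  rw [norm_smul]
  gcongr
  exact ℓ.le_opNorm v

theorem exists_norm_det_le [FiniteDimensional ℂ E] (R : ℝ) :
    ∃ C > 0, ∀ A : E →L[ℂ] E, ‖A‖ ≤ R → ‖A.det‖ ≤ C := by
  have : ProperSpace (E →L[ℂ] E) := FiniteDimensional.proper ℂ _
  obtain ⟨C, hC⟩ := (isCompact_closedBall (0 : E →L[ℂ] E) R).exists_bound_of_continuousOn
    (ContinuousLinearMap.continuous_det (𝕜 := ℂ) (E := E)).continuousOn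
  exact ⟨max C 1, by positivity, fun A hA =>
    (hC A (by simpa using hA)).trans (le_max_left _ _)⟩

theorem exists_norm_det_anisoScale_le [FiniteDimensional ℂ E] (ℓ : E →L[ℂ] ℂ) (a : E) :
    ∃ C > 0, ∀ e : ℝ, 1 ≤ e →
      ‖(anisoScale ℓ a e).det‖ ≤ C * e ^ (2 * Module.finrank ℂ E) := by
  obtain ⟨C, hC, H⟩ := exists_norm_det_le (E := E)
    (‖ℓ.smulRight a‖ + ‖ContinuousLinearMap.id ℂ E + ℓ.smulRight a‖)
  refine ⟨C, hC, fun e he => ?_⟩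
  have he0 : 0 < e := by linarith
  have hne : (e : ℂ) ≠ 0 := by exact_mod_cast he0.ne'
  have h1 : anisoScale ℓ a e = ((e : ℂ) ^ 2) • (-ℓ.smulRight a +
      (e : ℂ)⁻¹ • (ContinuousLinearMap.id ℂ E + ℓ.smulRight a)) := by
    rw [anisoScale, smul_add ((e : ℂ) ^ 2), smul_smul]
    congr 1
    · module
    · congr 1
      field_simp
  have h2 := H (-ℓ.smulRight a + (e : ℂ)⁻¹ • (ContinuousLinearMap.id ℂ E + ℓ.smulRight a)) (by
    refine (norm_add_le _ _).trans ?_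
    rw [norm_neg, norm_smul, norm_inv, Complex.norm_real, Real.norm_of_nonneg he0.le]
    gcongr
    exact mul_le_of_le_one_left (norm_nonneg _) (inv_le_one_of_one_le₀ he))
  rw [h1, ContinuousLinearMap.det, ContinuousLinearMap.toLinearMap_smul, LinearMap.det_smul,
    norm_mul, norm_pow, norm_pow, Complex.norm_real, Real.norm_of_nonneg he0.le, ← pow_mul, mul_comm]
  gcongr

theorem ContinuousLinearMap.det_comp_eq_mul (A B : E →L[ℂ] E) :
    (A.comp B).det = A.det * B.det := by
  simp [ContinuousLinearMap.det, LinearMap.det_comp]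

theorem hasFDerivAt_quadPoly (p : E) (ℓ : E →L[ℂ] ℂ) (B : E →L[ℂ] E →L[ℂ] ℂ) (z : E) :
    HasFDerivAt (quadPoly p ℓ B) (ℓ + (B (z - p) + B.flip (z - p))) z := by
  have h1 : HasFDerivAt (fun z : E => z - p) (ContinuousLinearMap.id ℂ E) z :=
    (hasFDerivAt_id z).sub_const p
  have h2 := (ℓ.hasFDerivAt.comp z h1).add ((B.hasFDerivAt.comp z h1).clm_apply h1)
  refine h2.congr_fderiv ?_
  ext v
  simp

end Determinant

section DeterminantBound

variable {E : Type*} [NormedAddCommGroup E] [NormedSpace ℂ E]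
  {Ω : Set E} {p a : E} {ℓ : E →L[ℂ] ℂ} {B : E →L[ℂ] E →L[ℂ] ℂ} {r c C₀ : ℝ}

/-- Anisotropic polydiscs around points of the line through `p` in direction `a` stay in an inner
region. -/
theorem exists_add_anisoScale_mem_innerRegion {C₁ : ℝ} (hC₁ : 0 ≤ C₁) (ha : ℓ a = -1) :
    ∃ C₄ > 0, ∃ η > 0, η ≤ 1 ∧ ∀ x : ℂ, C₄ * ‖x‖ ^ 2 < x.re → ∀ v : E, ‖v‖ < 1 →
      p + x • a + anisoScale ℓ a ((η * √x.re : ℝ) : ℂ) v ∈ innerRegion p ℓ C₁ ∧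
      x.re / 2 ≤ (-ℓ (x • a + anisoScale ℓ a ((η * √x.re : ℝ) : ℂ) v)).re ∧
      ‖ℓ (x • a + anisoScale ℓ a ((η * √x.re : ℝ) : ℂ) v)‖ ≤ 2 * ‖x‖ := by
  set K : ℝ := ‖ℓ‖ * ‖a‖ + (1 + ‖ℓ‖ * ‖a‖) with hK
  have hK0 : 0 < K := by positivity
  obtain ⟨η, hη, hη1, hη2, hη3⟩ : ∃ η : ℝ, 0 < η ∧ η ≤ 1 ∧ η ^ 2 * ‖ℓ‖ ≤ 1 / 2 ∧
      2 * C₁ * η ^ 2 * K ^ 2 ≤ 1 / 8 := by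
    have hc1 : ContinuousAt (fun η : ℝ => η ^ 2 * ‖ℓ‖) 0 := by fun_prop
    have hc2 : ContinuousAt (fun η : ℝ => 2 * C₁ * η ^ 2 * K ^ 2) 0 := by fun_prop
    have h1 : ∀ᶠ η in 𝓝[>] (0 : ℝ), η ^ 2 * ‖ℓ‖ < 1 / 2 :=
      (hc1.eventually_lt continuousAt_const (by norm_num)).filter_mono nhdsWithin_le_nhds
    have h2 : ∀ᶠ η in 𝓝[>] (0 : ℝ), 2 * C₁ * η ^ 2 * K ^ 2 < 1 / 8 :=
      (hc2.eventually_lt continuousAt_const (by norm_num)).filter_mono nhdsWithin_le_nhds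
    obtain ⟨η, h1, h2, h3⟩ := (h1.and (h2.and (Ioo_mem_nhdsGT (zero_lt_one' ℝ)))).exists
    exact ⟨η, h3.1, h3.2.le, h1.le, h2.le⟩
  refine ⟨16 * C₁ * ‖a‖ ^ 2 + 1, by positivity, η, hη, hη1, fun x hx v hv => ?_⟩
  have hx2 : 0 ≤ ‖x‖ ^ 2 := by positivity
  have hxC : 0 ≤ 16 * C₁ * ‖a‖ ^ 2 * ‖x‖ ^ 2 := by positivity
  have hx0 : 0 < x.re := by nlinarith
  have hxle : x.re ≤ ‖x‖ := Complex.re_le_norm x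
  have hx1 : x.re ≤ 1 := by nlinarith
  set d : ℝ := η * √x.re with hd
  have hd0 : 0 ≤ d := by positivity
  have hdsq : d ^ 2 = η ^ 2 * x.re := by rw [hd, mul_pow, Real.sq_sqrt hx0.le]
  have hd1 : d ≤ 1 := by
    have : √x.re ≤ 1 := Real.sqrt_le_one.2 hx1
    nlinarith [Real.sqrt_nonneg x.re]
  have hnd : ‖(d : ℂ)‖ = d := by rw [Complex.norm_real, Real.norm_of_nonneg hd0]
  have hℓv : ‖ℓ v‖ ≤ ‖ℓ‖ := (ℓ.le_opNorm v).trans (mul_le_of_le_one_right (norm_nonneg _) hv.le)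
  have hℓs : ℓ (x • a + anisoScale ℓ a (d : ℂ) v) = -x + (d : ℂ) ^ 2 * ℓ v := by
    rw [map_add, map_smul, ha, apply_anisoScale ha]
    simp
  have hw : ‖(d : ℂ) ^ 2 * ℓ v‖ ≤ x.re / 2 := by
    rw [norm_mul, norm_pow, hnd, hdsq]
    calc η ^ 2 * x.re * ‖ℓ v‖ ≤ η ^ 2 * x.re * ‖ℓ‖ := by gcongr
      _ = η ^ 2 * ‖ℓ‖ * x.re := by ring
      _ ≤ 1 / 2 * x.re := by gcongr
      _ = _ := by ring
  have hre : x.re / 2 ≤ (-ℓ (x • a + anisoScale ℓ a (d : ℂ) v)).re := by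
    rw [hℓs, Complex.neg_re, Complex.add_re, Complex.neg_re]
    have := (Complex.re_le_norm ((d : ℂ) ^ 2 * ℓ v)).trans hw
    linarith
  have hS : ‖anisoScale ℓ a (d : ℂ) v‖ ≤ d * K := by
    refine (norm_anisoScale_apply_le ℓ a d v).trans ?_
    rw [hnd]
    have h1 : d ^ 2 * ‖ℓ v‖ * ‖a‖ ≤ d * (‖ℓ‖ * ‖a‖) := by
      have : d ^ 2 ≤ d := by nlinarith
      calc d ^ 2 * ‖ℓ v‖ * ‖a‖ ≤ d * ‖ℓ‖ * ‖a‖ := by gcongr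
        _ = _ := by ring
    have h2 : d * (‖v‖ + ‖ℓ‖ * ‖v‖ * ‖a‖) ≤ d * (1 + ‖ℓ‖ * ‖a‖) := by
      have : ‖ℓ‖ * ‖v‖ * ‖a‖ ≤ ‖ℓ‖ * 1 * ‖a‖ := by gcongr
      refine mul_le_mul_of_nonneg_left ?_ hd0
      linarith
    rw [hK]
    linarith
  refine ⟨?_, hre, ?_⟩
  · have e1 : p + x • a + anisoScale ℓ a (d : ℂ) v - p = x • a + anisoScale ℓ a (d : ℂ) v := by
      abel
    rw [innerRegion, mem_ofPred_eq, e1]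
    refine lt_of_lt_of_le ?_ hre
    have h1 : ‖x • a + anisoScale ℓ a (d : ℂ) v‖ ≤ ‖x‖ * ‖a‖ + d * K :=
      (norm_add_le _ _).trans (by rw [norm_smul]; gcongr)
    have h2 : ‖x • a + anisoScale ℓ a (d : ℂ) v‖ ^ 2 ≤ 2 * (‖x‖ * ‖a‖) ^ 2 + 2 * (d * K) ^ 2 := by
      refine (pow_le_pow_left₀ (norm_nonneg _) h1 2).trans ?_
      nlinarith [sq_nonneg (‖x‖ * ‖a‖ - d * K)]
    calc C₁ * ‖x • a + anisoScale ℓ a (d : ℂ) v‖ ^ 2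
        ≤ C₁ * (2 * (‖x‖ * ‖a‖) ^ 2 + 2 * (d * K) ^ 2) := by gcongr
      _ = 16 * C₁ * ‖a‖ ^ 2 * ‖x‖ ^ 2 / 8 + 2 * C₁ * η ^ 2 * K ^ 2 * x.re := by
          rw [mul_pow d, hdsq]; ring
      _ ≤ 16 * C₁ * ‖a‖ ^ 2 * ‖x‖ ^ 2 / 8 + 1 / 8 * x.re := by gcongr
      _ < x.re / 2 := by nlinarith
  · rw [hℓs]
    refine (norm_add_le _ _).trans ?_
    rw [norm_neg]
    linarith

theorem IsSupportAt.exists_norm_det_fderiv_le [FiniteDimensional ℂ E]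
    (h : IsSupportAt Ω p ℓ B r c C₀) (hΩ : IsOpen Ω)
    (hbd : Bornology.IsBounded Ω) (ha : ℓ a = -1) :
    ∃ C₄ > 0, ∃ C₅ > 0, ∀ G : E → E, DifferentiableOn ℂ G Ω → MapsTo G Ω Ω → FlatAt Ω p 1 G →
      ∀ x : ℂ, C₄ * ‖x‖ ^ 2 < x.re → p + x • a ∈ Ω ∧ ‖G (p + x • a) - p‖ < r / 2 ∧
        c * ‖G (p + x • a) - p‖ ^ 2 ≤ 16 * (‖x‖ ^ 2 / x.re) ∧
        ‖(fderiv ℂ G (p + x • a)).det‖ ≤ C₅ * (‖x‖ / x.re) ^ (2 * Module.finrank ℂ E) := by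
  obtain ⟨C₁, hC₁, hunif⟩ := h.exists_uniform_bound hbd
  have hC₁0 : 0 ≤ C₁ := h.C₀_nonneg.trans hC₁
  have hc := h.c_pos
  obtain ⟨C₄, hC₄, η, hη, hη1, hreg⟩ :=
    exists_add_anisoScale_mem_innerRegion (p := p) hC₁0 ha
  set A₁ : ℝ := 2 * (4 / √c) with hA₁
  set A₂ : ℝ := 2 * 16 + 2 * (‖B‖ * (4 / √c)) * A₁ with hA₂
  obtain ⟨D₁, hD₁, hdet⟩ := exists_norm_det_le (E := E)
    (A₂ * ‖a‖ + (A₁ + ‖ℓ‖ * A₁ * ‖a‖))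
  obtain ⟨D₂, hD₂, hdetS⟩ := exists_norm_det_anisoScale_le ℓ a
  refine ⟨C₄, hC₄, D₁ * (D₂ * η⁻¹ ^ (2 * Module.finrank ℂ E)), by positivity,
    fun G hG hmaps hflat x hx => ?_⟩
  have hx0 : 0 < x.re := lt_of_le_of_lt (by positivity) hx
  have hxle : x.re ≤ ‖x‖ := Complex.re_le_norm x
  have hxn : 0 < ‖x‖ := hx0.trans_le hxle
  set d : ℝ := η * √x.re with hd
  have hsq : 0 < √x.re := Real.sqrt_pos.2 hx0
  have hd0 : 0 < d := by positivity
  set k : ℝ := ‖x‖ / √x.re with hk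
  have hk0 : 0 < k := by positivity
  have hk2 : k ^ 2 = ‖x‖ ^ 2 / x.re := by rw [hk, div_pow, Real.sq_sqrt hx0.le]
  set z : E := p + x • a with hz
  set S : E →L[ℂ] E := anisoScale ℓ a (d : ℂ) with hS
  have hVΩ : innerRegion p ℓ C₁ ⊆ Ω := by
    refine Subset.trans (fun w hw => ?_) h.inner_subset
    exact lt_of_le_of_lt (mul_le_mul_of_nonneg_right hC₁ (by positivity)) hw
  have hmem : ∀ v : E, ‖v‖ < 1 → z + S v ∈ Ω := fun v hv => hVΩ (hreg x hx v hv).1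
  have hbound : ∀ v : E, ‖v‖ < 1 → ‖G (z + S v) - p‖ < r / 2 ∧
      ‖quadPoly p ℓ B (G (z + S v))‖ ≤ 16 * k ^ 2 := by
    intro v hv
    obtain ⟨h1, h2, h3⟩ := hreg x hx v hv
    obtain ⟨h4, h5⟩ := hunif G hG hmaps hflat _ h1
    refine ⟨h4, ?_⟩
    have e1 : p + x • a + anisoScale ℓ a (d : ℂ) v - p = x • a + anisoScale ℓ a (d : ℂ) v := by
      abel
    rw [e1] at h5
    set X := -ℓ (x • a + anisoScale ℓ a (d : ℂ) v) with hX
    rw [← norm_neg, ← hX] at h3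
    have hX0 : 0 < X.re := by linarith
    have hXn : 0 < ‖X‖ := hX0.trans_le (Complex.re_le_norm X)
    have h6 : 1 / (8 * k ^ 2) ≤ (X⁻¹).re := by
      rw [Complex.inv_re, Complex.normSq_eq_norm_sq, hk2, div_le_div_iff₀ (by positivity)
        (by positivity)]
      have : ‖X‖ ^ 2 ≤ (2 * ‖x‖) ^ 2 := by gcongr
      have e2 : X.re * (8 * (‖x‖ ^ 2 / x.re)) = (X.re / x.re) * (8 * ‖x‖ ^ 2) := by
        field_simp
      have e3 : 1 / 2 ≤ X.re / x.re := by rw [le_div_iff₀ hx0]; linarith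
      rw [e2]
      nlinarith [sq_nonneg ‖x‖]
    have h7 : 1 / (16 * k ^ 2) ≤ ‖quadPoly p ℓ B (G (z + S v))‖⁻¹ := by
      rw [← norm_inv, ← norm_neg]
      refine le_trans ?_ (Complex.re_le_norm _)
      refine le_trans ?_ h5
      have : 1 / (16 * k ^ 2) = 1 / (8 * k ^ 2) / 2 := by field_simp; norm_num
      linarith
    rcases eq_or_ne (quadPoly p ℓ B (G (z + S v))) 0 with h0 | h0
    · rw [h0, norm_zero]; positivity
    · rw [one_div] at h7
      exact (inv_le_inv₀ (by positivity) (norm_pos_iff.2 h0)).1 h7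
  have hnorm : ∀ v : E, ‖v‖ < 1 → c * ‖G (z + S v) - p‖ ^ 2 ≤ 16 * k ^ 2 := by
    intro v hv
    obtain ⟨h1, h2⟩ := hbound v hv
    have h3 := h.peak _ (subset_closure (hmaps (hmem v hv)))
      (by rw [mem_ball, dist_eq_norm]; linarith [h.r_pos])
    have h4 := (neg_le_abs _).trans (Complex.abs_re_le_norm (quadPoly p ℓ B (G (z + S v))))
    linarith
  have hnorm' : ∀ v : E, ‖v‖ < 1 → ‖G (z + S v) - p‖ ≤ 4 / √c * k := by
    intro v hv
    refine le_of_sq_le_sq ?_ (by positivity)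
    rw [mul_pow, div_pow, Real.sq_sqrt hc.le]
    have := hnorm v hv
    rw [div_mul_eq_mul_div, le_div_iff₀ hc]
    linarith
  have hz0 : z + S 0 = z := by simp
  have h00 : ‖(0 : E)‖ < 1 := by simp
  have hzΩ : z ∈ Ω := hz0 ▸ hmem 0 h00
  refine ⟨hzΩ, ?_, ?_, ?_⟩
  · simpa [hz0] using (hbound 0 h00).1
  · have := hnorm 0 h00
    rwa [hz0, hk2] at this
  set L := fderiv ℂ G z with hL
  have hshift : ∀ v : E, HasFDerivAt (fun v => z + S v) S v := fun v =>
    S.hasFDerivAt.const_add z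
  have hGS : DifferentiableOn ℂ (fun v => G (z + S v)) (ball 0 1) := by
    refine hG.comp (fun v _ => (hshift v).differentiableAt.differentiableWithinAt) fun v hv => ?_
    exact hmem v (by simpa using hv)
  have hGd : HasFDerivAt G L (z + S 0) := by
    rw [hz0]
    exact ((hG z hzΩ).differentiableAt (hΩ.mem_nhds hzΩ)).hasFDerivAt
  have hGSd : HasFDerivAt (fun v => G (z + S v)) (L.comp S) 0 := hGd.comp 0 (hshift 0)
  set T := L.comp S with hT
  have hTn : ‖T‖ ≤ A₁ * k := by
    have h1 := norm_fderiv_le_of_bounded_on_ball (f := fun v => G (z + S v) - p) one_pos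
      (hGS.sub_const p) (B := 4 / √c * k) (fun v hv => hnorm' v (by simpa using hv))
    rw [(hGSd.sub_const p).fderiv] at h1
    rw [hA₁]
    linarith
  have hℓT : ‖ℓ.comp T‖ ≤ A₂ * k ^ 2 := by
    have h1 := norm_fderiv_le_of_bounded_on_ball (f := fun v => quadPoly p ℓ B (G (z + S v)))
      one_pos ((differentiable_quadPoly p ℓ B).comp_differentiableOn hGS) (B := 16 * k ^ 2)
      (fun v hv => (hbound v (by simpa using hv)).2)
    set w := G (z + S 0) - p with hw
    have hwn : ‖w‖ ≤ 4 / √c * k := hnorm' 0 h00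
    have h2 := ((hasFDerivAt_quadPoly p ℓ B (G (z + S 0))).comp 0 hGSd).fderiv
    rw [← hw] at h2
    have h3 : ‖(ℓ + (B w + B.flip w)).comp T‖ ≤ 2 * (16 * k ^ 2) / 1 := by
      rw [← h2]; exact h1
    have h4 : ℓ.comp T = (ℓ + (B w + B.flip w)).comp T - (B w + B.flip w).comp T := by
      ext v; simp
    have h5 : ‖B w + B.flip w‖ ≤ 2 * (‖B‖ * (4 / √c * k)) := by
      refine (norm_add_le _ _).trans ?_
      have h6 : ‖B w‖ ≤ ‖B‖ * (4 / √c * k) := (B.le_opNorm w).trans (by gcongr)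
      have h7 : ‖B.flip w‖ ≤ ‖B‖ * (4 / √c * k) := (B.flip.le_opNorm w).trans (by
        rw [ContinuousLinearMap.opNorm_flip]; gcongr)
      linarith
    rw [h4]
    refine (norm_sub_le _ _).trans ?_
    have h8 : ‖(B w + B.flip w).comp T‖ ≤ 2 * (‖B‖ * (4 / √c * k)) * (A₁ * k) :=
      (ContinuousLinearMap.opNorm_comp_le _ _).trans (by gcongr)
    rw [hA₂]
    calc _ ≤ 2 * (16 * k ^ 2) / 1 + 2 * (‖B‖ * (4 / √c * k)) * (A₁ * k) := add_le_add h3 h8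
      _ = _ := by ring
  set M : E →L[ℂ] E := (anisoScale ℓ a ((k⁻¹ : ℝ) : ℂ)).comp T with hM
  have hMn : ‖M‖ ≤ A₂ * ‖a‖ + (A₁ + ‖ℓ‖ * A₁ * ‖a‖) := by
    refine ContinuousLinearMap.opNorm_le_bound _ (by positivity) fun v => ?_
    rw [hM, ContinuousLinearMap.comp_apply]
    refine (norm_anisoScale_apply_le _ _ _ _).trans ?_
    rw [Complex.norm_real, Real.norm_of_nonneg (by positivity)]
    have h1 : ‖ℓ (T v)‖ ≤ A₂ * k ^ 2 * ‖v‖ := (ℓ.comp T).le_of_opNorm_le hℓT v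
    have h2 : ‖T v‖ ≤ A₁ * k * ‖v‖ := T.le_of_opNorm_le hTn v
    calc k⁻¹ ^ 2 * ‖ℓ (T v)‖ * ‖a‖ + k⁻¹ * (‖T v‖ + ‖ℓ‖ * ‖T v‖ * ‖a‖)
        ≤ k⁻¹ ^ 2 * (A₂ * k ^ 2 * ‖v‖) * ‖a‖ +
          k⁻¹ * (A₁ * k * ‖v‖ + ‖ℓ‖ * (A₁ * k * ‖v‖) * ‖a‖) := by gcongr
      _ = _ := by field_simp
  have hLM : L = ((anisoScale ℓ a (k : ℂ)).comp M).comp (anisoScale ℓ a ((d⁻¹ : ℝ) : ℂ)) := by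
    have hkC : (k : ℂ) ≠ 0 := by exact_mod_cast hk0.ne'
    have hdC : (d : ℂ) ≠ 0 := by exact_mod_cast hd0.ne'
    rw [hM, hT, ← ContinuousLinearMap.comp_assoc, anisoScale_comp ha, Complex.ofReal_inv,
      mul_inv_cancel₀ hkC, anisoScale_one, ContinuousLinearMap.id_comp,
      ContinuousLinearMap.comp_assoc, hS, anisoScale_comp ha, Complex.ofReal_inv,
      mul_inv_cancel₀ hdC, anisoScale_one, ContinuousLinearMap.comp_id]
  have hkd : k * d⁻¹ = η⁻¹ * (‖x‖ / x.re) := by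
    rw [hk, hd, mul_inv]
    have : x.re = √x.re * √x.re := (Real.mul_self_sqrt hx0.le).symm
    nth_rw 3 [this]
    field_simp
  have hLdet : L.det = M.det * (anisoScale ℓ a ((k * d⁻¹ : ℝ) : ℂ)).det := by
    clear_value M
    rw [hLM, ContinuousLinearMap.det_comp_eq_mul, ContinuousLinearMap.det_comp_eq_mul,
      Complex.ofReal_mul, ← anisoScale_comp ha, ContinuousLinearMap.det_comp_eq_mul]
    ring
  have hone : 1 ≤ k * d⁻¹ := by
    rw [hkd]
    have h1 : 1 ≤ η⁻¹ := (one_le_inv₀ hη).2 hη1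
    have h2 : 1 ≤ ‖x‖ / x.re := (one_le_div hx0).2 hxle
    nlinarith
  rw [hLdet, norm_mul]
  calc ‖M.det‖ * ‖(anisoScale ℓ a ((k * d⁻¹ : ℝ) : ℂ)).det‖
      ≤ D₁ * (D₂ * (k * d⁻¹) ^ (2 * Module.finrank ℂ E)) := by
        gcongr
        · exact hdet M hMn
        · exact hdetS _ hone
    _ = _ := by rw [hkd, mul_pow]; ring

end DeterminantBound

section Hopf

/-- A quantitative Hopf lemma at the boundary point `0` of the disc `ball x₀ x₀`. -/
theorem norm_le_of_hopf {f : ℂ → ℂ} {x₀ s M q : ℝ} {N j : ℕ} (hs : 0 < s) (hsx : s < x₀)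
    (hM : 0 ≤ M) (hq : 0 ≤ q) (hqs : q ≤ s / x₀) (hf : DifferentiableOn ℂ f (ball (x₀ : ℂ) x₀))
    (hbound : ∀ x ∈ ball (x₀ : ℂ) x₀, ‖f x‖ ≤ M * (‖x‖ / x.re) ^ N)
    (hsmall : ∀ x ∈ closedBall (x₀ : ℂ) s, ‖f x‖ ≤ M * q ^ j) {t : ℝ} (ht : 0 < t)
    (hts : t < x₀ - s) :
    ‖f t‖ ≤ M * 2 ^ N * (1 - t / (2 * x₀)) ^ j := by
  have hx₀ : 0 < x₀ := hs.trans hsx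
  set R : ℝ := x₀ - t / 2 with hR
  have hR0 : 0 < R := by linarith
  have hsR : s < R := by linarith
  set U : Set ℂ := ball (x₀ : ℂ) R \ closedBall (x₀ : ℂ) s with hU
  have hclosure : closure U ⊆ closedBall (x₀ : ℂ) R ∩ {x | s ≤ dist x x₀} := by
    refine closure_minimal (fun x hx => ⟨ball_subset_closedBall hx.1, ?_⟩) ?_
    · have := hx.2
      simp only [mem_closedBall, not_le] at this
      exact this.le
    · exact isClosed_closedBall.inter (isClosed_le continuous_const (by fun_prop))
  have hUo : IsOpen U := isOpen_ball.sdiff isClosed_closedBall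
  have hre : ∀ x ∈ closedBall (x₀ : ℂ) R, t / 2 ≤ x.re := by
    intro x hx
    rw [mem_closedBall, dist_eq_norm] at hx
    have := (abs_le.1 ((Complex.abs_re_le_norm _).trans hx)).1
    simp only [Complex.sub_re, Complex.ofReal_re] at this
    linarith
  have hball : closedBall (x₀ : ℂ) R ⊆ ball (x₀ : ℂ) x₀ :=
    closedBall_subset_ball (by linarith)
  set u : ℂ → ℂ := fun x => f x * (t / x) ^ N * ((x - x₀)⁻¹) ^ j with hu
  have hud : DiffContOnCl ℂ u U := by
    refine DifferentiableOn.diffContOnCl fun x hx => ?_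
    obtain ⟨h1, h2⟩ := hclosure hx
    have hx0 : x ≠ 0 := fun h0 => by
      have := hre x h1
      rw [h0, Complex.zero_re] at this
      linarith
    have hxx : x - x₀ ≠ 0 := fun h0 => by
      rw [mem_ofPred_eq, dist_eq_norm, h0, norm_zero] at h2
      linarith
    have hfx : DifferentiableAt ℂ f x :=
      (hf x (hball h1)).differentiableAt (isOpen_ball.mem_nhds (hball h1))
    refine DifferentiableAt.differentiableWithinAt ?_
    simp only [hu]
    fun_prop (disch := assumption)
  have hbd : Bornology.IsBounded U := isBounded_ball.subset sdiff_subset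
  have hfr : ∀ x ∈ frontier U, ‖u x‖ ≤ M * 2 ^ N * (R⁻¹) ^ j := by
    intro x hx
    obtain ⟨h1, h2⟩ := hclosure (frontier_subset_closure hx)
    have hxU : x ∉ U := by
      rw [hUo.frontier_eq] at hx
      exact hx.2
    have hxre := hre x h1
    have hxn : x.re ≤ ‖x‖ := Complex.re_le_norm x
    have hx0 : 0 < x.re := by linarith
    have hxn0 : 0 < ‖x‖ := by linarith
    have hun : ‖u x‖ = ‖f x‖ * (t / ‖x‖) ^ N * (dist x x₀)⁻¹ ^ j := by
      simp only [hu, norm_mul, norm_pow, norm_div, norm_inv, Complex.norm_real,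
        Real.norm_of_nonneg ht.le, dist_eq_norm]
    rw [hun]
    have h3 : dist x x₀ = R ∨ dist x x₀ = s := by
      rcases eq_or_lt_of_le (mem_closedBall.1 h1) with h4 | h4
      · exact Or.inl h4
      · right
        by_contra h5
        exact hxU ⟨h4, fun h6 => h5 (le_antisymm (mem_closedBall.1 h6) h2)⟩
    rcases h3 with h3 | h3
    · rw [h3]
      have h4 := hbound x (hball h1)
      calc ‖f x‖ * (t / ‖x‖) ^ N * R⁻¹ ^ j
          ≤ M * (‖x‖ / x.re) ^ N * (t / ‖x‖) ^ N * R⁻¹ ^ j := by gcongr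
        _ = M * (t / x.re) ^ N * R⁻¹ ^ j := by
            rw [mul_assoc M, ← mul_pow]
            congr 3
            field_simp
        _ ≤ M * 2 ^ N * R⁻¹ ^ j := by
            gcongr
            rw [div_le_iff₀ hx0]
            linarith
    · rw [h3]
      have h4 := hsmall x (by rw [mem_closedBall, h3])
      have h5 : t / ‖x‖ ≤ 2 := by
        rw [div_le_iff₀ hxn0]
        linarith
      have h6 : q * s⁻¹ ≤ R⁻¹ := by
        calc q * s⁻¹ ≤ s / x₀ * s⁻¹ := by gcongr
          _ = x₀⁻¹ := by field_simp
          _ ≤ R⁻¹ := by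
              gcongr
              linarith
      calc ‖f x‖ * (t / ‖x‖) ^ N * s⁻¹ ^ j ≤ M * q ^ j * 2 ^ N * s⁻¹ ^ j := by gcongr
        _ = M * 2 ^ N * (q * s⁻¹) ^ j := by rw [mul_pow]; ring
        _ ≤ M * 2 ^ N * R⁻¹ ^ j := by gcongr
  have hdist : dist (t : ℂ) x₀ = x₀ - t := by
    rw [dist_comm, dist_eq_norm, ← Complex.ofReal_sub, Complex.norm_real,
      Real.norm_of_nonneg (by linarith)]
  have htU : (t : ℂ) ∈ U := by
    refine ⟨?_, ?_⟩
    · rw [mem_ball, hdist]; linarith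
    · rw [mem_closedBall, hdist]; linarith
  have hfin := Complex.norm_le_of_forall_mem_frontier_norm_le hbd hud hfr (subset_closure htU)
  have htne : (t : ℂ) ≠ 0 := by exact_mod_cast ht.ne'
  have hut : ‖u t‖ = ‖f t‖ * (x₀ - t)⁻¹ ^ j := by
    simp only [hu, div_self htne, one_pow, mul_one, norm_mul, norm_pow, norm_inv]
    rw [← dist_eq_norm, hdist]
  have hpos : 0 < x₀ - t := by linarith
  rw [hut, inv_pow, ← div_eq_mul_inv, div_le_iff₀ (by positivity)] at hfin
  refine hfin.trans ?_
  rw [mul_assoc, ← mul_pow]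
  gcongr
  rw [inv_mul_le_iff₀ hR0, hR]
  have e1 : (x₀ - t / 2) * (1 - t / (2 * x₀)) = x₀ - t + t ^ 2 / (4 * x₀) := by
    field_simp
    ring
  rw [e1]
  have : 0 < t ^ 2 / (4 * x₀) := by positivity
  linarith

end Hopf

section LowerBound

variable {E : Type*} [NormedAddCommGroup E] [NormedSpace ℂ E] {Ω : Set E} {p a : E} {F : E → E}

theorem FlatAt.norm_iterate_sub_le (hF : FlatAt Ω p 2 F) {c t₀ : ℝ} (hc : 0 < c) (ht₀ : 0 < t₀)
    (hball : ∀ t : ℝ, 0 < t → t < t₀ → ball (p + (t : ℂ) • a) (c * t) ⊆ Ω) {K ε : ℝ} (hK : 0 ≤ K)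
    (hε : 0 < ε) : ∃ t₁ > 0, t₁ ≤ t₀ ∧ ∀ t : ℝ, 0 < t → t < t₁ → ∀ m : ℕ, m * t ≤ K →
      ∀ z ∈ ball (p + (t : ℂ) • a) (c / 2 * t), ‖F^[m] z - z‖ ≤ ε * t := by
  set M : ℝ := ‖a‖ + c with hM
  have hM0 : 0 < M := by positivity
  set ε' : ℝ := min ε (c / 2) / (M ^ 2 * (K + 1)) with hε'
  have hmin : 0 < min ε (c / 2) := by positivity
  have hε'0 : 0 < ε' := by positivity
  obtain ⟨δ, hδ, H⟩ := hF ε' hε'0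
  refine ⟨min t₀ (δ / M), by positivity, min_le_left _ _, fun t ht htt m hm z hz => ?_⟩
  have htt₀ : t < t₀ := htt.trans_le (min_le_left _ _)
  have htδ : M * t < δ := by
    have := htt.trans_le (min_le_right _ _)
    rw [lt_div_iff₀ hM0] at this
    linarith
  have hnear : ∀ w ∈ ball (p + (t : ℂ) • a) (c * t), ‖w - p‖ ≤ M * t := by
    intro w hw
    rw [mem_ball, dist_eq_norm] at hw
    have e : w - p = (w - (p + (t : ℂ) • a)) + (t : ℂ) • a := by abel
    rw [e]
    refine (norm_add_le _ _).trans ?_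
    rw [norm_smul, Complex.norm_real, Real.norm_of_nonneg ht.le, hM]
    linarith
  have hcoef : ∀ i : ℕ, i ≤ m → (i : ℝ) * (ε' * (M * t) ^ 2) ≤ min ε (c / 2) * t := by
    intro i hi
    have h1 : (i : ℝ) * t ≤ K + 1 := by
      have : (i : ℝ) ≤ m := by exact_mod_cast hi
      nlinarith
    calc (i : ℝ) * (ε' * (M * t) ^ 2) = (i * t) * (min ε (c / 2) / (K + 1)) * t := by
          rw [hε']; field_simp
      _ ≤ (K + 1) * (min ε (c / 2) / (K + 1)) * t := by gcongr
      _ = _ := by field_simp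
  have hstep : ∀ i : ℕ, i ≤ m → ‖F^[i] z - z‖ ≤ i * (ε' * (M * t) ^ 2) := by
    intro i hi
    induction i with
    | zero => simp
    | succ i ih =>
      have ih' := ih (by omega)
      have hci : (i : ℝ) * (ε' * (M * t) ^ 2) ≤ c / 2 * t :=
        (hcoef i (by omega)).trans (by gcongr; exact min_le_right _ _)
      have hmem : F^[i] z ∈ ball (p + (t : ℂ) • a) (c * t) := by
        rw [mem_ball, dist_eq_norm] at hz ⊢
        have := norm_sub_le_norm_sub_add_norm_sub (F^[i] z) z (p + (t : ℂ) • a)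
        linarith
      have h1 := hnear _ hmem
      have h2 := H _ (hball t ht htt₀ hmem) (h1.trans_lt htδ)
      have h3 : ε' * ‖F^[i] z - p‖ ^ 2 ≤ ε' * (M * t) ^ 2 := by gcongr
      have h4 := norm_sub_le_norm_sub_add_norm_sub (F (F^[i] z)) (F^[i] z) z
      rw [iterate_succ_apply']
      push_cast
      linarith
  refine ((hstep m le_rfl).trans (hcoef m le_rfl)).trans ?_
  gcongr
  exact min_le_left _ _

theorem FlatAt.exists_le_norm_det_fderiv_iterate [FiniteDimensional ℂ E] (hF : FlatAt Ω p 2 F)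
    (hd : DifferentiableOn ℂ F Ω) (hmaps : MapsTo F Ω Ω) {c t₀ : ℝ} (hc : 0 < c) (ht₀ : 0 < t₀)
    (hball : ∀ t : ℝ, 0 < t → t < t₀ → ball (p + (t : ℂ) • a) (c * t) ⊆ Ω) {K : ℝ} (hK : 0 ≤ K) :
    ∃ t₁ > 0, ∀ t : ℝ, 0 < t → t < t₁ → ∀ m : ℕ, m * t ≤ K →
      1 / 2 ≤ ‖(fderiv ℂ F^[m] (p + (t : ℂ) • a)).det‖ := by
  have hdet : ∀ᶠ A : E →L[ℂ] E in 𝓝 (ContinuousLinearMap.id ℂ E), 1 / 2 < ‖A.det‖ := by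
    have h1 : ContinuousAt (fun A : E →L[ℂ] E => ‖A.det‖) (ContinuousLinearMap.id ℂ E) :=
      (ContinuousLinearMap.continuous_det (𝕜 := ℂ) (E := E)).norm.continuousAt
    refine h1.eventually (lt_mem_nhds ?_)
    simp [ContinuousLinearMap.det]
    norm_num
  obtain ⟨η, hη, hdetη⟩ := Metric.eventually_nhds_iff.1 hdet
  obtain ⟨t₁, ht₁, ht₁₀, H⟩ := hF.norm_iterate_sub_le hc ht₀ hball hK (ε := η * c / 8)
    (by positivity)
  refine ⟨t₁, ht₁, fun t ht htt m hm => (hdetη ?_).le⟩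
  have hsub : ball (p + (t : ℂ) • a) (c / 2 * t) ⊆ Ω :=
    (ball_subset_ball (by nlinarith)).trans (hball t ht (htt.trans_le ht₁₀))
  have hdi : DifferentiableOn ℂ F^[m] (ball (p + (t : ℂ) • a) (c / 2 * t)) :=
    (hd.iterate_of_mapsTo hmaps m).mono hsub
  have h1 := norm_fderiv_le_of_bounded_on_ball (f := fun z => F^[m] z - z)
    (x := p + (t : ℂ) • a) (by positivity : 0 < c / 2 * t) (hdi.sub differentiableOn_id)
    (H t ht htt m hm)
  have hda : DifferentiableAt ℂ F^[m] (p + (t : ℂ) • a) :=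
    hdi.differentiableAt (ball_mem_nhds _ (by positivity))
  have h2 : fderiv ℂ (fun z => F^[m] z - z) (p + (t : ℂ) • a) =
      fderiv ℂ F^[m] (p + (t : ℂ) • a) - ContinuousLinearMap.id ℂ E :=
    (hda.hasFDerivAt.sub (hasFDerivAt_id _)).fderiv
  rw [h2] at h1
  rw [dist_eq_norm]
  refine h1.trans_lt ?_
  have : 2 * (η * c / 8 * t) / (c / 2 * t) = η / 2 := by field_simp; norm_num
  rw [this]
  linarith

end LowerBound

section Contraction

variable {E : Type*} [NormedAddCommGroup E] [NormedSpace ℂ E] {Ω : Set E} {F : E → E}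

theorem differentiable_det [FiniteDimensional ℂ E] :
    Differentiable ℂ (fun A : E →L[ℂ] E => A.det) := by
  classical
  set b := Module.finBasis ℂ E
  have h1 : (fun A : E →L[ℂ] E => A.det) = fun A : E →L[ℂ] E =>
      ∑ σ : Equiv.Perm (Fin (Module.finrank ℂ E)), (Equiv.Perm.sign σ : ℂ) *
        ∏ i, (LinearMap.toContinuousLinearMap (b.coord (σ i))) (A (b i)) := by
    ext A
    rw [ContinuousLinearMap.det, ← LinearMap.det_toMatrix b, Matrix.det_apply']
    simp [LinearMap.toMatrix_apply]
  rw [h1]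
  fun_prop

theorem det_fderiv_iterate_add (hΩ : IsOpen Ω) (hF : DifferentiableOn ℂ F Ω)
    (hmaps : MapsTo F Ω Ω) (i m : ℕ) {z : E} (hz : z ∈ Ω) :
    (fderiv ℂ F^[i + m] z).det = (fderiv ℂ F^[i] (F^[m] z)).det * (fderiv ℂ F^[m] z).det := by
  have h1 : DifferentiableAt ℂ F^[i] (F^[m] z) :=
    (hF.iterate_of_mapsTo hmaps i).differentiableAt (hΩ.mem_nhds (hmaps.iterate m hz))
  have h2 : DifferentiableAt ℂ F^[m] z :=
    (hF.iterate_of_mapsTo hmaps m).differentiableAt (hΩ.mem_nhds hz)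
  rw [iterate_add, fderiv_comp z h1 h2, ContinuousLinearMap.det_comp_eq_mul]

theorem det_fderiv_iterate_of_fixed (hΩ : IsOpen Ω) (hF : DifferentiableOn ℂ F Ω)
    (hmaps : MapsTo F Ω Ω) (m : ℕ) {x : E} (hx : x ∈ Ω) (hfix : F x = x) :
    (fderiv ℂ F^[m] x).det = (fderiv ℂ F x).det ^ m := by
  induction m with
  | zero => simp [ContinuousLinearMap.det]
  | succ m ih =>
    rw [det_fderiv_iterate_add hΩ hF hmaps m 1 hx, iterate_one, hfix, ih, pow_succ]

/-- If an orbit accumulates at a fixed point where the derivative has determinant of modulus less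
than one, then the Jacobian determinants of the iterates decay geometrically near the orbit. -/
theorem exists_norm_det_fderiv_iterate_le [FiniteDimensional ℂ E] (hΩ : IsOpen Ω)
    {D : ℝ} (hD : ∀ z ∈ Ω, ‖z‖ ≤ D) (hF : DifferentiableOn ℂ F Ω) (hmaps : MapsTo F Ω Ω)
    {x z₀ : E} (hx : x ∈ Ω) (hfix : F x = x) (hdet : ‖(fderiv ℂ F x).det‖ < 1) (hz₀ : z₀ ∈ Ω)
    (hacc : ∀ δ > 0, ∃ m, ‖F^[m] z₀ - x‖ < δ) :
    ∃ μ > 0, μ < 1 ∧ ∃ C > 0, ∃ s > 0, ∀ z ∈ ball z₀ s, ∀ m : ℕ,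
      ‖(fderiv ℂ F^[m] z).det‖ ≤ C * μ ^ m := by
  have hD0 : 0 ≤ D := (norm_nonneg _).trans (hD x hx)
  have hit := hF.iterate_of_mapsTo hmaps
  obtain ⟨R, hR, hRΩ⟩ := Metric.isOpen_iff.1 hΩ x hx
  have hRΩ' : ball x (2 * (R / 2)) ⊆ Ω := by rwa [mul_div_cancel₀ R two_ne_zero]
  set Λ : ℝ := 2 * D / (R / 2) + 1 with hΛ
  have hΛ1 : 1 ≤ Λ := by
    have : 0 ≤ 2 * D / (R / 2) := by positivity
    linarith
  have hΛ0 : 0 < Λ := by linarith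
  have hfixm : ∀ m, F^[m] x = x := fun m => iterate_fixed hfix m
  have hlip : ∀ (m : ℕ) (z : E), ‖z - x‖ < R / 2 → ‖F^[m] z - x‖ ≤ Λ * ‖z - x‖ := by
    intro m z hz
    have h1 := lipschitz_of_bounded_on_ball (f := F^[m]) (x := x) (half_pos hR)
      ((hit m).mono hRΩ') (fun w hw => hD _ (hmaps.iterate m (hRΩ' hw)))
      (z := z) (w := x) (by rwa [mem_ball, dist_eq_norm]) (mem_ball_self (half_pos hR))
    rw [hfixm] at h1
    refine h1.trans ?_
    gcongr
    linarith
  set μ : ℝ := (1 + ‖(fderiv ℂ F x).det‖) / 2 with hμ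
  have hμ0 : 0 < μ := by positivity
  have hμ1 : μ < 1 := by linarith
  have hcont : ContinuousAt (fun z => ‖(fderiv ℂ F z).det‖) x := by
    have h1 : ContinuousAt (fderiv ℂ F) x :=
      (hF.fderiv_of_isOpen hΩ).continuousOn.continuousAt (hΩ.mem_nhds hx)
    exact ((ContinuousLinearMap.continuous_det (𝕜 := ℂ) (E := E)).continuousAt.comp h1).norm
  obtain ⟨δ', hδ', hδμ⟩ := Metric.eventually_nhds_iff_ball.1
    (hcont.eventually_lt_const (u := μ) (by linarith))
  set δ : ℝ := min δ' (R / 2) with hδ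
  have hδ0 : 0 < δ := by positivity
  obtain ⟨m₀, hm₀⟩ := hacc (δ / Λ) (by positivity)
  have hcm : ContinuousAt (fun z => ‖F^[m₀] z - x‖) z₀ :=
    (((hit m₀).continuousOn.continuousAt (hΩ.mem_nhds hz₀)).sub continuousAt_const).norm
  obtain ⟨s₁, hs₁, hs₁m⟩ := Metric.eventually_nhds_iff_ball.1 (hcm.eventually_lt_const hm₀)
  obtain ⟨s₂, hs₂, hs₂Ω⟩ := Metric.isOpen_iff.1 hΩ z₀ hz₀
  obtain ⟨C, hC, hCdet⟩ := exists_norm_det_le (E := E) (2 * D / (s₂ / 2))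
  have hbdd : ∀ z ∈ ball z₀ (s₂ / 2), ∀ m, ‖(fderiv ℂ F^[m] z).det‖ ≤ C := by
    intro z hz m
    have hsub : ball z (s₂ / 2) ⊆ Ω :=
      (ball_subset_ball' (by linarith [mem_ball.1 hz])).trans hs₂Ω
    exact hCdet _ (norm_fderiv_le_of_bounded_on_ball (half_pos hs₂) ((hit m).mono hsub)
      fun w hw => hD _ (hmaps.iterate m (hsub hw)))
  refine ⟨μ, hμ0, hμ1, C * (μ ^ m₀)⁻¹, by positivity, min s₁ (s₂ / 2), by positivity,
    fun z hz m => ?_⟩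
  have hz₂ : z ∈ ball z₀ (s₂ / 2) := ball_subset_ball (min_le_right _ _) hz
  have hzΩ : z ∈ Ω := hs₂Ω (ball_subset_ball (by linarith) hz₂)
  have hz₁ := hs₁m z (ball_subset_ball (min_le_left _ _) hz)
  rcases le_or_gt m₀ m with hm | hm
  · obtain ⟨i, rfl⟩ := Nat.exists_eq_add_of_le hm
    have hnear : ∀ i, F^[i + m₀] z ∈ ball x δ' := by
      intro i
      have h1 : ‖F^[m₀] z - x‖ < R / 2 :=
        hz₁.trans_le ((div_le_self hδ0.le hΛ1).trans (min_le_right _ _))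
      have h2 := hlip i _ h1
      rw [iterate_add_apply, mem_ball, dist_eq_norm]
      rw [lt_div_iff₀ hΛ0] at hz₁
      have h3 : δ ≤ δ' := min_le_left _ _
      linarith
    have hprod : ∀ i, ‖(fderiv ℂ F^[i + m₀] z).det‖ ≤ C * μ ^ i := by
      intro i
      induction i with
      | zero => simpa using hbdd z hz₂ m₀
      | succ i ih =>
        have e : i + 1 + m₀ = 1 + (i + m₀) := by ring
        rw [e, det_fderiv_iterate_add hΩ hF hmaps 1 (i + m₀) hzΩ, norm_mul, iterate_one, pow_succ]
        have h1 := (hδμ _ (hnear i)).le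
        calc _ ≤ μ * (C * μ ^ i) := by gcongr
          _ = _ := by ring
    refine (le_of_eq (by rw [add_comm m₀ i])).trans ((hprod i).trans (le_of_eq ?_))
    rw [pow_add]
    field_simp
  · refine (hbdd z hz₂ m).trans ?_
    have h1 : μ ^ m₀ ≤ μ ^ m := pow_le_pow_of_le_one hμ0.le hμ1.le hm.le
    rw [mul_assoc]
    refine le_mul_of_one_le_right hC.le ?_
    rwa [inv_mul_eq_div, one_le_div (by positivity)]

theorem eventually_eq_of_comp_eq [FiniteDimensional ℂ E] {g : E → E} {L : E →L[ℂ] E} {x : E}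
    (hg : HasStrictFDerivAt g L x) (hL : L.det ≠ 0) (hF : ContinuousAt F x) (hfix : F x = x)
    (hgF : ∀ᶠ z in 𝓝 x, g (F z) = g z) : ∀ᶠ z in 𝓝 x, F z = z := by
  have : CompleteSpace E := FiniteDimensional.complete ℂ E
  have hg' : HasStrictFDerivAt g (L.toContinuousLinearEquivOfDetNeZero hL : E →L[ℂ] E) x := by
    simpa using hg
  have h1 := hg'.eventually_left_inverse
  have h2 : ∀ᶠ z in 𝓝 x, hg'.localInverse g _ x (g (F z)) = F z := by
    have : Tendsto F (𝓝 x) (𝓝 x) := by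
      have := hF.tendsto
      rwa [hfix] at this
    exact this.eventually h1
  filter_upwards [h1, h2, hgF] with z h1 h2 h3
  rw [← h2, h3, h1]

end Contraction

section Limits

variable {E : Type*} [NormedAddCommGroup E] [NormedSpace ℂ E] [FiniteDimensional ℂ E]
  {Ω : Set E} {p a : E} {ℓ : E →L[ℂ] ℂ} {B : E →L[ℂ] E →L[ℂ] ℂ} {r c C₀ : ℝ} {F : E → E}

/-- Ultrafilter limits of the iterates of a map flat to second order at `p` are invariant. -/
theorem IsSupportAt.exists_limit_iterate (h : IsSupportAt Ω p ℓ B r c C₀) (hΩ : IsOpen Ω)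
    (hconn : IsPreconnected Ω) {D : ℝ} (hD : ∀ z ∈ Ω, ‖z‖ ≤ D) (ha : ℓ a = -1)
    (hF : DifferentiableOn ℂ F Ω) (hmaps : MapsTo F Ω Ω) (hflat : FlatAt Ω p 2 F)
    (u : Ultrafilter ℕ) (hu : (u : Filter ℕ) ≤ atTop) :
    ∃ g : E → E, DifferentiableOn ℂ g Ω ∧
      (∀ z ∈ Ω, Tendsto (fun j => F^[j] z) u (𝓝 (g z))) ∧ ∀ z ∈ Ω, g (F z) = g z := by
  have : ProperSpace E := FiniteDimensional.proper ℂ E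
  have hex : ∀ (m : ℤ) (z : E), ∃ y, z ∈ Ω →
      Tendsto (fun j : ℕ => F^[((j : ℤ) + m).toNat] z) u (𝓝 y) := by
    intro m z
    by_cases hz : z ∈ Ω
    · obtain ⟨y, hy⟩ := u.exists_tendsto_of_norm_le (f := fun j : ℕ => F^[((j : ℤ) + m).toNat] z)
        (.of_forall fun j => hD _ (hmaps.iterate _ hz))
      exact ⟨y, fun _ => hy⟩
    · exact ⟨0, fun h => absurd h hz⟩
  choose f hf using hex
  have hdiff : ∀ m, DifferentiableOn ℂ (f m) Ω := fun m =>
    differentiableOn_of_tendsto hΩ (fun j : ℕ => hF.iterate_of_mapsTo hmaps ((j : ℤ) + m).toNat)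
      (fun j z hz => hD _ (hmaps.iterate _ hz)) fun z hz => hf m z hz
  have hbound : ∀ m, ∀ z ∈ Ω, ‖f m z‖ ≤ D := fun m z hz =>
    le_of_tendsto (hf m z hz).norm (.of_forall fun j => hD _ (hmaps.iterate _ hz))
  have hshift : ∀ m, ∀ z ∈ Ω, f m (F z) = f (m + 1) z := by
    intro m z hz
    refine tendsto_nhds_unique (hf m (F z) (hmaps hz)) ((hf (m + 1) z hz).congr' ?_)
    filter_upwards [hu (eventually_ge_atTop (-m).toNat)] with j hj
    have e : ((j : ℤ) + (m + 1)).toNat = ((j : ℤ) + m).toNat + 1 := by omega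
    rw [e, iterate_succ_apply]
  have hone := eq_of_two_sided_family hΩ hconn h.C₀_nonneg h.inner_subset ha hflat hmaps hdiff
    hbound hshift
  refine ⟨f 0, hdiff 0, fun z hz => ?_, fun z hz => ?_⟩
  · simpa using hf 0 z hz
  · rw [hshift 0 z hz, zero_add, hone z hz]

theorem IsSupportAt.eq_id_of_limit_mem (h : IsSupportAt Ω p ℓ B r c C₀) (hΩ : IsOpen Ω)
    (hconn : IsPreconnected Ω) {D : ℝ} (hD : ∀ z ∈ Ω, ‖z‖ ≤ D) (ha : ℓ a = -1)
    (hF : DifferentiableOn ℂ F Ω) (hmaps : MapsTo F Ω Ω) (hflat : FlatAt Ω p 2 F)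
    {u : Ultrafilter ℕ} {g : E → E}
    (hlim : ∀ z ∈ Ω, Tendsto (fun j => F^[j] z) u (𝓝 (g z))) (hgF : ∀ z ∈ Ω, g (F z) = g z)
    {C₄ C₅ : ℝ} (hC₄ : 0 < C₄)
    (hdet : ∀ G : E → E, DifferentiableOn ℂ G Ω → MapsTo G Ω Ω → FlatAt Ω p 1 G →
      ∀ x : ℂ, C₄ * ‖x‖ ^ 2 < x.re → p + x • a ∈ Ω ∧
        ‖(fderiv ℂ G (p + x • a)).det‖ ≤ C₅ * (‖x‖ / x.re) ^ (2 * Module.finrank ℂ E))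
    {x₀ : ℝ} (hx₀ : 0 < x₀) (hx₀C : C₄ * (2 * x₀) ≤ 1) (hmem : g (p + (x₀ : ℂ) • a) ∈ Ω) :
    ∀ z ∈ Ω, F z = z := by
  have : CompleteSpace E := FiniteDimensional.complete ℂ E
  have : ProperSpace (E →L[ℂ] E) := FiniteDimensional.proper ℂ _
  have hit := hF.iterate_of_mapsTo hmaps
  have hcond : ∀ x ∈ ball (x₀ : ℂ) x₀, C₄ * ‖x‖ ^ 2 < x.re := by
    intro x hx
    rw [mem_ball, dist_eq_norm] at hx
    have h1 : ‖x - x₀‖ ^ 2 < x₀ ^ 2 := by gcongr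
    rw [← Complex.normSq_eq_norm_sq, Complex.normSq_apply] at h1
    rw [← Complex.normSq_eq_norm_sq, Complex.normSq_apply]
    simp only [Complex.sub_re, Complex.ofReal_re, Complex.sub_im, Complex.ofReal_im] at h1
    have h2 : x.re * x.re + x.im * x.im < 2 * x₀ * x.re := by nlinarith
    have h3 : 0 < x.re := by
      by_contra h4
      push Not at h4
      nlinarith [mul_self_nonneg x.re, mul_self_nonneg x.im]
    nlinarith
  set z₀ : E := p + (x₀ : ℂ) • a with hz₀
  have hz₀Ω : z₀ ∈ Ω :=
    (hdet id differentiableOn_id (mapsTo_id Ω) (fun ε hε => ⟨1, one_pos, fun z _ _ => by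
      simp; positivity⟩) x₀ (hcond _ (mem_ball_self hx₀))).1
  set x : E := g z₀ with hx
  have hFx : ContinuousAt F x := hF.continuousOn.continuousAt (hΩ.mem_nhds hmem)
  have hfix : F x = x := by
    have h1 : Tendsto (fun j => F^[j] (F z₀)) u (𝓝 (F x)) := by
      refine (hFx.tendsto.comp (hlim z₀ hz₀Ω)).congr fun j => ?_
      rw [comp_apply, ← iterate_succ_apply' F j z₀, iterate_succ_apply]
    rw [tendsto_nhds_unique h1 (hlim _ (hmaps hz₀Ω)), hgF z₀ hz₀Ω]
  obtain ⟨R, hR, hRΩ⟩ := Metric.isOpen_iff.1 hΩ x hmem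
  obtain ⟨L, hL⟩ := u.exists_tendsto_of_norm_le (f := fun j => fderiv ℂ F^[j] x)
    (.of_forall fun j => norm_fderiv_le_of_bounded_on_ball hR ((hit j).mono hRΩ)
      fun w hw => hD _ (hmaps.iterate j (hRΩ hw)))
  have hgL : HasStrictFDerivAt g L x :=
    hasStrictFDerivAt_of_tendsto hR (.of_forall fun j => (hit j).mono hRΩ)
      (.of_forall fun j w hw => hD _ (hmaps.iterate j (hRΩ hw)))
      (fun w hw => hlim w (hRΩ hw)) hL
  by_cases hLdet : L.det ≠ 0
  · have h1 := eventually_eq_of_comp_eq hgL hLdet hFx hfix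
      (by filter_upwards [hΩ.mem_nhds hmem] with w hw using hgF w hw)
    exact eqOn_of_eventuallyEq_of_isPreconnected hΩ hconn hF differentiableOn_id hmem h1
  exfalso
  push Not at hLdet
  have hdetlt : ‖(fderiv ℂ F x).det‖ < 1 := by
    by_contra hge
    push Not at hge
    have h1 : Tendsto (fun j => ‖(fderiv ℂ F^[j] x).det‖) u (𝓝 ‖L.det‖) :=
      (((ContinuousLinearMap.continuous_det (𝕜 := ℂ) (E := E)).tendsto L).comp hL).norm
    rw [hLdet, norm_zero] at h1
    have h2 := ge_of_tendsto (b := 1) h1 (.of_forall fun j => by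
      rw [det_fderiv_iterate_of_fixed hΩ hF hmaps j hmem hfix, norm_pow]
      exact one_le_pow₀ hge)
    norm_num at h2
  obtain ⟨μ, hμ, hμ1, C, hC, s, hs, hdecay⟩ := exists_norm_det_fderiv_iterate_le hΩ hD hF hmaps
    hmem hfix hdetlt hz₀Ω (fun δ hδ => by
      obtain ⟨j, hj⟩ := ((hlim z₀ hz₀Ω).eventually (ball_mem_nhds _ hδ)).exists
      exact ⟨j, by rw [← dist_eq_norm]; exact hj⟩)
  set s' : ℝ := min (x₀ / 2) (s / (2 * (‖a‖ + 1))) with hs'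
  have hs'0 : 0 < s' := by positivity
  have hs'x : s' < x₀ := (min_le_left _ _).trans_lt (by linarith)
  have hs'mem : ∀ x ∈ closedBall (x₀ : ℂ) s', p + x • a ∈ ball z₀ s := by
    intro x hx
    rw [mem_closedBall, dist_eq_norm] at hx
    rw [mem_ball, dist_eq_norm, hz₀, add_sub_add_left_eq_sub, ← sub_smul, norm_smul]
    calc ‖x - x₀‖ * ‖a‖ ≤ s / (2 * (‖a‖ + 1)) * ‖a‖ := by
          gcongr
          exact hx.trans (min_le_right _ _)
      _ ≤ s / (2 * (‖a‖ + 1)) * (‖a‖ + 1) := by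
          gcongr
          linarith
      _ = s / 2 := by field_simp
      _ < s := by linarith
  obtain ⟨N₀, hN₀⟩ := exists_pow_lt_of_lt_one (div_pos hs'0 hx₀) hμ1
  set N : ℕ := 2 * Module.finrank ℂ E with hN
  set M : ℝ := max C C₅ with hM
  have hM0 : 0 < M := by positivity
  have hupper : ∀ (j : ℕ) (t : ℝ), 0 < t → t < x₀ - s' →
      ‖(fderiv ℂ F^[N₀ * j] (p + (t : ℂ) • a)).det‖ ≤
        M * 2 ^ N * (1 - t / (2 * x₀)) ^ j := by
    intro j t ht htx
    have hflat1 : FlatAt Ω p 1 F^[N₀ * j] := (hflat.iterate one_le_two hmaps _).mono one_le_two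
    have hd := hdet _ (hit (N₀ * j)) (hmaps.iterate _) hflat1
    refine norm_le_of_hopf (f := fun x : ℂ => (fderiv ℂ F^[N₀ * j] (p + x • a)).det)
      (q := μ ^ N₀) hs'0 hs'x hM0.le (by positivity) hN₀.le ?_ ?_ ?_ ht htx
    · have h1 := ((hit (N₀ * j)).fderiv_of_isOpen hΩ).comp
        (t := Ω) (s := ball (x₀ : ℂ) x₀) (f := fun x : ℂ => p + x • a) (by fun_prop)
        (fun x hx => (hd x (hcond x hx)).1)
      exact Differentiable.comp_differentiableOn (g := fun A : E →L[ℂ] E => A.det)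
        differentiable_det h1
    · intro x hx
      refine (hd x (hcond x hx)).2.trans ?_
      have : 0 < x.re := lt_of_le_of_lt (by positivity) (hcond x hx)
      gcongr
      exact le_max_right _ _
    · intro x hx
      refine (hdecay _ (hs'mem x hx) _).trans ?_
      rw [pow_mul]
      gcongr
      exact le_max_left _ _
  obtain ⟨c₁, hc₁, t₀, ht₀, hball⟩ := exists_ball_subset_innerRegion p ℓ h.C₀_nonneg ha
  obtain ⟨κ, hκ1, hκ⟩ : ∃ κ : ℝ, 1 ≤ κ ∧ M * 2 ^ N * Real.exp (-((κ - 1) / (2 * x₀))) < 1 / 2 := by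
    have h1 : Tendsto (fun κ : ℝ => (κ - 1) / (2 * x₀)) atTop atTop :=
      (tendsto_atTop_add_const_right _ (-1) tendsto_id).atTop_div_const (by positivity)
    have h2 := (Real.tendsto_exp_neg_atTop_nhds_zero.comp h1).const_mul (M * 2 ^ N)
    rw [mul_zero] at h2
    obtain ⟨κ, h3, h4⟩ := ((eventually_ge_atTop 1).and
      (h2.eventually_lt_const (u := 1 / 2) (by norm_num))).exists
    exact ⟨κ, h3, h4⟩
  obtain ⟨t₁, ht₁, hlower⟩ := hflat.exists_le_norm_det_fderiv_iterate hF hmaps hc₁ ht₀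
    (fun t ht htt => (hball t ht htt).trans h.inner_subset) (K := N₀ * κ) (by positivity)
  obtain ⟨t, ht0, htt⟩ : ∃ t : ℝ, 0 < t ∧ t < min t₁ (min (x₀ - s') 1) :=
    exists_between (lt_min ht₁ (lt_min (by linarith) one_pos))
  have htt₁ : t < t₁ := htt.trans_le (min_le_left _ _)
  have htx : t < x₀ - s' := htt.trans_le ((min_le_right _ _).trans (min_le_left _ _))
  have ht1 : t < 1 := htt.trans_le ((min_le_right _ _).trans (min_le_right _ _))
  set j : ℕ := ⌊κ / t⌋₊ with hj
  have hjle : (j : ℝ) * t ≤ κ := by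
    have := Nat.floor_le (show 0 ≤ κ / t by positivity)
    rwa [le_div_iff₀ ht0] at this
  have hjge : κ - 1 ≤ j * t := by
    have := Nat.lt_floor_add_one (κ / t)
    rw [div_lt_iff₀ ht0] at this
    linarith
  have h1 := hlower t ht0 htt₁ (N₀ * j) (by
    push_cast
    rw [mul_assoc]
    gcongr)
  have h2 := hupper j t ht0 htx
  have h3 : (1 - t / (2 * x₀)) ^ j ≤ Real.exp (-((κ - 1) / (2 * x₀))) := by
    have h4 : 0 ≤ 1 - t / (2 * x₀) := by
      rw [sub_nonneg, div_le_one (by positivity)]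
      linarith
    calc (1 - t / (2 * x₀)) ^ j ≤ Real.exp (-(t / (2 * x₀))) ^ j := by
          gcongr
          exact Real.one_sub_le_exp_neg _
      _ = Real.exp (-(j * t / (2 * x₀))) := by
          rw [← Real.exp_nat_mul]
          congr 1
          ring
      _ ≤ _ := by gcongr
  have h5 : M * 2 ^ N * (1 - t / (2 * x₀)) ^ j ≤ M * 2 ^ N * Real.exp (-((κ - 1) / (2 * x₀))) := by
    gcongr
  linarith

end Limits

section Convergence

theorem exists_apply_eq_neg_one {E : Type*} [NormedAddCommGroup E] [NormedSpace ℂ E]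
    {ℓ : E →L[ℂ] ℂ} (hℓ : ℓ ≠ 0) : ∃ a, ℓ a = -1 := by
  obtain ⟨b, hb⟩ := DFunLike.ne_iff.1 hℓ
  have hb : ℓ b ≠ 0 := hb
  exact ⟨-(ℓ b)⁻¹ • b, by simp [hb]⟩

/-- A holomorphic map is locally constant near a point where its value is peaked. -/
theorem eventually_eq_of_quadPoly_peak {E : Type*} [NormedAddCommGroup E] [NormedSpace ℂ E]
    {g : E → E} {z₀ : E} {ℓ : E →L[ℂ] ℂ} {B : E →L[ℂ] E →L[ℂ] ℂ} {c : ℝ} (hc : 0 < c)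
    (hd : ∀ᶠ z in 𝓝 z₀, DifferentiableAt ℂ g z)
    (hpeak : ∀ᶠ z in 𝓝 z₀, (quadPoly (g z₀) ℓ B (g z)).re ≤ -c * ‖g z - g z₀‖ ^ 2) :
    ∀ᶠ z in 𝓝 z₀, g z = g z₀ := by
  have hself : quadPoly (g z₀) ℓ B (g z₀) = 0 := by simp [quadPoly]
  have hmax := Complex.eventually_eq_of_isLocalMax_norm
    (f := fun z => Complex.exp (quadPoly (g z₀) ℓ B (g z))) (c := z₀)
    (by
      filter_upwards [hd] with z hz
      exact ((differentiable_quadPoly (g z₀) ℓ B (g z)).comp z hz).cexp)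
    (by
      filter_upwards [hpeak] with z hz
      simp only [comp_apply, Complex.norm_exp, hself, Complex.zero_re, Real.exp_le_exp]
      exact hz.trans (by nlinarith [sq_nonneg ‖g z - g z₀‖]))
  filter_upwards [hmax, hpeak] with z h1 h2
  have h3 := congrArg norm h1
  simp only [Complex.norm_exp, hself, Complex.zero_re, Real.exp_eq_exp] at h3
  rw [h3] at h2
  have h4 : ‖g z - g z₀‖ ^ 2 ≤ 0 := by nlinarith
  have h5 : ‖g z - g z₀‖ = 0 := by nlinarith [norm_nonneg (g z - g z₀)]
  exact sub_eq_zero.1 (norm_eq_zero.1 h5)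

variable {E : Type*} [NormedAddCommGroup E] [NormedSpace ℂ E] [FiniteDimensional ℂ E]
  {Ω : Set E} {p : E} {ℓ : E →L[ℂ] ℂ} {B : E →L[ℂ] E →L[ℂ] ℂ} {r c C₀ : ℝ} {F : E → E}

theorem IsSupportAt.tendsto_iterate (h : IsSupportAt Ω p ℓ B r c C₀) (hΩ : IsOpen Ω)
    (hconn : IsPreconnected Ω) (hbd : Bornology.IsBounded Ω)
    (hpeak : ∀ q ∈ ball p r, q ∈ closure Ω → q ∉ Ω → ∃ (ℓ' : E →L[ℂ] ℂ) (B' : E →L[ℂ] E →L[ℂ] ℂ),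
      ∀ z ∈ closure Ω, z ∈ ball p r → (quadPoly q ℓ' B' z).re ≤ -c * ‖z - q‖ ^ 2)
    (hF : DifferentiableOn ℂ F Ω) (hmaps : MapsTo F Ω Ω) (hflat : FlatAt Ω p 2 F)
    (hne : ¬ ∀ z ∈ Ω, F z = z) {z : E} (hz : z ∈ Ω) :
    Tendsto (fun j => F^[j] z) atTop (𝓝 p) := by
  have : CompleteSpace E := FiniteDimensional.complete ℂ E
  have hc := h.c_pos
  obtain ⟨D, hD⟩ := hbd.exists_norm_le
  obtain ⟨a, ha⟩ := exists_apply_eq_neg_one h.ne_zero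
  obtain ⟨C₄, hC₄, C₅, -, hest⟩ := h.exists_norm_det_fderiv_le hΩ hbd ha
  rw [tendsto_iff_ultrafilter]
  intro u hu
  obtain ⟨g, hg, hlim, hgF⟩ := h.exists_limit_iterate hΩ hconn hD ha hF hmaps hflat u hu
  set x₀ : ℝ := 1 / (2 * C₄) with hx₀
  have hx₀0 : 0 < x₀ := by positivity
  have hsmall : ∀ t : ℝ, 0 < t → t ≤ x₀ → C₄ * ‖(t : ℂ)‖ ^ 2 < (t : ℂ).re := by
    intro t ht htx
    rw [Complex.norm_real, Real.norm_of_nonneg ht.le, Complex.ofReal_re]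
    rw [hx₀, le_div_iff₀ (by positivity)] at htx
    nlinarith
  have hiter : ∀ (j : ℕ) (t : ℝ), 0 < t → t ≤ x₀ → p + (t : ℂ) • a ∈ Ω ∧
      ‖F^[j] (p + (t : ℂ) • a) - p‖ < r / 2 ∧ c * ‖F^[j] (p + (t : ℂ) • a) - p‖ ^ 2 ≤ 16 * t := by
    intro j t ht htx
    obtain ⟨h1, h2, h3, -⟩ := hest _ (hF.iterate_of_mapsTo hmaps j) (hmaps.iterate j)
      ((hflat.iterate one_le_two hmaps j).mono one_le_two) t (hsmall t ht htx)
    refine ⟨h1, h2, h3.trans_eq ?_⟩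
    rw [Complex.norm_real, Real.norm_of_nonneg ht.le, Complex.ofReal_re]
    field_simp
  set z₀ : E := p + (x₀ : ℂ) • a with hz₀
  have hz₀Ω : z₀ ∈ Ω := (hiter 0 x₀ hx₀0 le_rfl).1
  have hcl : ∀ w ∈ Ω, g w ∈ closure Ω := fun w hw =>
    mem_closure_of_tendsto (hlim w hw) (.of_forall fun j => hmaps.iterate j hw)
  have hnear : g z₀ ∈ ball p r := by
    rw [mem_ball, dist_eq_norm]
    have := le_of_tendsto ((hlim z₀ hz₀Ω).sub_const p).norm
      (.of_forall fun j => (hiter j x₀ hx₀0 le_rfl).2.1.le)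
    linarith [h.r_pos]
  have hout : g z₀ ∉ Ω := by
    intro hmem
    refine hne (h.eq_id_of_limit_mem hΩ hconn hD ha hF hmaps hflat hlim hgF hC₄
      (fun G h1 h2 h3 x hx => ⟨(hest G h1 h2 h3 x hx).1, (hest G h1 h2 h3 x hx).2.2.2⟩) hx₀0
      (le_of_eq ?_) hmem)
    rw [hx₀]
    field_simp
  obtain ⟨ℓ', B', hpk⟩ := hpeak _ hnear (hcl z₀ hz₀Ω) hout
  have hcont : ContinuousAt g z₀ := hg.continuousOn.continuousAt (hΩ.mem_nhds hz₀Ω)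
  have hloc : ∀ᶠ w in 𝓝 z₀, g w = g z₀ := by
    refine eventually_eq_of_quadPoly_peak (ℓ := ℓ') (B := B') hc ?_ ?_
    · filter_upwards [hΩ.mem_nhds hz₀Ω] with w hw using hg.differentiableAt (hΩ.mem_nhds hw)
    · filter_upwards [hΩ.mem_nhds hz₀Ω, hcont (isOpen_ball.mem_nhds hnear)] with w hw hwb
      exact hpk _ (hcl w hw) hwb
  have hconst : EqOn g (fun _ => g z₀) Ω :=
    eqOn_of_eventuallyEq_of_isPreconnected hΩ hconn hg (differentiableOn_const _) hz₀Ω hloc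
  have hle : ∀ t : ℝ, 0 < t → t ≤ x₀ → c * ‖g z₀ - p‖ ^ 2 ≤ 16 * t := by
    intro t ht htx
    have htΩ := (hiter 0 t ht htx).1
    have h1 := hconst htΩ
    simp only at h1
    rw [← h1]
    exact le_of_tendsto ((((hlim _ htΩ).sub_const p).norm.pow 2).const_mul c)
      (.of_forall fun j => (hiter j t ht htx).2.2)
  have hgp : g z₀ = p := by
    by_contra hgp
    have hpos : 0 < c * ‖g z₀ - p‖ ^ 2 := by
      have := norm_pos_iff.2 (sub_ne_zero.2 hgp)
      positivity
    have h1 := hle (min x₀ (c * ‖g z₀ - p‖ ^ 2 / 32)) (by positivity) (min_le_left _ _)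
    have h2 := min_le_right x₀ (c * ‖g z₀ - p‖ ^ 2 / 32)
    linarith
  have := hlim z hz
  rw [hconst hz] at this
  simpa only [hgp] using this

/-- Pointwise convergence of uniformly bounded holomorphic maps is uniform on compact sets. -/
theorem tendstoUniformlyOn_of_tendsto_of_norm_le {ι E G : Type*} [NormedAddCommGroup E]
    [NormedSpace ℂ E] [NormedAddCommGroup G] [NormedSpace ℂ G] {l : Filter ι} {f : ι → E → G}
    {Ω K : Set E} {D : ℝ} {q : G} (hΩ : IsOpen Ω) (hf : ∀ i, DifferentiableOn ℂ (f i) Ω)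
    (hD : ∀ i, ∀ z ∈ Ω, ‖f i z‖ ≤ D) (hlim : ∀ z ∈ Ω, Tendsto (fun i => f i z) l (𝓝 q))
    (hK : IsCompact K) (hKΩ : K ⊆ Ω) : TendstoUniformlyOn f (fun _ => q) l K := by
  rw [← tendstoLocallyUniformlyOn_iff_tendstoUniformlyOn_of_compact hK,
    Metric.tendstoLocallyUniformlyOn_iff]
  intro ε hε x hx
  obtain ⟨R, hR, hRΩ⟩ := Metric.isOpen_iff.1 hΩ x (hKΩ hx)
  obtain ⟨s, hs, hsR, hsε⟩ : ∃ s > 0, s ≤ R / 2 ∧ 2 * D / (R / 2) * s < ε / 2 := by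
    refine ⟨min (R / 2) (ε / (4 * (|2 * D / (R / 2)| + 1))), by positivity, min_le_left _ _, ?_⟩
    calc 2 * D / (R / 2) * min (R / 2) (ε / (4 * (|2 * D / (R / 2)| + 1)))
        ≤ (|2 * D / (R / 2)| + 1) * (ε / (4 * (|2 * D / (R / 2)| + 1))) := by
          gcongr
          · linarith [le_abs_self (2 * D / (R / 2))]
          · exact min_le_right _ _
      _ = ε / 4 := by field_simp
      _ < ε / 2 := by linarith
  refine ⟨ball x s ∩ K, inter_mem (mem_nhdsWithin_of_mem_nhds (ball_mem_nhds x hs))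
    self_mem_nhdsWithin, ?_⟩
  filter_upwards [(hlim x (hKΩ hx)).eventually (ball_mem_nhds q (half_pos hε))] with i hi y hy
  have h1 : ball x (2 * (R / 2)) ⊆ Ω := by rwa [mul_div_cancel₀ _ two_ne_zero]
  have h2 := lipschitz_of_bounded_on_ball (half_pos hR) ((hf i).mono h1)
    (fun z hz => hD i z (h1 hz)) (z := y) (w := x)
    (ball_subset_ball hsR hy.1) (mem_ball_self (half_pos hR))
  have h3 : 0 ≤ 2 * D / (R / 2) := by
    have := (norm_nonneg _).trans (hD i x (hKΩ hx))
    positivity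
  have h4 : ‖y - x‖ ≤ s := by
    rw [← dist_eq_norm]
    exact (mem_ball.1 hy.1).le
  have h5 : dist (f i y) (f i x) < ε / 2 := by
    rw [dist_eq_norm]
    exact (h2.trans (mul_le_mul_of_nonneg_left h4 h3)).trans_lt hsε
  rw [dist_comm]
  linarith [dist_triangle (f i y) (f i x) q, mem_ball.1 hi]

/-- An automorphism tangent to the identity to second order at `p` is the identity. -/
theorem IsSupportAt.eq_id_of_leftInverse (h : IsSupportAt Ω p ℓ B r c C₀) (hΩ : IsOpen Ω)
    (hconn : IsPreconnected Ω) (hbd : Bornology.IsBounded Ω)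
    (hF : DifferentiableOn ℂ F Ω) (hmaps : MapsTo F Ω Ω) (hflat : FlatAt Ω p 2 F) {G : E → E}
    (hG : DifferentiableOn ℂ G Ω) (hGmaps : MapsTo G Ω Ω) (hGF : ∀ z ∈ Ω, G (F z) = z) :
    ∀ z ∈ Ω, F z = z := by
  obtain ⟨D, hD⟩ := hbd.exists_norm_le
  obtain ⟨a, ha⟩ := exists_apply_eq_neg_one h.ne_zero
  have hiter : ∀ m : ℤ, DifferentiableOn ℂ (fun z => G^[(-m).toNat] (F^[m.toNat] z)) Ω := fun m =>
    (hG.iterate_of_mapsTo hGmaps _).comp (hF.iterate_of_mapsTo hmaps _) (hmaps.iterate _)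
  have := eq_of_two_sided_family hΩ hconn h.C₀_nonneg h.inner_subset ha hflat hmaps hiter
    (fun m z hz => hD _ (hGmaps.iterate _ (hmaps.iterate _ hz))) (fun m z hz => by
      rcases le_or_gt 0 m with hm | hm
      · rw [show (-m).toNat = 0 by omega, show (-(m + 1)).toNat = 0 by omega,
          show (m + 1).toNat = m.toNat + 1 by omega, iterate_succ_apply]
      · rw [show (-m).toNat = (-(m + 1)).toNat + 1 by omega, show m.toNat = 0 by omega,
          show (m + 1).toNat = 0 by omega, iterate_succ_apply]
        simp only [iterate_zero, id_eq, hGF z hz])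
  simpa using this

end Convergence

theorem LittleOh.flatAt {n : ℕ} {Ω : Set (En n)} {F : En n → En n} {p : En n} {k : ℕ}
    (h : LittleOh Ω F p k) (hp : p ∉ Ω) : FlatAt Ω p k F := by
  intro ε hε
  obtain ⟨δ, hδ, H⟩ := Metric.mem_nhdsWithin_iff.1 (h.eventually_lt_const hε)
  refine ⟨δ, hδ, fun z hz hzδ => ?_⟩
  have h1 : ‖F z - z‖ / ‖z - p‖ ^ k < ε := H ⟨by rwa [mem_ball, dist_eq_norm], hz⟩
  have h2 : 0 < ‖z - p‖ := norm_pos_iff.2 (sub_ne_zero.2 fun h => hp (h ▸ hz))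
  exact ((div_lt_iff₀ (by positivity)).1 h1).le

/-- A strongly pseudoconvex boundary point carries support data, and so do, with the same constants,
all nearby boundary points. -/
theorem IsDefiningFunction.exists_isSupportAt {n : ℕ} {Ω : Set (En n)} {ρ : En n → ℝ}
    (hρ : IsDefiningFunction Ω ⊤ ρ) {p : En n} (hp : p ∈ frontier Ω) (hspc : StronglyPcxAt ρ p) :
    ∃ ℓ B r c C₀, IsSupportAt Ω p ℓ B r c C₀ ∧
      ∀ q ∈ ball p r, q ∈ closure Ω → q ∉ Ω →
        ∃ (ℓ' : En n →L[ℂ] ℂ) (B' : En n →L[ℂ] En n →L[ℂ] ℂ),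
          ∀ z ∈ closure Ω, z ∈ ball p r → (quadPoly q ℓ' B' z).re ≤ -c * ‖z - q‖ ^ 2 := by
  obtain ⟨hsmooth, hΩ, hfr, hne⟩ := hρ
  have hsmooth2 : ContDiff ℝ 2 ρ := mod_cast contDiff_infty.1 hsmooth 2
  have hp0 : ρ p = 0 := by
    rw [hfr] at hp
    exact hp
  have hcl : ∀ z ∈ closure Ω, ρ z ≤ 0 := fun z hz => by
    rw [hΩ] at hz
    exact closure_minimal (fun w hw => le_of_lt hw)
      (isClosed_le hsmooth.continuous continuous_const) hz
  have hbdry : ∀ q ∈ closure Ω, q ∉ Ω → ρ q = 0 := fun q hq hqΩ =>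
    le_antisymm (hcl q hq) (not_lt.1 fun hlt => hqΩ (by rw [hΩ]; exact hlt))
  obtain ⟨r, hr, c, hc, B, hsupp⟩ := exists_support_functions hsmooth2 hp0 fun ξ hξ h1 h2 => by
    have := hspc ξ hξ ⟨h1, h2⟩
    simp only [LeviForm, iteratedFDeriv_two_apply, Matrix.cons_val_zero,
      Matrix.cons_val_one] at this
    linarith
  obtain ⟨C₀, hC₀, hinner⟩ := exists_innerRegion_subset hsmooth2 hp0
  have hpΩ : p ∉ Ω := by
    rw [hΩ]
    exact fun h : ρ p < 0 => absurd hp0 h.ne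
  refine ⟨_, B, r, c, C₀, ⟨hpΩ, hr, hc, hC₀, ?_, hinner.trans_eq hΩ.symm,
    fun z hz hzr => hsupp p (mem_ball_self hr) hp0 z hzr (hcl z hz)⟩,
    fun q hqr hq hqΩ => ⟨_, B, fun z hz hzr => hsupp q hqr (hbdry q hq hqΩ) z hzr (hcl z hz)⟩⟩
  intro h0
  refine hne p hp (ContinuousLinearMap.ext fun ξ => ?_)
  have h1 := congrArg Complex.re (DFunLike.congr_fun h0 ξ)
  simpa [StrongDual.extendRCLike_apply] using h1

theorem main_theorem_case_k_eq_two
    {n : ℕ} (hn : 2 ≤ n) (Ω : Set (En n)) (ρ : En n → ℝ)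
    (hΩ : IsDomain' Ω) (hbd : Bornology.IsBounded Ω)
    (hρ : IsPcxCinfBoundary Ω ρ)
    (p : En n) (hp : p ∈ frontier Ω) (hspc : StronglyPcxAt ρ p)
    (F : En n → En n) (hF : DifferentiableOn ℂ F Ω) (hFself : MapsTo F Ω Ω)
    (ho : LittleOh Ω F p 2)
    (hne : ¬ ∀ z ∈ Ω, F z = z) :
    (∀ K ⊆ Ω, IsCompact K →
      TendstoUniformlyOn (fun m => F^[m]) (fun _ => p) atTop K) ∧
    ¬ IsAutomorphismOf F Ω := by
  obtain ⟨ℓ, B, r, c, C₀, hsupp, hpeak⟩ := hρ.1.exists_isSupportAt hp hspc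
  have hflat := ho.flatAt hsupp.notMem
  have hconn := hΩ.2.isPreconnected
  refine ⟨fun K hKΩ hK => ?_, ?_⟩
  · obtain ⟨D, hD⟩ := hbd.exists_norm_le
    exact tendstoUniformlyOn_of_tendsto_of_norm_le hΩ.1 (hF.iterate_of_mapsTo hFself)
      (fun m z hz => hD _ (hFself.iterate m hz))
      (fun z hz => hsupp.tendsto_iterate hΩ.1 hconn hbd hpeak hF hFself hflat hne hz) hK hKΩ
  · rintro ⟨-, -, G, hG, hGmaps, hGF, -⟩
    exact hne (hsupp.eq_id_of_leftInverse hΩ.1 hconn hbd hF hFself hflat hG hGmaps hGF)
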